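/- arXiv:math/0401313 — 2 statements merged into one kernel-verified Lean document; each statement's English description precedes it below -/
import Mathlib

section
/- Let (L,w) be a pre-honeycomb, and suppose the set V of points v ∈ ℝ² at which at least three of the six numbers w_i^s(v) (i ∈ {1,2,3}, s ∈ {+,−}) are nonzero is nonempty. Then there exists a unique honeycomb H=(V',E',w') such that (w')_i^s(v) = w_i^s(v) for all points v ∈ ℝ², all i ∈ {1,2,3} and all s ∈ {+,−}; moreover its vertex set V' equals V. -/
open scoped BigOperators

attribute [local instance] Classical.propDecidable

noncomputable section

/-- Points of the plane. -/
abbrev Pt : Type := ℝ × ℝ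

/-- Inner product on the plane. -/
def pdot (a b : Pt) : ℝ := a.1 * b.1 + a.2 * b.2

/-- The three generating vectors ξ₁ = (1,0), ξ₂ = (−1/2, √3/2), ξ₃ = (−1/2, −√3/2). -/
noncomputable def xiv : Fin 3 → Pt
  | 0 => ((1 : ℝ), (0 : ℝ))
  | 1 => (-(1 / 2 : ℝ), Real.sqrt 3 / 2)
  | 2 => (-(1 / 2 : ℝ), -(Real.sqrt 3 / 2))

/-- Dual coordinates d_i(x) = −x·ξ_i. -/
noncomputable def dcoord (i : Fin 3) (x : Pt) : ℝ := -(pdot x (xiv i))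

/-- Direction of the ray Ξ_i^s(·): ξ_i rotated by −90° for s = +(true), by +90° for
s = −(false), so that Ξ_i⁺(v)−v, ℝ₊ξ_i, Ξ_i⁻(v)−v follow anticlockwise. -/
noncomputable def rayDir (i : Fin 3) (s : Bool) : Pt :=
  if s then ((xiv i).2, -(xiv i).1) else (-(xiv i).2, (xiv i).1)

/-- The ray Ξ_i^s(v). -/
def XiRay (i : Fin 3) (s : Bool) (v : Pt) : Set Pt :=
  {x | ∃ t : ℝ, 0 ≤ t ∧ x = v + t • rayDir i s}

/-- A finite line (nondegenerate segment). -/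
def IsSegL (S : Set Pt) : Prop := ∃ a b : Pt, a ≠ b ∧ S = segment ℝ a b

/-- A semiinfinite line (ray) with end a. -/
def IsRayFrom (a : Pt) (S : Set Pt) : Prop :=
  ∃ d : Pt, d ≠ 0 ∧ S = {x | ∃ t : ℝ, 0 ≤ t ∧ x = a + t • d}

/-- A semiinfinite line (ray). -/
def IsRayL (S : Set Pt) : Prop := ∃ a : Pt, IsRayFrom a S

/-- A fully infinite line. -/
def IsFullLineL (S : Set Pt) : Prop := ∃ a d : Pt, d ≠ 0 ∧ S = {x | ∃ t : ℝ, x = a + t • d}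

/-- A line: a segment, a ray or a full line. -/
def IsLineL (S : Set Pt) : Prop := IsSegL S ∨ IsRayL S ∨ IsFullLineL S

/-- `S` is perpendicular to ξ_i, i.e. the dual coordinate d_i is constant on S. -/
def PerpTo (i : Fin 3) (S : Set Pt) : Prop := ∀ x ∈ S, ∀ y ∈ S, pdot (x - y) (xiv i) = 0

/-- w_i^s(v): the total weight of the lines of the system whose intersection with
Ξ_i^s(v) contains v and is a line (not a point). -/
noncomputable def wis (L : Finset (Set Pt)) (w : Set Pt → ℤ) (i : Fin 3) (s : Bool)
    (v : Pt) : ℤ :=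
  ∑ ℓ ∈ L.filter (fun ℓ => v ∈ ℓ ∧ IsLineL (ℓ ∩ XiRay i s v)), w ℓ

/-- A Ξ-system: a finite set of lines, each perpendicular to some ξ_i. -/
def IsXiSystem (L : Finset (Set Pt)) : Prop := ∀ ℓ ∈ L, IsLineL ℓ ∧ ∃ i : Fin 3, PerpTo i ℓ

/-- A pre-honeycomb: a Ξ-system with all w_i^s(v) nonnegative satisfying the
divergency (zero-tension) condition at every point. -/
def IsPreHoneycomb (L : Finset (Set Pt)) (w : Set Pt → ℤ) : Prop :=
  IsXiSystem L ∧ (∀ (v : Pt) (i : Fin 3) (s : Bool), 0 ≤ wis L w i s v) ∧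
  ∀ (v : Pt) (i j : Fin 3),
    wis L w i true v - wis L w i false v = wis L w j true v - wis L w j false v

/-- The divergency div_w(v). -/
noncomputable def divw (L : Finset (Set Pt)) (w : Set Pt → ℤ) (v : Pt) : ℤ :=
  wis L w 0 true v - wis L w 0 false v

/-- An interior (non-end) point of a line. -/
def InteriorPt (S : Set Pt) (x : Pt) : Prop :=
  x ∈ S ∧ ∃ d : Pt, d ≠ 0 ∧ ∃ ε : ℝ, 0 < ε ∧ ∀ t : ℝ, |t| ≤ ε → x + t • d ∈ S

/-- `v` is an end of the line `S` (so `S` is incident to `v` as a graph edge). -/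
def IsEnd (v : Pt) (S : Set Pt) : Prop := v ∈ S ∧ ¬ InteriorPt S v

/-- A honeycomb: a (non-standard) planar graph with a nonempty finite vertex set, whose
edges are positively weighted lines, each vertex incident with at least 3 edges, no
interior point of an edge lying on another edge, the ends of edges being vertices, and
the weighted edge set forming a pre-honeycomb. -/
structure Honeycomb : Type where
  verts : Finset Pt
  edges : Finset (Set Pt)
  w : Set Pt → ℤ
  verts_nonempty : verts.Nonempty
  degree : ∀ v ∈ verts, 3 ≤ (edges.filter fun e => IsEnd v e).card
  no_cross : ∀ e ∈ edges, ∀ e' ∈ edges, e ≠ e' → ∀ x : Pt, InteriorPt e x → x ∉ e'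
  w_pos : ∀ e ∈ edges, 0 < w e
  ends_mem : ∀ e ∈ edges, ∀ x : Pt, IsEnd x e → x ∈ verts
  edge_touch : ∀ e ∈ edges, ∃ v ∈ verts, v ∈ e
  pre : IsPreHoneycomb edges w

/-! ### Direction vectors -/

lemma hc_rayDir_not (i : Fin 3) (s : Bool) : rayDir i (!s) = - rayDir i s := by
  cases s <;> simp [rayDir]

lemma hc_sqrt3 : Real.sqrt 3 * Real.sqrt 3 = 3 := Real.mul_self_sqrt (by norm_num)

lemma hc_xiv_unit (i : Fin 3) : (xiv i).1 * (xiv i).1 + (xiv i).2 * (xiv i).2 = 1 := by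
  have := hc_sqrt3
  fin_cases i <;> simp [xiv] <;> nlinarith

lemma hc_pdot_rayDir_self (i : Fin 3) (s : Bool) : pdot (rayDir i s) (xiv i) = 0 := by
  cases s <;> simp [rayDir, pdot] <;> ring

lemma hc_rayDir_unit (i : Fin 3) (s : Bool) : pdot (rayDir i s) (rayDir i s) = 1 := by
  have := hc_xiv_unit i
  cases s <;> simp [rayDir, pdot] <;> linarith

lemma hc_rayDir_ne (i : Fin 3) (s : Bool) : rayDir i s ≠ 0 := by
  intro h
  have := hc_rayDir_unit i s
  rw [h] at this
  simp [pdot] at this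

lemma hc_decomp (i : Fin 3) (s : Bool) (x : Pt) (h : pdot x (xiv i) = 0) :
    x = (pdot x (rayDir i s)) • rayDir i s := by
  have h1 := hc_xiv_unit i
  obtain ⟨a, b⟩ := x
  cases s <;> simp [rayDir, pdot] at h ⊢ <;> constructor
  · linear_combination (xiv i).1 * h - a * h1
  · linear_combination (xiv i).2 * h - b * h1
  · linear_combination (xiv i).1 * h - a * h1
  · linear_combination (xiv i).2 * h - b * h1

lemma hc_cross_true (i j : Fin 3) (h : i ≠ j) :
    pdot (rayDir i true) (xiv j) = Real.sqrt 3 / 2 * (if i = j + 1 then 1 else -1) := by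
  fin_cases i <;> fin_cases j <;> simp [pdot, rayDir, xiv] at h ⊢ <;> ring

lemma hc_cross_ne (i j : Fin 3) (s : Bool) (h : i ≠ j) : pdot (rayDir i s) (xiv j) ≠ 0 := by
  have h3 : Real.sqrt 3 ≠ 0 := by positivity
  have h1 := hc_cross_true i j h
  have h2 : pdot (rayDir i true) (xiv j) ≠ 0 := by
    rw [h1]; split_ifs <;> simp
  cases s
  · have h4 := hc_rayDir_not i true
    simp only [Bool.not_true] at h4
    rw [h4]
    simp only [pdot, Prod.fst_neg, Prod.snd_neg] at h2 ⊢
    intro h5; apply h2; linarith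
  · exact h2

lemma hc_pdot_add_smul (a b c : Pt) (t : ℝ) : pdot (a + t • b) c = pdot a c + t * pdot b c := by
  simp [pdot]; ring

/-! ### Lines -/

lemma hc_line_param {S : Set Pt} (h : IsLineL S) : ∃ (x d : Pt) (I : Set ℝ), d ≠ 0 ∧ IsClosed I ∧
    Convex ℝ I ∧ I.Nontrivial ∧ S = (fun t : ℝ => x + t • d) '' I := by
  rcases h with ⟨a, b, hab, rfl⟩ | ⟨a, d, hd, rfl⟩ | ⟨a, d, hd, rfl⟩
  · refine ⟨a, b - a, Set.Icc 0 1, sub_ne_zero.2 hab.symm, isClosed_Icc, convex_Icc _ _,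
      ⟨0, by simp, 1, by simp, by simp⟩, segment_eq_image' ℝ a b⟩
  · refine ⟨a, d, Set.Ici 0, hd, isClosed_Ici, convex_Ici _, ⟨0, by simp, 1, by simp, by simp⟩, ?_⟩
    ext x; simp [eq_comm]
  · refine ⟨a, d, Set.univ, hd, isClosed_univ, convex_univ, ⟨0, by simp, 1, by simp, by simp⟩, ?_⟩
    ext x; simp [eq_comm]

lemma hc_isLine_image (x d : Pt) (I : Set ℝ) (hd : d ≠ 0) (hI : IsClosed I) (hc : Convex ℝ I)
    (hn : I.Nontrivial) : IsLineL ((fun t : ℝ => x + t • d) '' I) := by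
  have hne := hn.nonempty
  have hoc := hc.ordConnected
  by_cases hb : BddBelow I <;> by_cases ha : BddAbove I
  · left
    have h1 := hI.csInf_mem hne hb
    have h2 := hI.csSup_mem hne ha
    have hIcc : I = Set.Icc (sInf I) (sSup I) :=
      Set.Subset.antisymm (fun t ht => ⟨csInf_le hb ht, le_csSup ha ht⟩) (hoc.out h1 h2)
    have hlt : sInf I < sSup I := by
      obtain ⟨p, hp, q, hq, hpq⟩ := hn
      rcases lt_or_gt_of_ne hpq with h | h
      · exact (csInf_le hb hp).trans_lt (h.trans_le (le_csSup ha hq))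
      · exact (csInf_le hb hq).trans_lt (h.trans_le (le_csSup ha hp))
    refine ⟨x + sInf I • d, x + sSup I • d, ?_, ?_⟩
    · intro h
      have h' := smul_left_injective ℝ hd (add_left_cancel h)
      exact hlt.ne h'
    · conv_lhs => rw [hIcc]
      rw [← segment_eq_Icc hlt.le]
      have := image_segment ℝ (AffineMap.lineMap (k := ℝ) x (x + d)) (sInf I) (sSup I)
      simp only [AffineMap.lineMap_apply, vsub_eq_sub, add_sub_cancel_left, vadd_eq_add] at this
      rw [show (fun t : ℝ => x + t • d) = (fun t : ℝ => t • d + x) from by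
        funext t; exact add_comm _ _]
      rw [add_comm x, add_comm x]
      rw [← this]
      apply Set.image_congr
      intro t ht
      simp [AffineMap.lineMap_apply]
  · right; left
    have h1 := hI.csInf_mem hne hb
    have hIci : I = Set.Ici (sInf I) := by
      refine Set.Subset.antisymm (fun t ht => csInf_le hb ht) (fun t ht => ?_)
      rw [not_bddAbove_iff] at ha
      obtain ⟨q, hq, hq2⟩ := ha t
      exact hoc.out h1 hq ⟨ht, hq2.le⟩
    refine ⟨x + sInf I • d, d, hd, ?_⟩
    conv_lhs => rw [hIci]
    ext y
    constructor
    · rintro ⟨t, ht, rfl⟩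
      exact ⟨t - sInf I, sub_nonneg.2 ht, by module⟩
    · rintro ⟨t, ht, rfl⟩
      exact ⟨sInf I + t, by simpa using ht, by module⟩
  · right; left
    have h1 := hI.csSup_mem hne ha
    have hIci : I = Set.Iic (sSup I) := by
      refine Set.Subset.antisymm (fun t ht => le_csSup ha ht) (fun t ht => ?_)
      rw [not_bddBelow_iff] at hb
      obtain ⟨q, hq, hq2⟩ := hb t
      exact hoc.out hq h1 ⟨hq2.le, ht⟩
    refine ⟨x + sSup I • d, -d, neg_ne_zero.2 hd, ?_⟩
    conv_lhs => rw [hIci]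
    ext y
    constructor
    · rintro ⟨t, ht, rfl⟩
      exact ⟨sSup I - t, sub_nonneg.2 ht, by module⟩
    · rintro ⟨t, ht, rfl⟩
      exact ⟨sSup I - t, by simpa using ht, by module⟩
  · right; right
    have hIci : I = Set.univ := by
      refine Set.Subset.antisymm (fun t ht => trivial) (fun t ht => ?_)
      rw [not_bddBelow_iff] at hb
      rw [not_bddAbove_iff] at ha
      obtain ⟨q, hq, hq2⟩ := hb t
      obtain ⟨q', hq', hq2'⟩ := ha t
      exact hoc.out hq hq' ⟨hq2.le, hq2'.le⟩
    refine ⟨x, d, hd, ?_⟩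
    rw [hIci]
    ext y; simp [eq_comm]

lemma hc_line_convex {S : Set Pt} (h : IsLineL S) : Convex ℝ S := by
  obtain ⟨x, d, I, hd, hI, hc, hn, rfl⟩ := hc_line_param h
  have := hc.affine_image (AffineMap.lineMap (k := ℝ) x (x + d))
  have he : (fun t : ℝ => x + t • d) '' I = (AffineMap.lineMap (k := ℝ) x (x + d)) '' I := by
    apply Set.image_congr
    intro t ht
    simp [AffineMap.lineMap_apply, add_comm]
  rw [he]
  exact this

lemma hc_line_closed {S : Set Pt} (h : IsLineL S) : IsClosed S := by
  obtain ⟨x, d, I, hd, hI, hc, hn, rfl⟩ := hc_line_param h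
  have h1 := (Homeomorph.addLeft x).isClosedEmbedding.comp
    (LinearMap.isClosedEmbedding_of_injective (f := LinearMap.toSpanSingleton ℝ Pt d)
      (LinearMap.ker_toSpanSingleton ℝ hd))
  exact h1.isClosedMap I hI

lemma hc_line_nontrivial {S : Set Pt} (h : IsLineL S) : S.Nontrivial := by
  obtain ⟨x, d, I, hd, hI, hc, hn, rfl⟩ := hc_line_param h
  apply hn.image
  intro a b hab
  exact smul_left_injective ℝ hd (add_left_cancel hab)

/-- `S` contains `v` and points beyond `v` in direction `(i,s)`. -/
def HcGerm (S : Set Pt) (v : Pt) (i : Fin 3) (s : Bool) : Prop :=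
  v ∈ S ∧ ∃ t : ℝ, 0 < t ∧ v + t • rayDir i s ∈ S

/-- The parameter set of `S` on the line through `p` with direction `(i,s)`. -/
def HcJ (i : Fin 3) (s : Bool) (p : Pt) (S : Set Pt) : Set ℝ := {t | p + t • rayDir i s ∈ S}

lemma hc_J_closed (i : Fin 3) (s : Bool) (p : Pt) {S : Set Pt} (h : IsLineL S) :
    IsClosed (HcJ i s p S) :=
  (hc_line_closed h).preimage (by fun_prop : Continuous fun t : ℝ => p + t • rayDir i s)

lemma hc_J_convex (i : Fin 3) (s : Bool) (p : Pt) {S : Set Pt} (h : IsLineL S) :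
    Convex ℝ (HcJ i s p S) := by
  have := (hc_line_convex h).affine_preimage (AffineMap.lineMap (k := ℝ) p (p + rayDir i s))
  have he : HcJ i s p S = (AffineMap.lineMap (k := ℝ) p (p + rayDir i s)) ⁻¹' S := by
    ext t
    simp [AffineMap.lineMap_apply, add_comm, HcJ]
  rw [he]
  exact this

lemma hc_germ_iff {S : Set Pt} (h : IsLineL S) (v : Pt) (i : Fin 3) (s : Bool) :
    (v ∈ S ∧ IsLineL (S ∩ XiRay i s v)) ↔ HcGerm S v i s := by
  refine and_congr_right fun hv => ⟨fun hl => ?_, ?_⟩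
  · obtain ⟨y, ⟨hy, t, ht, rfl⟩, hne⟩ := (hc_line_nontrivial hl).exists_ne v
    refine ⟨t, lt_of_le_of_ne ht ?_, hy⟩
    rintro rfl
    simp at hne
  · rintro ⟨t, ht, hmem⟩
    have : S ∩ XiRay i s v = (fun t : ℝ => v + t • rayDir i s) '' (HcJ i s v S ∩ Set.Ici 0) := by
      ext y
      constructor
      · rintro ⟨h1, r, hr, rfl⟩
        exact ⟨r, ⟨h1, hr⟩, rfl⟩
      · rintro ⟨r, ⟨h1, hr⟩, rfl⟩
        exact ⟨h1, r, hr, rfl⟩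
    rw [this]
    apply hc_isLine_image _ _ _ (hc_rayDir_ne i s)
    · exact (hc_J_closed i s v h).inter isClosed_Ici
    · exact (hc_J_convex i s v h).inter (convex_Ici 0)
    · exact ⟨0, ⟨by simpa [HcJ] using hv, by simp⟩, t, ⟨hmem, ht.le⟩, ht.ne⟩

lemma hc_wis_eq {L : Finset (Set Pt)} (hL : IsXiSystem L) (w : Set Pt → ℤ) (i : Fin 3) (s : Bool)
    (v : Pt) : wis L w i s v = ∑ ℓ ∈ L.filter (fun ℓ => HcGerm ℓ v i s), w ℓ := by
  unfold wis
  congr 1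
  apply Finset.filter_congr
  intro ℓ hℓ
  exact hc_germ_iff (hL ℓ hℓ).1 v i s

lemma hc_germ_dir {S : Set Pt} {v : Pt} {i j : Fin 3} {s : Bool} (hp : PerpTo j S)
    (hg : HcGerm S v i s) : i = j := by
  by_contra hne
  obtain ⟨hv, t, ht, hm⟩ := hg
  have := hp _ hm _ hv
  rw [add_sub_cancel_left] at this
  have h2 := hc_cross_ne i j s hne
  have h3 : t * pdot (rayDir i s) (xiv j) = 0 := by
    rw [← this]; simp [pdot]; ring
  exact h2 ((mul_eq_zero.1 h3).resolve_left ht.ne')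

lemma hc_perp_param {S : Set Pt} {i : Fin 3} (hp : PerpTo i S) (s : Bool) {p y : Pt} (h : p ∈ S)
    (hy : y ∈ S) : ∃ t ∈ HcJ i s p S, y = p + t • rayDir i s := by
  have h1 := hc_decomp i s _ (hp y hy p h)
  refine ⟨pdot (y - p) (rayDir i s), ?_, ?_⟩
  · simp only [HcJ, Set.mem_ofPred_eq]; rw [← h1]; simpa using hy
  · rw [← h1]; simp

lemma hc_interior_iff {S : Set Pt} {i : Fin 3} (hl : IsLineL S) (hp : PerpTo i S) (x : Pt) :
    InteriorPt S x ↔ ∀ s, HcGerm S x i s := by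
  constructor
  · rintro ⟨hx, d, hd, ε, hε, h⟩ s
    refine ⟨hx, ?_⟩
    have h1 := h ε (by rw [abs_of_pos hε])
    have h2 := h (-ε) (by rw [abs_neg, abs_of_pos hε])
    obtain ⟨t, ht, hte⟩ := hc_perp_param hp s hx h1
    have hte' : ε • d = t • rayDir i s := add_left_cancel hte
    rcases lt_trichotomy t 0 with h0 | h0 | h0
    · refine ⟨-t, by linarith, ?_⟩
      rw [neg_smul, ← hte', ← neg_smul]; exact h2
    · rw [h0, zero_smul] at hte'
      exact absurd hte' (smul_ne_zero hε.ne' hd)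
    · exact ⟨t, h0, ht⟩
  · intro h
    obtain ⟨hx, t, ht, h1⟩ := h true
    obtain ⟨-, t', ht', h2⟩ := h false
    refine ⟨hx, rayDir i true, hc_rayDir_ne _ _, min t t', lt_min ht ht', fun r hr => ?_⟩
    have hoc := (hc_J_convex i true x hl).ordConnected
    have h2' : -t' ∈ HcJ i true x S := by
      have := hc_rayDir_not i true
      simp only [Bool.not_true] at this
      rw [this] at h2
      simpa [HcJ] using h2
    have h3 := abs_le.1 hr
    exact hoc.out h2' h1 ⟨by linarith [min_le_right t t'], by linarith [min_le_left t t']⟩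

lemma hc_exists_germ {S : Set Pt} {i : Fin 3} (hl : IsLineL S) (hp : PerpTo i S) {x : Pt}
    (hx : x ∈ S) : ∃ s, HcGerm S x i s := by
  obtain ⟨y, hy, hne⟩ := (hc_line_nontrivial hl).exists_ne x
  obtain ⟨t, ht, rfl⟩ := hc_perp_param hp true hx hy
  rcases lt_trichotomy t 0 with h0 | h0 | h0
  · refine ⟨false, hx, -t, by linarith, ?_⟩
    have := hc_rayDir_not i true
    simp only [Bool.not_true] at this
    rw [this]
    simpa using hy
  · simp [h0] at hne
  · exact ⟨true, hx, t, h0, hy⟩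

lemma hc_germ_interior {S : Set Pt} {i : Fin 3} (hl : IsLineL S) {x : Pt}
    {s : Bool} (hg : HcGerm S x i s) :
    ∃ t₀ : ℝ, 0 < t₀ ∧ ∀ t, 0 < t → t < t₀ → InteriorPt S (x + t • rayDir i s) := by
  obtain ⟨hx, t₀, ht₀, hm⟩ := hg
  refine ⟨t₀, ht₀, fun t h0 h1 => ?_⟩
  have hoc := (hc_J_convex i s x hl).ordConnected
  have hx' : (0 : ℝ) ∈ HcJ i s x S := by simpa [HcJ] using hx
  refine ⟨hoc.out hx' hm ⟨h0.le, h1.le⟩, rayDir i s, hc_rayDir_ne _ _, min t (t₀ - t),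
    lt_min h0 (by linarith), fun r hr => ?_⟩
  have h3 := abs_le.1 hr
  have : t + r ∈ HcJ i s x S := hoc.out hx' hm
    ⟨by linarith [min_le_left t (t₀ - t)], by linarith [min_le_right t (t₀ - t)]⟩
  simpa [HcJ, add_smul, add_assoc] using this

/-! ### More on lines -/

lemma hc_between_interior {S : Set Pt} {i : Fin 3} (hl : IsLineL S) {x : Pt} {s : Bool}
    (hx : x ∈ S) {t₀ t : ℝ} (hm : x + t₀ • rayDir i s ∈ S) (h0 : 0 < t) (h1 : t < t₀) :
    InteriorPt S (x + t • rayDir i s) := by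
  have hoc := (hc_J_convex i s x hl).ordConnected
  have hx' : (0 : ℝ) ∈ HcJ i s x S := by simpa [HcJ] using hx
  refine ⟨hoc.out hx' hm ⟨h0.le, h1.le⟩, rayDir i s, hc_rayDir_ne _ _, min t (t₀ - t),
    lt_min h0 (by linarith), fun r hr => ?_⟩
  have h3 := abs_le.1 hr
  have : t + r ∈ HcJ i s x S := hoc.out hx' hm
    ⟨by linarith [min_le_left t (t₀ - t)], by linarith [min_le_right t (t₀ - t)]⟩
  simpa [HcJ, add_smul, add_assoc] using this

lemma hc_exit {S : Set Pt} {i : Fin 3} (hl : IsLineL S) (hp : PerpTo i S) {p : Pt} {s : Bool}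
    (hx : p ∈ S) {t : ℝ} (h0 : 0 < t) (hm : p + t • rayDir i s ∉ S) :
    ∃ b, 0 ≤ b ∧ b < t ∧ IsEnd (p + b • rayDir i s) S := by
  have hoc := (hc_J_convex i s p hl).ordConnected
  have hcl := (hc_J_closed i s p hl).inter (isClosed_Icc (a := (0 : ℝ)) (b := t))
  have hx' : (0 : ℝ) ∈ HcJ i s p S := by simpa [HcJ] using hx
  have hne : (HcJ i s p S ∩ Set.Icc 0 t).Nonempty := ⟨0, hx', le_rfl, h0.le⟩
  have hbd : BddAbove (HcJ i s p S ∩ Set.Icc 0 t) := ⟨t, fun y hy => hy.2.2⟩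
  obtain ⟨hb1, hb2⟩ := hcl.csSup_mem hne hbd
  set b := sSup (HcJ i s p S ∩ Set.Icc 0 t) with hb
  have hbt : b < t := by
    refine lt_of_le_of_ne hb2.2 ?_
    intro h
    rw [h] at hb1
    exact hm hb1
  refine ⟨b, hb2.1, hbt, hb1, fun hinter => ?_⟩
  obtain ⟨-, r, hr, hr2⟩ := (hc_interior_iff hl hp _).1 hinter s
  have h3 : b + r ∈ HcJ i s p S := by simpa [HcJ, add_smul, add_assoc] using hr2
  have h4 : min (b + r) t ∈ HcJ i s p S ∩ Set.Icc 0 t := by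
    refine ⟨hoc.out hb1 h3 ⟨le_min (by linarith) hbt.le, min_le_left _ _⟩,
      le_min (by linarith [hb2.1]) h0.le, min_le_right _ _⟩
  have h5 := le_csSup hbd h4
  have h6 : b < min (b + r) t := lt_min (by linarith) hbt
  rw [← hb] at h5
  linarith

lemma hc_param_pos {S : Set Pt} {i : Fin 3} (hp : PerpTo i S) {p y : Pt} (h : p ∈ S)
    (hy : y ∈ S) (s : Bool) : y = p ∨ (∃ t : ℝ, 0 < t ∧ y = p + t • rayDir i s) ∨
      ∃ t : ℝ, 0 < t ∧ y = p + t • rayDir i (!s) := by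
  obtain ⟨t, ht, rfl⟩ := hc_perp_param hp s h hy
  rcases lt_trichotomy t 0 with h0 | h0 | h0
  · right; right
    refine ⟨-t, by linarith, ?_⟩
    rw [hc_rayDir_not]
    simp
  · left; simp [h0]
  · right; left; exact ⟨t, h0, rfl⟩

/-! ### Vertices and good edges -/

/-- The points where two different directions carry nonzero weight. -/
def HcV (W : Fin 3 → Bool → Pt → ℤ) : Set Pt :=
  {v | ∃ i j s s', i ≠ j ∧ W i s v ≠ 0 ∧ W j s' v ≠ 0}

/-- Lines which are edges of the honeycomb determined by `W`. -/
def HcGood (W : Fin 3 → Bool → Pt → ℤ) (i : Fin 3) (S : Set Pt) : Prop :=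
  IsLineL S ∧ PerpTo i S ∧ (∀ x, InteriorPt S x → x ∉ HcV W ∧ W i true x ≠ 0) ∧
    ∀ x, IsEnd x S → x ∈ HcV W

lemma hc_good_subset {W : Fin 3 → Bool → Pt → ℤ} {i : Fin 3} {S S' : Set Pt} (h : HcGood W i S)
    (h' : HcGood W i S') {p : Pt} (hp : InteriorPt S p) (hp' : InteriorPt S' p) : S ⊆ S' := by
  intro y hy
  by_contra hn
  have key : ∀ (s : Bool) (t : ℝ), 0 < t → y = p + t • rayDir i s → False := by
    rintro s t ht rfl
    obtain ⟨b, hb0, hbt, hend⟩ := hc_exit h'.1 h'.2.1 hp'.1 ht hn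
    have hb : 0 < b := by
      refine lt_of_le_of_ne hb0 ?_
      rintro rfl
      rw [zero_smul, add_zero] at hend
      exact hend.2 hp'
    exact (h.2.2.1 _ (hc_between_interior h.1 hp.1 hy hb hbt)).1 (h'.2.2.2 _ hend)
  rcases hc_param_pos h.2.1 hp.1 hy true with rfl | ⟨t, ht, h1⟩ | ⟨t, ht, h1⟩
  · exact hn hp'.1
  · exact key _ _ ht h1
  · exact key _ _ ht h1

lemma hc_good_unique {W : Fin 3 → Bool → Pt → ℤ} {i : Fin 3} {S S' : Set Pt} (h : HcGood W i S)
    (h' : HcGood W i S') {p : Pt} (hp : InteriorPt S p) (hp' : InteriorPt S' p) : S = S' :=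
  Set.Subset.antisymm (hc_good_subset h h' hp hp') (hc_good_subset h' h hp' hp)

lemma hc_common_interior {S S' : Set Pt} {i : Fin 3} (h : IsLineL S)
    (h' : IsLineL S') {p : Pt} {s : Bool} (hp : HcGerm S p i s)
    (hp' : HcGerm S' p i s) : ∃ x, InteriorPt S x ∧ InteriorPt S' x := by
  obtain ⟨t, ht, h1⟩ := hc_germ_interior h hp
  obtain ⟨t', ht', h1'⟩ := hc_germ_interior h' hp'
  have : 0 < min t t' := lt_min ht ht'
  refine ⟨_, h1 (min t t' / 2) (by linarith) (by linarith [min_le_left t t']),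
    h1' (min t t' / 2) (by linarith) (by linarith [min_le_right t t'])⟩

lemma hc_good_unique_germ {W : Fin 3 → Bool → Pt → ℤ} {i : Fin 3} {S S' : Set Pt}
    (h : HcGood W i S) (h' : HcGood W i S') {p : Pt} {s : Bool} (hp : HcGerm S p i s)
    (hp' : HcGerm S' p i s) : S = S' := by
  obtain ⟨x, h1, h2⟩ := hc_common_interior h.1 h'.1 hp hp'
  exact hc_good_unique h h' h1 h2

lemma hc_notV_eq {W : Fin 3 → Bool → Pt → ℤ} {v : Pt}
    (hdiv : ∀ i j, W i true v - W i false v = W j true v - W j false v) (hv : v ∉ HcV W)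
    (i : Fin 3) (s s' : Bool) : W i s v = W i s' v := by
  have key : W i true v = W i false v := by
    by_contra hne
    apply hv
    have : ∀ j, ∃ s, W j s v ≠ 0 := by
      intro j
      by_contra! hall
      have := hdiv i j
      rw [hall true, hall false] at this
      apply hne; linarith
    obtain ⟨s, hs⟩ := this 0
    obtain ⟨s', hs'⟩ := this 1
    exact ⟨0, 1, s, s', by decide, hs, hs'⟩
  cases s <;> cases s' <;> simp [key]

lemma hc_V_iff {W : Fin 3 → Bool → Pt → ℤ} {v : Pt}
    (hdiv : ∀ i j, W i true v - W i false v = W j true v - W j false v) :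
    3 ≤ ((Finset.univ : Finset (Fin 3 × Bool)).filter fun p => W p.1 p.2 v ≠ 0).card ↔
      v ∈ HcV W := by
  constructor
  · intro h
    by_contra hv
    obtain ⟨⟨i, s⟩, hp⟩ : ((Finset.univ : Finset (Fin 3 × Bool)).filter
        fun p => W p.1 p.2 v ≠ 0).Nonempty := by
      rw [← Finset.card_pos]; omega
    have hsub : ((Finset.univ : Finset (Fin 3 × Bool)).filter fun p => W p.1 p.2 v ≠ 0) ⊆
        {(i, true), (i, false)} := by
      rintro ⟨j, s'⟩ hq
      have hij : i = j := by
        by_contra hne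
        exact hv ⟨i, j, s, s', hne, by simpa using hp, by simpa using hq⟩
      subst hij
      cases s' <;> simp
    have h1 := Finset.card_le_card hsub
    have h2 := Finset.card_le_two (a := (i, true)) (b := (i, false))
    omega
  · rintro ⟨i, j, s, s', hij, h1, h2⟩
    by_cases hd : W 0 true v = W 0 false v
    · have hall : ∀ k s s', W k s v = W k s' v := by
        intro k s s'
        have := hdiv k 0
        cases s <;> cases s' <;> first | rfl | linarith
      have hsub : ({(i, true), (i, false), (j, true)} : Finset (Fin 3 × Bool)) ⊆
          ((Finset.univ : Finset (Fin 3 × Bool)).filter fun p => W p.1 p.2 v ≠ 0) := by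
        intro q hq
        simp only [Finset.mem_insert, Finset.mem_singleton] at hq
        simp only [Finset.mem_filter, Finset.mem_univ, true_and]
        rcases hq with rfl | rfl | rfl
        · rw [hall i true s]; exact h1
        · rw [hall i false s]; exact h1
        · rw [hall j true s']; exact h2
      have h3 := Finset.card_le_card hsub
      rwa [Finset.card_eq_three.2 ⟨(i, true), (i, false), (j, true), by simp, by simp [hij],
        by simp, rfl⟩] at h3
    · have : ∀ k, ∃ s, W k s v ≠ 0 := by
        intro k
        by_contra! hall
        have := hdiv 0 k
        rw [hall true, hall false] at this
        apply hd; linarith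
      choose f hf using this
      have hsub : (Finset.univ : Finset (Fin 3)).image (fun k => (k, f k)) ⊆
          ((Finset.univ : Finset (Fin 3 × Bool)).filter fun p => W p.1 p.2 v ≠ 0) := by
        intro q hq
        obtain ⟨k, -, rfl⟩ := Finset.mem_image.1 hq
        simpa using hf k
      have h3 := Finset.card_le_card hsub
      rw [Finset.card_image_of_injective _ (fun a b hab => (Prod.ext_iff.1 hab).1)] at h3
      simpa using h3

lemma hc_V_finite {L : Finset (Set Pt)} (hL : IsXiSystem L) (w : Set Pt → ℤ) :
    (HcV (wis L w)).Finite := by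
  have hex : ∀ i s v, wis L w i s v ≠ 0 → ∃ ℓ ∈ L, HcGerm ℓ v i s := by
    intro i s v h
    rw [hc_wis_eq hL] at h
    obtain ⟨ℓ, h1, -⟩ := Finset.exists_ne_zero_of_sum_ne_zero h
    rw [Finset.mem_filter] at h1
    exact ⟨ℓ, h1⟩
  have : HcV (wis L w) ⊆ ⋃ ℓ ∈ L, ⋃ ℓ' ∈ L, {v | v ∈ ℓ ∧ v ∈ ℓ' ∧ (ℓ ∩ ℓ').Subsingleton} := by
    rintro v ⟨i, j, s, s', hij, h1, h2⟩
    obtain ⟨ℓ, hℓ, hg⟩ := hex _ _ _ h1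
    obtain ⟨ℓ', hℓ', hg'⟩ := hex _ _ _ h2
    simp only [Set.mem_iUnion]
    refine ⟨ℓ, hℓ, ℓ', hℓ', hg.1, hg'.1, ?_⟩
    obtain ⟨hl, k, hk⟩ := hL ℓ hℓ
    obtain ⟨hl', k', hk'⟩ := hL ℓ' hℓ'
    have e1 := hc_germ_dir hk hg
    have e2 := hc_germ_dir hk' hg'
    subst e1; subst e2
    rintro x ⟨hx, hx'⟩ y ⟨hy, hy'⟩
    obtain ⟨t, -, rfl⟩ := hc_perp_param hk true hx hy
    have h3 := hk' _ hy' _ hx'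
    rw [add_sub_cancel_left] at h3
    have h4 : t * pdot (rayDir i true) (xiv j) = 0 := by
      rw [← h3]; simp [pdot]; ring
    have h5 := (mul_eq_zero.1 h4).resolve_right (hc_cross_ne i j true hij)
    simp [h5]
  refine Set.Finite.subset ?_ this
  refine L.finite_toSet.biUnion fun ℓ _ => L.finite_toSet.biUnion fun ℓ' _ => ?_
  by_cases h : (ℓ ∩ ℓ').Subsingleton
  · exact h.finite.subset fun v hv => ⟨hv.1, hv.2.1⟩
  · exact Set.finite_empty.subset fun v hv => h hv.2.2

/-! ### Local and global constancy along lines -/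

lemma hc_local {L : Finset (Set Pt)} (hL : IsXiSystem L) (w : Set Pt → ℤ) (i : Fin 3) (s : Bool)
    (x : Pt) : ∃ ε : ℝ, 0 < ε ∧ ∀ r, 0 < r → r < ε → ∀ s',
      wis L w i s' (x + r • rayDir i s) = wis L w i s x := by
  have h1 : ∀ ℓ ∈ L, ∃ ε : ℝ, 0 < ε ∧ ∀ r, 0 < r → r < ε → ∀ s',
      (HcGerm ℓ (x + r • rayDir i s) i s' ↔ HcGerm ℓ x i s) := by
    intro ℓ hℓ
    obtain ⟨hl, k, hk⟩ := hL ℓ hℓ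
    by_cases hg : HcGerm ℓ x i s
    · have e := hc_germ_dir hk hg
      subst e
      obtain ⟨t, ht, h⟩ := hc_germ_interior hl hg
      exact ⟨t, ht, fun r h0 h1 s' => iff_of_true ((hc_interior_iff hl hk _).1 (h r h0 h1) s') hg⟩
    · by_cases hx : x ∈ ℓ
      · refine ⟨1, one_pos, fun r h0 h1 s' => iff_of_false (fun h => hg ⟨hx, r, h0, h.1⟩) hg⟩
      · have ho : IsOpen (HcJ i s x ℓ)ᶜ := (hc_J_closed i s x hl).isOpen_compl
        have h0 : (0 : ℝ) ∈ (HcJ i s x ℓ)ᶜ := by simpa [HcJ] using hx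
        obtain ⟨ε, hε, hb⟩ := Metric.isOpen_iff.1 ho 0 h0
        refine ⟨ε, hε, fun r h0 h1 s' => iff_of_false (fun h => ?_) hg⟩
        have : r ∈ Metric.ball (0 : ℝ) ε := by
          simp [abs_of_pos h0, h1]
        exact hb this h.1
  choose! e he1 he2 using h1
  obtain ⟨ε, hε, hle⟩ : ∃ ε : ℝ, 0 < ε ∧ ∀ ℓ ∈ L, ε ≤ e ℓ := by
    rcases L.eq_empty_or_nonempty with rfl | hne
    · exact ⟨1, one_pos, by simp⟩
    · obtain ⟨m, hm, hmin⟩ := L.exists_min_image e hne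
      exact ⟨e m, he1 m hm, hmin⟩
  refine ⟨ε, hε, fun r h0 h1 s' => ?_⟩
  rw [hc_wis_eq hL, hc_wis_eq hL]
  congr 1
  apply Finset.filter_congr
  intro ℓ hℓ
  exact he2 ℓ hℓ r h0 (h1.trans_le (hle ℓ hℓ)) s'

lemma hc_along {L : Finset (Set Pt)} {w : Set Pt → ℤ} (hpre : IsPreHoneycomb L w) (i : Fin 3)
    (s : Bool) (x : Pt) (T : ℝ)
    (hT : ∀ r, 0 < r → r < T → x + r • rayDir i s ∉ HcV (wis L w)) :
    ∀ r, 0 < r → r < T → ∀ s', wis L w i s' (x + r • rayDir i s) = wis L w i s x := by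
  have heq : ∀ r, 0 < r → r < T → ∀ s', wis L w i s' (x + r • rayDir i s) =
      wis L w i s (x + r • rayDir i s) := fun r h0 h1 s' =>
    hc_notV_eq (hpre.2.2 _) (hT r h0 h1) i s' s
  have hcont : ContinuousOn (fun r : ℝ => wis L w i s (x + r • rayDir i s)) (Set.Ioo 0 T) := by
    intro r hr
    apply ContinuousAt.continuousWithinAt
    obtain ⟨ε₁, h1, h2⟩ := hc_local hpre.1 w i s (x + r • rayDir i s)
    obtain ⟨ε₂, h3, h4⟩ := hc_local hpre.1 w i (!s) (x + r • rayDir i s)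
    have : (fun r : ℝ => wis L w i s (x + r • rayDir i s)) =ᶠ[nhds r]
        fun _ => wis L w i s (x + r • rayDir i s) := by
      rw [Filter.EventuallyEq, Metric.eventually_nhds_iff]
      refine ⟨min ε₁ ε₂, lt_min h1 h3, fun q hq => ?_⟩
      rw [Real.dist_eq] at hq
      rcases lt_trichotomy q r with h | h | h
      · rw [abs_of_neg (by linarith)] at hq
        have h5 := h4 (r - q) (by linarith) (by linarith [min_le_right ε₁ ε₂]) s
        rw [heq r hr.1 hr.2] at h5
        rw [← h5, hc_rayDir_not]
        congr 1
        module
      · rw [h]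
      · rw [abs_of_pos (by linarith)] at hq
        have h5 := h2 (q - r) (by linarith) (by linarith [min_le_left ε₁ ε₂]) s
        rw [← h5]
        congr 1
        module
    exact continuousAt_const.congr this.symm
  intro r h0 h1 s'
  obtain ⟨ε, h2, h3⟩ := hc_local hpre.1 w i s x
  have hm : 0 < min ε T := lt_min h2 (h0.trans h1)
  have h4 := h3 (min ε T / 2) (by linarith) (by linarith [min_le_left ε T]) s
  rw [← h4, heq r h0 h1]
  exact isPreconnected_Ioo.constant hcont ⟨h0, h1⟩
    ⟨by linarith, by linarith [min_le_right ε T]⟩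

lemma hc_along_end {L : Finset (Set Pt)} {w : Set Pt → ℤ} (hpre : IsPreHoneycomb L w) (i : Fin 3)
    (s : Bool) (x : Pt) (T : ℝ) (h0 : 0 < T)
    (hT : ∀ r, 0 < r → r < T → x + r • rayDir i s ∉ HcV (wis L w)) :
    wis L w i (!s) (x + T • rayDir i s) = wis L w i s x := by
  obtain ⟨ε, h2, h3⟩ := hc_local hpre.1 w i (!s) (x + T • rayDir i s)
  have hm : 0 < min ε T := lt_min h2 h0
  have h4 := h3 (min ε T / 2) (by linarith) (by linarith [min_le_left ε T]) s
  rw [← h4, ← hc_along hpre i s x T hT (T - min ε T / 2) (by linarith [min_le_right ε T])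
    (by linarith) s, hc_rayDir_not]
  congr 1
  module

/-! ### Existence of good edges -/

lemma hc_finite_avoid {A : Set ℝ} (hA : A.Finite) (a : ℝ) :
    ∃ δ : ℝ, 0 < δ ∧ ∀ r ∈ A, r ≠ a → δ ≤ |r - a| := by
  have ho : IsOpen (A \ {a})ᶜ := (hA.subset Set.sdiff_subset).isClosed.isOpen_compl
  obtain ⟨δ, hδ, hb⟩ := Metric.isOpen_iff.1 ho a (by simp)
  refine ⟨δ, hδ, fun r hr hne => ?_⟩
  by_contra! hlt
  exact hb (show r ∈ Metric.ball a δ by simpa [Real.dist_eq] using hlt) ⟨hr, hne⟩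

lemma hc_exists_good {L : Finset (Set Pt)} {w : Set Pt → ℤ} (hpre : IsPreHoneycomb L w)
    {i : Fin 3} {s : Bool} {x : Pt} (hW : wis L w i s x ≠ 0) :
    ∃ S, HcGood (wis L w) i S ∧ HcGerm S x i s := by
  have hfin := hc_V_finite hpre.1 w
  set W := wis L w with hWdef
  have hd := hc_rayDir_ne i s
  have hinj : Function.Injective (fun t : ℝ => x + t • rayDir i s) := fun a b hab =>
    smul_left_injective ℝ hd (add_left_cancel hab)
  set τ : Set ℝ := (fun t : ℝ => x + t • rayDir i s) ⁻¹' (HcV W) with hτ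
  have hτf : τ.Finite := hfin.preimage hinj.injOn
  obtain ⟨ε, hε, hloc⟩ := hc_local hpre.1 w i s x
  obtain ⟨δ, hδ, hav⟩ := hc_finite_avoid hτf 0
  have hm : 0 < min ε δ := lt_min hε hδ
  obtain ⟨c, hc0, hcε, hcδ⟩ : ∃ c : ℝ, 0 < c ∧ c < ε ∧ c < δ :=
    ⟨min ε δ / 2, by linarith, by linarith [min_le_left ε δ], by linarith [min_le_right ε δ]⟩
  have hτ0 : ∀ r ∈ τ, 0 < r → c < r := by
    intro r hr h0
    have := hav r hr h0.ne'
    rw [sub_zero, abs_of_pos h0] at this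
    linarith
  have hcτ : c ∉ τ := fun h => lt_irrefl _ (hτ0 c h hc0)
  have hWc : ∀ s', W i s' (x + c • rayDir i s) ≠ 0 := by
    intro s'; rw [hWdef, hloc c hc0 hcε s']; exact hW
  set I : Set ℝ := {t | ∀ r ∈ τ, (c < r → t ≤ r) ∧ (r < c → r ≤ t)} with hI
  have hIoc : I.OrdConnected := by
    refine ⟨fun a ha b hb t ht r hr => ⟨fun h => ht.2.trans ((hb r hr).1 h),
      fun h => ((ha r hr).2 h).trans ht.1⟩⟩
  have hIcl : IsClosed I := by
    have : I = ⋂ r ∈ τ, ({t | c < r → t ≤ r} ∩ {t | r < c → r ≤ t}) := by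
      ext t; simp only [Set.mem_iInter]; rfl
    rw [this]
    refine isClosed_biInter fun r _ => IsClosed.inter ?_ ?_
    · by_cases h : c < r
      · simp only [h, true_imp_iff]; exact isClosed_Iic
      · simp [h]
    · by_cases h : r < c
      · simp only [h, true_imp_iff]; exact isClosed_Ici
      · simp [h]
  have h0I : (0 : ℝ) ∈ I := by
    intro r hr
    refine ⟨fun h => (hc0.trans h).le, fun h => ?_⟩
    by_contra! h1
    exact lt_asymm h (hτ0 r hr h1)
  have hcI : c ∈ I := fun r hr => ⟨le_of_lt, le_of_lt⟩
  set S := (fun t : ℝ => x + t • rayDir i s) '' I with hS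
  have hmem : ∀ t : ℝ, x + t • rayDir i s ∈ S ↔ t ∈ I := fun t => hinj.mem_set_image
  have hl : IsLineL S := hc_isLine_image _ _ _ hd hIcl hIoc.convex ⟨0, h0I, c, hcI, hc0.ne⟩
  have hp : PerpTo i S := by
    rintro _ ⟨a, -, rfl⟩ _ ⟨b, -, rfl⟩
    have h1 := hc_pdot_rayDir_self i s
    have : x + a • rayDir i s - (x + b • rayDir i s) = 0 + (a - b) • rayDir i s := by module
    simp only
    rw [this, hc_pdot_add_smul, h1]
    simp [pdot]
  refine ⟨S, ⟨hl, hp, ?_, ?_⟩, (by simpa using (hmem 0).2 h0I), c, hc0, (hmem c).2 hcI⟩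
  · intro y hy
    obtain ⟨t, ht, rfl⟩ := hy.1
    have hg := (hc_interior_iff hl hp _).1 hy
    obtain ⟨-, a, ha, hta⟩ := hg s
    obtain ⟨-, b, hb, htb⟩ := hg (!s)
    have hta' : t + a ∈ I := by
      rw [← hmem]; convert hta using 1; module
    have htb' : t - b ∈ I := by
      rw [← hmem]; convert htb using 1; rw [hc_rayDir_not]; module
    have hup : ∀ r ∈ τ, c < r → t + a ≤ r := fun r hr => (hta' r hr).1
    have hdn : ∀ r ∈ τ, r < c → r ≤ t - b := fun r hr => (htb' r hr).2
    constructor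
    · intro hV
      have htτ : t ∈ τ := hV
      rcases lt_trichotomy t c with h | h | h
      · linarith [hdn t htτ h]
      · exact hcτ (h ▸ htτ)
      · linarith [hup t htτ h]
    · simp only
      rcases lt_trichotomy t c with h | h | h
      · have := hc_along hpre i (!s) (x + c • rayDir i s) (c - t + b) (fun r h0 h1 hV => by
          have : c - r ∈ τ := by
            rw [hc_rayDir_not] at hV
            simp only [hτ, Set.mem_preimage]
            convert hV using 1; module
          linarith [hdn _ this (by linarith)]) (c - t) (by linarith) (by linarith) true
        have e : x + c • rayDir i s + (c - t) • rayDir i (!s) = x + t • rayDir i s := by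
          rw [hc_rayDir_not]; module
        rw [e] at this
        rw [hWdef, this]
        exact hWc _
      · rw [h]; exact hWc _
      · have := hc_along hpre i s (x + c • rayDir i s) (t - c + a) (fun r h0 h1 hV => by
          have : c + r ∈ τ := by
            simp only [hτ, Set.mem_preimage]
            convert hV using 1; module
          linarith [hup _ this (by linarith)]) (t - c) (by linarith) (by linarith) true
        have e : x + c • rayDir i s + (t - c) • rayDir i s = x + t • rayDir i s := by
          module
        rw [e] at this
        rw [hWdef, this]
        exact hWc _
  · rintro y ⟨⟨t, ht, rfl⟩, hnint⟩
    by_contra hV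
    have htτ : t ∉ τ := hV
    apply hnint
    obtain ⟨δ', hδ', hav'⟩ := hc_finite_avoid hτf t
    refine ⟨⟨t, ht, rfl⟩, rayDir i s, hd, δ', hδ', fun q hq => ?_⟩
    have : t + q ∈ I := by
      intro r hr
      have h1 := hav' r hr (fun h => htτ (h ▸ hr))
      have h2 := ht r hr
      have h3 := abs_le.1 hq
      refine ⟨fun h => ?_, fun h => ?_⟩
      · have h4 := h2.1 h
        rw [abs_of_nonneg (by linarith)] at h1
        linarith
      · have h4 := h2.2 h
        rw [abs_of_nonpos (by linarith)] at h1
        linarith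
    simp only
    rw [add_assoc, ← add_smul]
    exact (hmem _).2 this

lemma hc_good_const {L : Finset (Set Pt)} {w : Set Pt → ℤ} (hpre : IsPreHoneycomb L w)
    {i : Fin 3} {S : Set Pt} (hS : HcGood (wis L w) i S) {x y : Pt} {s : Bool}
    (hg : HcGerm S x i s) (hy : InteriorPt S y) : wis L w i s x = wis L w i true y := by
  have key : ∀ (s : Bool) (t : ℝ), 0 < t → y = x + t • rayDir i s →
      wis L w i s x = wis L w i true y := by
    rintro s t ht rfl
    obtain ⟨-, a, ha, hta⟩ := (hc_interior_iff hS.1 hS.2.1 _).1 hy s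
    rw [add_assoc, ← add_smul] at hta
    exact (hc_along hpre i s x (t + a) (fun r h0 h1 =>
      (hS.2.2.1 _ (hc_between_interior hS.1 hg.1 hta h0 h1)).1) t ht (by linarith) true).symm
  rcases hc_param_pos hS.2.1 hg.1 hy.1 s with rfl | ⟨t, ht, h1⟩ | ⟨t, ht, h1⟩
  · exact hc_notV_eq (hpre.2.2 _) (hS.2.2.1 _ hy).1 i s true
  · exact key _ _ ht h1
  · rw [← key _ _ ht h1]
    have hinter : InteriorPt S x := by
      rw [hc_interior_iff hS.1 hS.2.1]
      have h2 : HcGerm S x i (!s) := ⟨hg.1, t, ht, h1 ▸ hy.1⟩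
      intro s'
      by_cases h : s' = s
      · rw [h]; exact hg
      · have : s' = !s := by cases s <;> cases s' <;> simp_all
        rw [this]; exact h2
    exact hc_notV_eq (hpre.2.2 _) (hS.2.2.1 _ hinter).1 i s (!s)

/-! ### Every good edge contains a vertex -/

lemma hc_pdot_not (j i : Fin 3) (s : Bool) :
    pdot (rayDir j (!s)) (xiv i) = - pdot (rayDir j s) (xiv i) := by
  rw [hc_rayDir_not]; simp [pdot]; ring

lemma hc_toward {L : Finset (Set Pt)} {w : Set Pt → ℤ} (hpre : IsPreHoneycomb L w)
    {v : Pt} (hv : v ∈ HcV (wis L w)) (i : Fin 3) {σ : ℝ} (hσ : σ ≠ 0) :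
    ∃ j s, j ≠ i ∧ wis L w j s v ≠ 0 ∧ σ * pdot (rayDir j s) (xiv i) < 0 := by
  obtain ⟨j, s, hji, hjs⟩ : ∃ j s, j ≠ i ∧ wis L w j s v ≠ 0 := by
    obtain ⟨a, b, s, s', hab, h1, h2⟩ := hv
    by_cases h : a = i
    · exact ⟨b, s', fun h' => hab (h.trans h'.symm), h2⟩
    · exact ⟨a, s, h, h1⟩
  by_cases hd : wis L w j true v = wis L w j false v
  · have hall : ∀ s', wis L w j s' v ≠ 0 := by
      intro s'
      cases s <;> cases s' <;> simp_all
    have h1 : σ * pdot (rayDir j true) (xiv i) ≠ 0 := mul_ne_zero hσ (hc_cross_ne j i true hji)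
    rcases lt_or_gt_of_ne h1 with h | h
    · exact ⟨j, true, hji, hall _, h⟩
    · refine ⟨j, false, hji, hall _, ?_⟩
      have := hc_pdot_not j i true
      simp only [Bool.not_true] at this
      rw [this]; linarith
  · obtain ⟨s', hs'⟩ : ∃ s', ∀ k, wis L w k s' v ≠ 0 := by
      rcases lt_or_gt_of_ne hd with h | h
      · refine ⟨false, fun k => ?_⟩
        have h1 := hpre.2.2 v k j
        have h2 := hpre.2.1 v k true
        omega
      · refine ⟨true, fun k => ?_⟩
        have h1 := hpre.2.2 v k j
        have h2 := hpre.2.1 v k false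
        omega
    have n1 : i + 1 ≠ i := by fin_cases i <;> decide
    have n2 : i + 2 ≠ i := by fin_cases i <;> decide
    have n3 : i + 2 ≠ i + 1 := by fin_cases i <;> decide
    have e1 := hc_cross_true (i + 1) i n1
    have e2 := hc_cross_true (i + 2) i n2
    rw [if_pos rfl] at e1
    rw [if_neg n3] at e2
    have e3 : pdot (rayDir (i + 2) s') (xiv i) = - pdot (rayDir (i + 1) s') (xiv i) := by
      cases s'
      · have a1 := hc_pdot_not (i + 2) i true
        have a2 := hc_pdot_not (i + 1) i true
        simp only [Bool.not_true] at a1 a2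
        rw [a1, a2, e1, e2]; ring
      · rw [e1, e2]; ring
    have h1 : σ * pdot (rayDir (i + 1) s') (xiv i) ≠ 0 := mul_ne_zero hσ (hc_cross_ne _ i _ n1)
    rcases lt_or_gt_of_ne h1 with h | h
    · exact ⟨i + 1, s', n1, hs' _, h⟩
    · refine ⟨i + 2, s', n2, hs' _, ?_⟩
      rw [e3]; linarith

lemma hc_good_touch {L : Finset (Set Pt)} {w : Set Pt → ℤ} (hpre : IsPreHoneycomb L w)
    (hne : (HcV (wis L w)).Nonempty) {i : Fin 3} {S : Set Pt} (hS : HcGood (wis L w) i S) :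
    ∃ v ∈ HcV (wis L w), v ∈ S := by
  by_contra! hno
  have hinter : ∀ x ∈ S, InteriorPt S x := by
    intro x hx
    by_contra h
    exact hno x (hS.2.2.2 x ⟨hx, h⟩) hx
  obtain ⟨p, hp⟩ := (hc_line_nontrivial hS.1).nonempty
  have hfull : ∀ y, pdot (y - p) (xiv i) = 0 → y ∈ S := by
    intro y hy
    have key : ∀ (s : Bool) (t : ℝ), 0 < t → p + t • rayDir i s ∈ S := by
      intro s t ht
      by_contra hn
      obtain ⟨b, -, -, hb⟩ := hc_exit hS.1 hS.2.1 hp ht hn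
      exact hb.2 (hinter _ hb.1)
    have h1 := hc_decomp i true _ hy
    set t := pdot (y - p) (rayDir i true)
    have h2 : y = p + t • rayDir i true := by rw [← h1]; simp
    rcases lt_trichotomy t 0 with h0 | h0 | h0
    · have := key false (-t) (by linarith)
      have e := hc_rayDir_not i true
      simp only [Bool.not_true] at e
      rw [e] at this
      rw [h2]
      simpa using this
    · rw [h2, h0]; simpa using hp
    · rw [h2]; exact key _ _ h0
  obtain ⟨v, hv, hmin⟩ := Set.exists_min_image _ (fun v => |pdot (v - p) (xiv i)|)
    (hc_V_finite hpre.1 w) hne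
  set σ := pdot (v - p) (xiv i) with hσ
  have hσ0 : σ ≠ 0 := fun h => hno v hv (hfull v h)
  obtain ⟨j, s, hji, hW, hlt⟩ := hc_toward hpre hv i hσ0
  set m := pdot (rayDir j s) (xiv i) with hm
  have hm0 : m ≠ 0 := hc_cross_ne j i s hji
  have hval : ∀ r : ℝ, pdot (v + r • rayDir j s - p) (xiv i) = σ + r * m := by
    intro r
    rw [show v + r • rayDir j s - p = (v - p) + r • rayDir j s by module, hc_pdot_add_smul]
  have hT : 0 < -σ / m := by
    rcases lt_or_gt_of_ne hm0 with h | h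
    · have : 0 < σ := by
        by_contra! h'
        nlinarith
      exact div_pos_of_neg_of_neg (by linarith) h
    · have : σ < 0 := by
        by_contra! h'
        nlinarith
      exact div_pos (by linarith) h
  have hTm : -σ / m * m = -σ := div_mul_cancel₀ _ hm0
  have hend := hc_along_end hpre j s v (-σ / m) hT (fun r h0 h1 hV => by
    have h2 := hmin _ hV
    simp only [hval] at h2
    have h3 := sq_le_sq.2 h2
    set T := -σ / m
    have h4 : σ = - (T * m) := by linarith
    rw [h4] at h3
    have h5 : 0 < m ^ 2 := by positivity
    nlinarith [mul_pos h5 (mul_pos h0 (show 0 < 2 * T - r by linarith))])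
  have hz : v + (-σ / m) • rayDir j s ∈ S := hfull _ (by rw [hval, hTm]; ring)
  have := hS.2.2.1 _ (hinter _ hz)
  exact this.1 ⟨j, i, !s, true, hji, by rw [hend]; exact hW, this.2⟩

/-! ### Uniqueness -/

section HcUniq

lemma hc_H_germ_ne (H : Honeycomb) {e : Set Pt} (he : e ∈ H.edges) {v : Pt} {i : Fin 3} {s : Bool}
    (hg : HcGerm e v i s) : wis H.edges H.w i s v ≠ 0 := by
  rw [hc_wis_eq H.pre.1]
  apply ne_of_gt
  apply Finset.sum_pos
  · intro ℓ hℓ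
    exact H.w_pos ℓ (Finset.mem_filter.1 hℓ).1
  · exact ⟨e, Finset.mem_filter.2 ⟨he, hg⟩⟩

lemma hc_H_exists (H : Honeycomb) {v : Pt} {i : Fin 3} {s : Bool}
    (h : wis H.edges H.w i s v ≠ 0) : ∃ e ∈ H.edges, HcGerm e v i s := by
  rw [hc_wis_eq H.pre.1] at h
  obtain ⟨ℓ, h1, -⟩ := Finset.exists_ne_zero_of_sum_ne_zero h
  rw [Finset.mem_filter] at h1
  exact ⟨ℓ, h1⟩

lemma hc_H_interior (H : Honeycomb) {e : Set Pt} (he : e ∈ H.edges) {i : Fin 3} (hp : PerpTo i e)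
    {x : Pt} (hx : InteriorPt e x) : wis H.edges H.w i true x = H.w e := by
  rw [hc_wis_eq H.pre.1]
  have : H.edges.filter (fun ℓ => HcGerm ℓ x i true) = {e} := by
    ext ℓ
    rw [Finset.mem_filter, Finset.mem_singleton]
    constructor
    · rintro ⟨h1, h2⟩
      by_contra hne
      exact H.no_cross e he ℓ h1 (Ne.symm hne) x hx h2.1
    · rintro rfl
      exact ⟨he, (hc_interior_iff (H.pre.1 _ he).1 hp x).1 hx true⟩
  rw [this, Finset.sum_singleton]

lemma hc_H_interior_notV (H : Honeycomb) {e : Set Pt} (he : e ∈ H.edges)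
    {x : Pt} (hx : InteriorPt e x) : x ∉ HcV (wis H.edges H.w) := by
  rintro ⟨i, j, s, s', hij, h1, h2⟩
  obtain ⟨e1, he1, hg1⟩ := hc_H_exists H h1
  obtain ⟨e2, he2, hg2⟩ := hc_H_exists H h2
  have q1 : e = e1 := by
    by_contra hne
    exact H.no_cross e he e1 he1 hne x hx hg1.1
  have q2 : e = e2 := by
    by_contra hne
    exact H.no_cross e he e2 he2 hne x hx hg2.1
  subst q1; subst q2
  obtain ⟨k, hk⟩ := (H.pre.1 _ he).2
  exact hij ((hc_germ_dir hk hg1).trans (hc_germ_dir hk hg2).symm)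

lemma hc_H_verts (H : Honeycomb) : (↑H.verts : Set Pt) = HcV (wis H.edges H.w) := by
  ext v
  constructor
  · intro hv
    by_contra hV
    have hdeg := H.degree v hv
    have h1 : ∀ e ∈ H.edges.filter (fun e => IsEnd v e), ∃ p : Fin 3 × Bool,
        HcGerm e v p.1 p.2 := by
      intro e he
      rw [Finset.mem_filter] at he
      obtain ⟨hl, k, hk⟩ := H.pre.1 e he.1
      obtain ⟨s, hs⟩ := hc_exists_germ hl hk he.2.1
      exact ⟨(k, s), hs⟩
    choose! f hf using h1
    have hcard : (H.edges.filter (fun e => IsEnd v e)).card ≤ (Finset.univ : Finset Bool).card := by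
      apply Finset.card_le_card_of_injOn (fun e => (f e).2) (fun _ _ => Finset.mem_univ _)
      intro e he e' he' hee
      have g := hf e he
      have g' := hf e' he'
      rw [Finset.mem_coe, Finset.mem_filter] at he he'
      simp only at hee
      rw [← hee] at g'
      have hk : (f e).1 = (f e').1 := by
        by_contra hne
        exact hV ⟨_, _, _, _, hne, hc_H_germ_ne H he.1 g, hc_H_germ_ne H he'.1 g'⟩
      rw [← hk] at g'
      obtain ⟨x, hx, hx'⟩ := hc_common_interior (H.pre.1 e he.1).1 (H.pre.1 e' he'.1).1 g g'
      by_contra hne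
      exact H.no_cross e he.1 e' he'.1 hne x hx hx'.1
    simp at hcard
    omega
  · intro hV
    have hV' := hV
    obtain ⟨i, j, s, s', hij, h1, h2⟩ := hV'
    obtain ⟨e1, he1, hg1⟩ := hc_H_exists H h1
    by_contra hv
    refine hc_H_interior_notV H he1 (x := v) ?_ hV
    by_contra hn
    exact hv (H.ends_mem e1 he1 v ⟨hg1.1, hn⟩)

lemma hc_H_good (H : Honeycomb) {e : Set Pt} (he : e ∈ H.edges) {i : Fin 3} (hp : PerpTo i e) :
    HcGood (wis H.edges H.w) i e := by
  refine ⟨(H.pre.1 e he).1, hp, fun x hx => ⟨hc_H_interior_notV H he hx, ?_⟩, fun x hx => ?_⟩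
  · rw [hc_H_interior H he hp hx]
    exact (H.w_pos e he).ne'
  · rw [← hc_H_verts]
    exact H.ends_mem e he x hx

lemma hc_good_exists_interior {S : Set Pt} {i : Fin 3} (hl : IsLineL S) (hp : PerpTo i S) :
    ∃ x, InteriorPt S x := by
  obtain ⟨p, hpS⟩ := (hc_line_nontrivial hl).nonempty
  obtain ⟨s, hs⟩ := hc_exists_germ hl hp hpS
  obtain ⟨x, hx, -⟩ := hc_common_interior hl hl hs hs
  exact ⟨x, hx⟩

lemma hc_H_edges (H : Honeycomb) :
    (↑H.edges : Set (Set Pt)) = {S | ∃ i, HcGood (wis H.edges H.w) i S} := by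
  ext S
  constructor
  · intro hS
    obtain ⟨i, hi⟩ := (H.pre.1 S hS).2
    exact ⟨i, hc_H_good H hS hi⟩
  · rintro ⟨i, hS⟩
    obtain ⟨x, hx⟩ := hc_good_exists_interior hS.1 hS.2.1
    have h1 := hS.2.2.1 x hx
    obtain ⟨e, he, hg⟩ := hc_H_exists H h1.2
    obtain ⟨k, hk⟩ := (H.pre.1 e he).2
    have hik := hc_germ_dir hk hg
    subst hik
    have hge := hc_H_good H he hk
    have hxe : InteriorPt e x := by
      by_contra hn
      exact h1.1 (hge.2.2.2 x ⟨hg.1, hn⟩)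
    rw [hc_good_unique hS hge hx hxe]
    exact he

lemma hc_H_unique (H H' : Honeycomb)
    (h : ∀ (i : Fin 3) (s : Bool) (v : Pt), wis H'.edges H'.w i s v = wis H.edges H.w i s v) :
    H'.verts = H.verts ∧ H'.edges = H.edges ∧ ∀ e ∈ H.edges, H'.w e = H.w e := by
  have hW : wis H'.edges H'.w = wis H.edges H.w := by
    funext i s v; exact h i s v
  have he : H'.edges = H.edges := by
    apply Finset.coe_injective
    rw [hc_H_edges, hc_H_edges, hW]
  refine ⟨?_, he, fun e hmem => ?_⟩
  · apply Finset.coe_injective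
    rw [hc_H_verts, hc_H_verts, hW]
  · obtain ⟨hl, i, hi⟩ := H.pre.1 e hmem
    obtain ⟨x, hx⟩ := hc_good_exists_interior hl hi
    rw [← hc_H_interior H hmem hi hx, ← hc_H_interior H' (he ▸ hmem) hi hx, h]

end HcUniq

/-! ### Existence -/

/-- The weight of a good edge. -/
def hcWeight (W : Fin 3 → Bool → Pt → ℤ) (S : Set Pt) : ℤ :=
  if h : ∃ p : Fin 3 × Pt, HcGood W p.1 S ∧ InteriorPt S p.2 then
    W h.choose.1 true h.choose.2 else 0

lemma hc_good_dir {W : Fin 3 → Bool → Pt → ℤ} {i j : Fin 3} {S : Set Pt} (h : HcGood W i S)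
    (h' : PerpTo j S) : i = j := by
  obtain ⟨p, hpS⟩ := (hc_line_nontrivial h.1).nonempty
  obtain ⟨s, hs⟩ := hc_exists_germ h.1 h.2.1 hpS
  exact hc_germ_dir h' hs

lemma hc_weight_eq {L : Finset (Set Pt)} {w : Set Pt → ℤ} (hpre : IsPreHoneycomb L w)
    {i : Fin 3} {S : Set Pt} (hS : HcGood (wis L w) i S) {x : Pt} {s : Bool}
    (hg : HcGerm S x i s) : hcWeight (wis L w) S = wis L w i s x := by
  have h : ∃ p : Fin 3 × Pt, HcGood (wis L w) p.1 S ∧ InteriorPt S p.2 := by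
    obtain ⟨y, hy⟩ := hc_good_exists_interior hS.1 hS.2.1
    exact ⟨(i, y), hS, hy⟩
  unfold hcWeight
  rw [dif_pos h]
  obtain ⟨h1, h2⟩ := h.choose_spec
  rw [← hc_good_dir hS h1.2.1]
  exact (hc_good_const hpre hS hg h2).symm

lemma hc_goods_finite {L : Finset (Set Pt)} {w : Set Pt → ℤ} (hpre : IsPreHoneycomb L w)
    (hne : (HcV (wis L w)).Nonempty) : {S | ∃ i, HcGood (wis L w) i S}.Finite := by
  have hsub : {S | ∃ i, HcGood (wis L w) i S} ⊆ ⋃ v ∈ HcV (wis L w),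
      ⋃ q ∈ (Set.univ : Set (Fin 3 × Bool)), {S | HcGood (wis L w) q.1 S ∧ HcGerm S v q.1 q.2} := by
    rintro S ⟨i, hS⟩
    obtain ⟨v, hv, hvS⟩ := hc_good_touch hpre hne hS
    obtain ⟨s, hs⟩ := hc_exists_germ hS.1 hS.2.1 hvS
    simp only [Set.mem_iUnion]
    exact ⟨v, hv, (i, s), trivial, hS, hs⟩
  refine Set.Finite.subset ?_ hsub
  refine (hc_V_finite hpre.1 w).biUnion fun v _ => Set.finite_univ.biUnion fun q _ => ?_
  apply Set.Subsingleton.finite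
  rintro S ⟨h1, h2⟩ S' ⟨h1', h2'⟩
  exact hc_good_unique_germ h1 h1' h2 h2'

lemma hc_goods_wis {L : Finset (Set Pt)} {w : Set Pt → ℤ} (hpre : IsPreHoneycomb L w)
    {E : Finset (Set Pt)} (hE : ∀ S, S ∈ E ↔ ∃ i, HcGood (wis L w) i S)
    (i : Fin 3) (s : Bool) (v : Pt) :
    wis E (hcWeight (wis L w)) i s v = wis L w i s v := by
  have hsys : IsXiSystem E := by
    intro S hS
    obtain ⟨i, hi⟩ := (hE S).1 hS
    exact ⟨hi.1, i, hi.2.1⟩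
  rw [hc_wis_eq hsys]
  have hval : ∀ S ∈ E.filter (fun ℓ => HcGerm ℓ v i s), HcGood (wis L w) i S := by
    intro S hS
    rw [Finset.mem_filter, hE] at hS
    obtain ⟨⟨j, hj⟩, hg⟩ := hS
    have := hc_germ_dir hj.2.1 hg
    rw [this]; exact hj
  by_cases h0 : wis L w i s v = 0
  · rw [h0]
    apply Finset.sum_eq_zero
    intro S hS
    rw [hc_weight_eq hpre (hval S hS) (Finset.mem_filter.1 hS).2, h0]
  · obtain ⟨S, hS, hg⟩ := hc_exists_good hpre h0
    have : E.filter (fun ℓ => HcGerm ℓ v i s) = {S} := by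
      ext S'
      rw [Finset.mem_singleton]
      constructor
      · intro h
        exact hc_good_unique_germ (hval S' h) hS (Finset.mem_filter.1 h).2 hg
      · rintro rfl
        exact Finset.mem_filter.2 ⟨(hE _).2 ⟨i, hS⟩, hg⟩
    rw [this, Finset.sum_singleton, hc_weight_eq hpre hS hg]

lemma hc_exists_honeycomb {L : Finset (Set Pt)} {w : Set Pt → ℤ} (hpre : IsPreHoneycomb L w)
    (hne : (HcV (wis L w)).Nonempty) :
    ∃ H : Honeycomb, ∀ (i : Fin 3) (s : Bool) (v : Pt),
      wis H.edges H.w i s v = wis L w i s v := by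
  have hfin := hc_goods_finite hpre hne
  have hVfin := hc_V_finite hpre.1 w
  have hE : ∀ S, S ∈ hfin.toFinset ↔ ∃ i, HcGood (wis L w) i S := fun S => by
    rw [Set.Finite.mem_toFinset]; rfl
  have hwis := hc_goods_wis hpre hE
  refine ⟨{ verts := hVfin.toFinset
            edges := hfin.toFinset
            w := hcWeight (wis L w)
            verts_nonempty := by simpa using hne
            degree := ?_
            no_cross := ?_
            w_pos := ?_
            ends_mem := ?_
            edge_touch := ?_
            pre := ?_ }, hwis⟩
  · intro v hv
    rw [Set.Finite.mem_toFinset] at hv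
    have h3 := (hc_V_iff (hpre.2.2 v)).2 hv
    refine h3.trans ?_
    have hex : ∀ p : Fin 3 × Bool, wis L w p.1 p.2 v ≠ 0 →
        ∃ S, HcGood (wis L w) p.1 S ∧ HcGerm S v p.1 p.2 := fun p hp => hc_exists_good hpre hp
    choose! f hf using hex
    apply Finset.card_le_card_of_injOn f
    · intro p hp
      have hp' : wis L w p.1 p.2 v ≠ 0 := by simpa using hp
      obtain ⟨h1, h2⟩ := hf p hp'
      rw [Finset.mem_coe, Finset.mem_filter, hE]
      exact ⟨⟨_, h1⟩, h2.1, fun hi => (h1.2.2.1 v hi).1 hv⟩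
    · intro p hp q hq hpq
      have hp' : wis L w p.1 p.2 v ≠ 0 := by simpa using hp
      have hq' : wis L w q.1 q.2 v ≠ 0 := by simpa using hq
      obtain ⟨h1, h2⟩ := hf p hp'
      obtain ⟨h1', h2'⟩ := hf q hq'
      rw [← hpq] at h1' h2'
      have hd : p.1 = q.1 := hc_good_dir h1 h1'.2.1
      refine Prod.ext hd ?_
      by_contra hs
      refine (h1.2.2.1 v ?_).1 hv
      rw [hc_interior_iff h1.1 h1.2.1]
      rw [← hd] at h2'
      intro s
      by_cases h : s = p.2
      · rw [h]; exact h2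
      · have : s = q.2 := by
          revert h hs
          generalize p.2 = a
          generalize q.2 = b
          revert s a b
          decide
        rw [this]; exact h2'
  · intro e he e' he' hne' x hx hx'
    rw [hE] at he he'
    obtain ⟨i, hi⟩ := he
    obtain ⟨j, hj⟩ := he'
    have h1 := hi.2.2.1 x hx
    have hxe : InteriorPt e' x := by
      by_contra hn
      exact h1.1 (hj.2.2.2 x ⟨hx', hn⟩)
    have h2 := hj.2.2.1 x hxe
    have hij : i = j := by
      by_contra hij
      exact h1.1 ⟨i, j, true, true, hij, h1.2, h2.2⟩
    subst hij
    exact hne' (hc_good_unique hi hj hx hxe)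
  · intro e he
    rw [hE] at he
    obtain ⟨i, hi⟩ := he
    obtain ⟨x, hx⟩ := hc_good_exists_interior hi.1 hi.2.1
    rw [hc_weight_eq hpre hi ((hc_interior_iff hi.1 hi.2.1 x).1 hx true)]
    exact lt_of_le_of_ne (hpre.2.1 _ _ _) (hi.2.2.1 x hx).2.symm
  · intro e he x hx
    rw [hE] at he
    obtain ⟨i, hi⟩ := he
    rw [Set.Finite.mem_toFinset]
    exact hi.2.2.2 x hx
  · intro e he
    rw [hE] at he
    obtain ⟨i, hi⟩ := he
    obtain ⟨v, hv, hve⟩ := hc_good_touch hpre hne hi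
    exact ⟨v, (Set.Finite.mem_toFinset _).2 hv, hve⟩
  · refine ⟨?_, ?_, ?_⟩
    · intro S hS
      obtain ⟨i, hi⟩ := (hE S).1 hS
      exact ⟨hi.1, i, hi.2.1⟩
    · intro v i s
      rw [hwis]; exact hpre.2.1 v i s
    · intro v i j
      rw [hwis, hwis, hwis, hwis]; exact hpre.2.2 v i j

/-- A pre-honeycomb (L,w) such that the set V of points at which at
least three of the six numbers w_i^s(·) are nonzero is nonempty determines a unique
honeycomb with the same numbers w_i^s everywhere; its vertex set is exactly V. -/
theorem stmt12 (L : Finset (Set Pt)) (w : Set Pt → ℤ) (hpre : IsPreHoneycomb L w)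
    (V : Set Pt)
    (hV : V = {v : Pt |
      3 ≤ ((Finset.univ : Finset (Fin 3 × Bool)).filter
        fun p => wis L w p.1 p.2 v ≠ 0).card})
    (hne : V.Nonempty) :
    ∃ H : Honeycomb,
      (∀ (i : Fin 3) (s : Bool) (v : Pt), wis H.edges H.w i s v = wis L w i s v) ∧
      (↑H.verts : Set Pt) = V ∧
      ∀ H' : Honeycomb,
        (∀ (i : Fin 3) (s : Bool) (v : Pt), wis H'.edges H'.w i s v = wis L w i s v) →
        H'.verts = H.verts ∧ H'.edges = H.edges ∧ ∀ e ∈ H.edges, H'.w e = H.w e := by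
  have hVeq : V = HcV (wis L w) := by
    rw [hV]
    ext v
    exact hc_V_iff (hpre.2.2 v)
  rw [hVeq] at hne ⊢
  obtain ⟨H, hH⟩ := hc_exists_honeycomb hpre hne
  have hW : wis H.edges H.w = wis L w := by
    funext i s v; exact hH i s v
  refine ⟨H, hH, ?_, fun H' hH' => hc_H_unique H H' fun i s v => ?_⟩
  · rw [hc_H_verts, hW]
  · rw [hH', hH]
end
end

section
/- For every positive integer k there exist a convex triangular grid G whose region R(G) is a hexagon with two opposite sides of length 1 and the other four sides of length k, and a function h₀ : B(G) → ℤ, such that the polyhedron C(G,h₀) has a vertex (extreme point) h satisfying h(e) = −1/k for some edge e of G and |h(e')| < 2k for all edges e' of G. -/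
open scoped BigOperators

attribute [local instance] Classical.propDecidable

noncomputable section

/-- Directed edges: ordered pairs of points. -/
abbrev Ed : Type := Pt × Pt

/-- A little (lattice) triangle of the triangular grid, given by its base point and
its orientation (`up = true` for an upward triangle). -/
structure GridTriangle : Type where
  base : Pt
  up : Bool

noncomputable def GridTriangle.v0 (T : GridTriangle) : Pt := T.base
noncomputable def GridTriangle.v1 (T : GridTriangle) : Pt := T.base + xiv 0
noncomputable def GridTriangle.v2 (T : GridTriangle) : Pt :=
  if T.up then T.base + xiv 0 + xiv 1 else T.base + xiv 0 + xiv 2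

/-- The three directed edges of the 3-circuit surrounding a little triangle;
each has direction ξ₁, ξ₂ or ξ₃. -/
noncomputable def GridTriangle.e0 (T : GridTriangle) : Ed := (T.v0, T.v1)
noncomputable def GridTriangle.e1 (T : GridTriangle) : Ed := (T.v1, T.v2)
noncomputable def GridTriangle.e2 (T : GridTriangle) : Ed := (T.v2, T.v0)

noncomputable def GridTriangle.edgeFinset (T : GridTriangle) : Finset Ed := {T.e0, T.e1, T.e2}

/-- The closed region spanned by a little triangle. -/
noncomputable def GridTriangle.region (T : GridTriangle) : Set Pt :=
  convexHull ℝ {T.v0, T.v1, T.v2}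

/-- Vectors of the lattice generated by ξ₁ and ξ₂. -/
def IsLatticeVec (p : Pt) : Prop := ∃ m n : ℤ, p = (m : ℝ) • xiv 0 + (n : ℝ) • xiv 1

/-- A convex triangular grid: a finite nonempty set of little triangles of a common
translate of the triangular lattice whose union is a convex polygon.  (Its vertices,
edges, bounded faces and boundary are then those of the planar digraph formed by the
edges of the little triangles.) -/
structure ConvexGrid : Type where
  tris : Finset GridTriangle
  nonempty : tris.Nonempty
  aligned : ∀ T ∈ tris, ∀ T' ∈ tris, IsLatticeVec (T.base - T'.base)
  convex : Convex ℝ (⋃ T ∈ tris, GridTriangle.region T)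

/-- The region R(G) spanned by the grid. -/
noncomputable def ConvexGrid.region (G : ConvexGrid) : Set Pt :=
  ⋃ T ∈ G.tris, GridTriangle.region T

/-- The (directed) edge set E(G) of the grid. -/
noncomputable def ConvexGrid.edges (G : ConvexGrid) : Finset Ed :=
  G.tris.biUnion GridTriangle.edgeFinset

/-- The boundary edges B(G): edges lying in exactly one little triangle. -/
noncomputable def ConvexGrid.boundary (G : ConvexGrid) : Finset Ed :=
  G.edges.filter fun e => (G.tris.filter fun T => e ∈ T.edgeFinset).card = 1

/-- A cocirculation: `h(e)+h(e')+h(e'')=0` around each little triangle. -/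
def IsCocirculation (G : ConvexGrid) (h : Ed → ℝ) : Prop :=
  ∀ T ∈ G.tris, h T.e0 + h T.e1 + h T.e2 = 0

/-- `g` coincides with an affine function on `S`. -/
def AffineOn (g : Pt → ℝ) (S : Set Pt) : Prop :=
  ∃ φ : Pt →ᵃ[ℝ] ℝ, ∀ x ∈ S, g x = φ x

/-- A concave cocirculation: a cocirculation induced by a concave function on R(G)
which is affinely linear within each little triangle. -/
def IsConcaveCocirculation (G : ConvexGrid) (h : Ed → ℝ) : Prop :=
  IsCocirculation G h ∧
  ∃ g : Pt → ℝ, ConcaveOn ℝ G.region g ∧ (∀ T ∈ G.tris, AffineOn g T.region) ∧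
    ∀ e ∈ G.edges, h e = g e.2 - g e.1

/-- The polyhedron C(G,h₀) of concave cocirculations agreeing with h₀ on F. -/
def CC (G : ConvexGrid) (F : Set Ed) (h₀ : Ed → ℝ) : Set (Ed → ℝ) :=
  {h | IsConcaveCocirculation G h ∧ ∀ e ∈ F, h e = h₀ e}

/-- `h` is a vertex (extreme point) of the set `C` of cocirculations, regarded as a
subset of ℝ^{E(G)} (only the coordinates on the edges of `G` matter). -/
def IsVertexOf (G : ConvexGrid) (C : Set (Ed → ℝ)) (h : Ed → ℝ) : Prop :=
  h ∈ C ∧ ∀ h₁ ∈ C, ∀ h₂ ∈ C,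
    (∀ e ∈ G.edges, h e = (h₁ e + h₂ e) / 2) → ∀ e ∈ G.edges, h₁ e = h₂ e

namespace S14

/-! Discrete part -/

lemma cone_1d (φ : ℕ → ℝ) (m : ℕ) (c : ℝ)
    (h : ∀ s, s + 2 ≤ m → φ s + φ (s+2) ≤ 2 * φ (s+1))
    (b : 1 ≤ m → φ 1 ≤ φ 0 + c) : φ m ≤ φ 0 + m * c := by
  have key : ∀ s, s + 1 ≤ m → φ (s+1) - φ s ≤ c := by
    intro s
    induction s with
    | zero => intro hs; have := b hs; simp only [zero_add]; linarith
    | succ s ih =>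
      intro hs
      have h1 := ih (by omega)
      have h2 := h s (by omega)
      have e : s + 1 + 1 = s + 2 := rfl
      rw [e]; linarith
  have : ∀ s, s ≤ m → φ s ≤ φ 0 + s * c := by
    intro s
    induction s with
    | zero => intro _; simp
    | succ s ih =>
      intro hs
      have h1 := ih (by omega)
      have h2 := key s hs
      push_cast; linarith
  exact this m le_rfl

lemma cone (φ : ℕ → ℕ → ℝ) (m l : ℕ) (c₁ c₂ : ℝ)
    (mix : ∀ s t, s + 1 ≤ m → t + 1 ≤ l → φ (s+1) (t+1) + φ s t ≤ φ (s+1) t + φ s (t+1))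
    (h1 : ∀ s, s + 2 ≤ m → φ s 0 + φ (s+2) 0 ≤ 2 * φ (s+1) 0)
    (h2 : ∀ s, s + 2 ≤ l → φ 0 s + φ 0 (s+2) ≤ 2 * φ 0 (s+1))
    (b1 : 1 ≤ m → φ 1 0 ≤ φ 0 0 + c₁) (b2 : 1 ≤ l → φ 0 1 ≤ φ 0 0 + c₂) :
    φ m l ≤ φ 0 0 + m * c₁ + l * c₂ := by
  have k1 := cone_1d (fun s => φ s 0) m c₁ h1 b1
  have k2 := cone_1d (fun s => φ 0 s) l c₂ h2 b2
  have key : ∀ s, s ≤ m → ∀ t, t ≤ l → φ s t ≤ φ s 0 + φ 0 t - φ 0 0 := by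
    intro s
    induction s with
    | zero => intro _ t _; linarith
    | succ s ih =>
      intro hs t
      have step : ∀ t, t ≤ l → φ (s+1) t - φ s t ≤ φ (s+1) 0 - φ s 0 := by
        intro t
        induction t with
        | zero => intro _; exact le_rfl
        | succ t iht =>
          intro ht
          have := iht (by omega)
          have := mix s t hs ht
          linarith
      intro ht
      have := ih (by omega) t ht
      have := step t ht
      linarith
  have := key m le_rfl l le_rfl
  linarith

/-- lattice points of the hexagon -/
def H (k a b : ℤ) : Prop := 0 ≤ a ∧ a ≤ k+1 ∧ 0 ≤ b ∧ b ≤ k+1 ∧ a - b ≤ k ∧ b - a ≤ k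

structure Rh (k : ℤ) (F : ℤ → ℤ → ℝ) : Prop where
  r1 : ∀ a b, H k a b → H k (a+2) (b+1) → H k (a+1) b → H k (a+1) (b+1) →
    F a b + F (a+2) (b+1) ≤ F (a+1) b + F (a+1) (b+1)
  r2 : ∀ a b, H k a b → H k (a+1) (b+2) → H k a (b+1) → H k (a+1) (b+1) →
    F a b + F (a+1) (b+2) ≤ F a (b+1) + F (a+1) (b+1)
  r3 : ∀ a b, H k a b → H k (a+1) (b+1) → H k (a+1) b → H k a (b+1) →
    F (a+1) b + F a (b+1) ≤ F a b + F (a+1) (b+1)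

lemma Rh.swap {k : ℤ} {F : ℤ → ℤ → ℝ} (h : Rh k F) : Rh k (fun a b => F b a) where
  r1 := by
    intro a b h1 h2 h3 h4
    unfold H at *
    have := h.r2 b a (by unfold H; omega) (by unfold H; omega) (by unfold H; omega) (by unfold H; omega)
    linarith
  r2 := by
    intro a b h1 h2 h3 h4
    unfold H at *
    have := h.r1 b a (by unfold H; omega) (by unfold H; omega) (by unfold H; omega) (by unfold H; omega)
    linarith
  r3 := by
    intro a b h1 h2 h3 h4
    unfold H at *
    have := h.r3 b a (by unfold H; omega) (by unfold H; omega) (by unfold H; omega) (by unfold H; omega)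
    linarith

lemma Rh.d1 {k : ℤ} (hk : 0 < k) {F : ℤ → ℤ → ℝ} (h : Rh k F) (a b : ℤ) (h0 : H k a b)
    (h2 : H k (a+2) b) : F a b + F (a+2) b ≤ 2 * F (a+1) b := by
  unfold H at h0 h2
  by_cases hb : b + 1 ≤ k + 1
  · have e1 := h.r1 a b (by unfold H; omega) (by unfold H; omega) (by unfold H; omega) (by unfold H; omega)
    have e2 := h.r3 (a+1) b (by unfold H; omega) (by unfold H; omega) (by unfold H; omega) (by unfold H; omega)
    rw [show a+1+1 = a+2 by ring] at e2
    linarith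
  · have e1 := h.r1 a (b-1) (by unfold H; omega) (by unfold H; omega) (by unfold H; omega) (by unfold H; omega)
    have e2 := h.r3 a (b-1) (by unfold H; omega) (by unfold H; omega) (by unfold H; omega) (by unfold H; omega)
    rw [show b-1+1 = b by ring] at e1 e2
    linarith

lemma Rh.d2 {k : ℤ} (hk : 0 < k) {F : ℤ → ℤ → ℝ} (h : Rh k F) (a b : ℤ) (h0 : H k a b)
    (h2 : H k a (b+2)) : F a b + F a (b+2) ≤ 2 * F a (b+1) := by
  unfold H at h0 h2
  exact h.swap.d1 hk b a (by unfold H; omega) (by unfold H; omega)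

lemma Rh.d3 {k : ℤ} (hk : 0 < k) {F : ℤ → ℤ → ℝ} (h : Rh k F) (a b : ℤ) (h0 : H k a b)
    (h2 : H k (a+2) (b+2)) : F a b + F (a+2) (b+2) ≤ 2 * F (a+1) (b+1) := by
  unfold H at h0 h2
  by_cases hb : a - b + 1 ≤ k
  · have e1 := h.r1 a b (by unfold H; omega) (by unfold H; omega) (by unfold H; omega) (by unfold H; omega)
    have e2 := h.r2 (a+1) b (by unfold H; omega) (by unfold H; omega) (by unfold H; omega) (by unfold H; omega)
    rw [show a+1+1 = a+2 by ring] at e2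
    linarith
  · have e1 := h.r2 a b (by unfold H; omega) (by unfold H; omega) (by unfold H; omega) (by unfold H; omega)
    have e2 := h.r1 a (b+1) (by unfold H; omega) (by unfold H; omega) (by unfold H; omega) (by unfold H; omega)
    rw [show b+1+1 = b+2 by ring] at e2
    linarith

/-- support inequality at an up triangle -/
lemma Rh.up {k : ℤ} (hk : 0 < k) {F : ℤ → ℤ → ℝ} (h : Rh k F) (i j a b : ℤ) (h0 : H k i j)
    (h1 : H k (i+1) (j+1)) (h2 : H k i (j+1)) (hab : H k a b) :
    F a b ≤ F i j + ((a:ℝ) - i) * (F (i+1) (j+1) - F i (j+1))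
      + ((b:ℝ) - j) * (F i (j+1) - F i j) := by
  unfold H at h0 h1 h2 hab
  by_cases hA : 0 ≤ a - i
  · obtain ⟨A, hA'⟩ := Int.eq_ofNat_of_zero_le hA
    obtain rfl : a = i + A := by omega
    by_cases hB : 0 ≤ b - j
    · obtain ⟨B, hB'⟩ := Int.eq_ofNat_of_zero_le hB
      obtain rfl : b = j + B := by omega
      by_cases hAB : A ≤ B
      · obtain ⟨C, rfl⟩ := Nat.exists_eq_add_of_le hAB
        have := cone (fun s t => F (i + s) (j + s + t)) A C (F (i+1) (j+1) - F i j) (F i (j+1) - F i j)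
          (by
            intro s t hs ht
            have := h.r2 (i+s) (j+s+t) (by unfold H; omega) (by unfold H; omega) (by unfold H; omega) (by unfold H; omega)
            push_cast
            ring_nf at this ⊢; linarith)
          (by
            intro s hs
            have := h.d3 hk (i+s) (j+s) (by unfold H; omega) (by unfold H; omega)
            push_cast
            ring_nf at this ⊢; linarith)
          (by
            intro s hs
            have := h.d2 hk i (j+s) (by unfold H; omega) (by unfold H; omega)
            push_cast
            ring_nf at this ⊢; linarith)
          (by intro _; push_cast; ring_nf; exact le_rfl)
          (by intro _; push_cast; ring_nf; exact le_rfl)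
        push_cast at this ⊢
        ring_nf at this ⊢
        linarith
      · obtain ⟨C, rfl⟩ := Nat.exists_eq_add_of_le (not_le.1 hAB).le
        have := cone (fun s t => F (i + s + t) (j + s)) B C (F (i+1) (j+1) - F i j) (F (i+1) (j+1) - F i (j+1))
          (by
            intro s t hs ht
            have := h.r1 (i+s+t) (j+s) (by unfold H; omega) (by unfold H; omega) (by unfold H; omega) (by unfold H; omega)
            push_cast
            ring_nf at this ⊢; linarith)
          (by
            intro s hs
            have := h.d3 hk (i+s) (j+s) (by unfold H; omega) (by unfold H; omega)
            push_cast
            ring_nf at this ⊢; linarith)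
          (by
            intro s hs
            have := h.d1 hk (i+s) j (by unfold H; omega) (by unfold H; omega)
            push_cast
            ring_nf at this ⊢; linarith)
          (by intro _; push_cast; ring_nf; exact le_rfl)
          (by
            intro _
            have := h.r3 i j (by unfold H; omega) (by unfold H; omega) (by unfold H; omega) (by unfold H; omega)
            push_cast; ring_nf at this ⊢; linarith)
        push_cast at this ⊢
        ring_nf at this ⊢
        linarith
    · obtain ⟨B, hB'⟩ := Int.eq_ofNat_of_zero_le (show 0 ≤ j - b by omega)
      obtain rfl : b = j - B := by omega
      have := cone (fun s t => F (i + s) (j - t)) A B (F (i+1) (j+1) - F i (j+1)) (F i j - F i (j+1))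
          (by
            intro s t hs ht
            have := h.r3 (i+s) (j-t-1) (by unfold H; omega) (by unfold H; omega) (by unfold H; omega) (by unfold H; omega)
            push_cast
            ring_nf at this ⊢; linarith)
          (by
            intro s hs
            have := h.d1 hk (i+s) j (by unfold H; omega) (by unfold H; omega)
            push_cast
            ring_nf at this ⊢; linarith)
          (by
            intro s hs
            have := h.d2 hk i (j-s-2) (by unfold H; omega) (by unfold H; omega)
            push_cast
            ring_nf at this ⊢; linarith)
          (by
            intro _
            have := h.r3 i j (by unfold H; omega) (by unfold H; omega) (by unfold H; omega) (by unfold H; omega)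
            push_cast; ring_nf at this ⊢; linarith)
          (by
            intro _
            have := h.d2 hk i (j-1) (by unfold H; omega) (by unfold H; omega)
            push_cast; ring_nf at this ⊢; linarith)
      push_cast at this ⊢
      ring_nf at this ⊢
      linarith
  · obtain ⟨A, hA'⟩ := Int.eq_ofNat_of_zero_le (show 0 ≤ i - a by omega)
    obtain rfl : a = i - A := by omega
    by_cases hB : 0 ≤ b - j
    · obtain ⟨B, hB'⟩ := Int.eq_ofNat_of_zero_le hB
      obtain rfl : b = j + B := by omega
      have := cone (fun s t => F (i - s) (j + t)) A B (F i (j+1) - F (i+1) (j+1)) (F i (j+1) - F i j)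
          (by
            intro s t hs ht
            have := h.r3 (i-s-1) (j+t) (by unfold H; omega) (by unfold H; omega) (by unfold H; omega) (by unfold H; omega)
            push_cast
            ring_nf at this ⊢; linarith)
          (by
            intro s hs
            have := h.d1 hk (i-s-2) j (by unfold H; omega) (by unfold H; omega)
            push_cast
            ring_nf at this ⊢; linarith)
          (by
            intro s hs
            have := h.d2 hk i (j+s) (by unfold H; omega) (by unfold H; omega)
            push_cast
            ring_nf at this ⊢; linarith)
          (by
            intro _
            have := h.r1 (i-1) j (by unfold H; omega) (by unfold H; omega) (by unfold H; omega) (by unfold H; omega)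
            push_cast; ring_nf at this ⊢; linarith)
          (by intro _; push_cast; ring_nf; exact le_rfl)
      push_cast at this ⊢
      ring_nf at this ⊢
      linarith
    · obtain ⟨B, hB'⟩ := Int.eq_ofNat_of_zero_le (show 0 ≤ j - b by omega)
      obtain rfl : b = j - B := by omega
      by_cases hAB : A ≤ B
      · obtain ⟨C, rfl⟩ := Nat.exists_eq_add_of_le hAB
        have := cone (fun s t => F (i - s) (j - s - t)) A C (F i j - F (i+1) (j+1)) (F i j - F i (j+1))
          (by
            intro s t hs ht
            have := h.r2 (i-s-1) (j-s-t-2) (by unfold H; omega) (by unfold H; omega) (by unfold H; omega) (by unfold H; omega)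
            push_cast
            ring_nf at this ⊢; linarith)
          (by
            intro s hs
            have := h.d3 hk (i-s-2) (j-s-2) (by unfold H; omega) (by unfold H; omega)
            push_cast
            ring_nf at this ⊢; linarith)
          (by
            intro s hs
            have := h.d2 hk i (j-s-2) (by unfold H; omega) (by unfold H; omega)
            push_cast
            ring_nf at this ⊢; linarith)
          (by
            intro _
            have := h.d3 hk (i-1) (j-1) (by unfold H; omega) (by unfold H; omega)
            push_cast; ring_nf at this ⊢; linarith)
          (by
            intro _
            have := h.d2 hk i (j-1) (by unfold H; omega) (by unfold H; omega)
            push_cast; ring_nf at this ⊢; linarith)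
        push_cast at this ⊢
        ring_nf at this ⊢
        linarith
      · obtain ⟨C, rfl⟩ := Nat.exists_eq_add_of_le (not_le.1 hAB).le
        have := cone (fun s t => F (i - s - t) (j - s)) B C (F i j - F (i+1) (j+1)) (F i (j+1) - F (i+1) (j+1))
          (by
            intro s t hs ht
            have := h.r1 (i-s-t-2) (j-s-1) (by unfold H; omega) (by unfold H; omega) (by unfold H; omega) (by unfold H; omega)
            push_cast
            ring_nf at this ⊢; linarith)
          (by
            intro s hs
            have := h.d3 hk (i-s-2) (j-s-2) (by unfold H; omega) (by unfold H; omega)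
            push_cast
            ring_nf at this ⊢; linarith)
          (by
            intro s hs
            have := h.d1 hk (i-s-2) j (by unfold H; omega) (by unfold H; omega)
            push_cast
            ring_nf at this ⊢; linarith)
          (by
            intro _
            have := h.d3 hk (i-1) (j-1) (by unfold H; omega) (by unfold H; omega)
            push_cast; ring_nf at this ⊢; linarith)
          (by
            intro _
            have := h.r1 (i-1) j (by unfold H; omega) (by unfold H; omega) (by unfold H; omega) (by unfold H; omega)
            push_cast; ring_nf at this ⊢; linarith)
        push_cast at this ⊢
        ring_nf at this ⊢
        linarith

lemma Rh.down {k : ℤ} (hk : 0 < k) {F : ℤ → ℤ → ℝ} (h : Rh k F) (i j a b : ℤ) (h0 : H k i j)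
    (h1 : H k (i+1) (j+1)) (h2 : H k (i+1) j) (hab : H k a b) :
    F a b ≤ F i j + ((a:ℝ) - i) * (F (i+1) j - F i j)
      + ((b:ℝ) - j) * (F (i+1) (j+1) - F (i+1) j) := by
  unfold H at h0 h1 h2 hab
  have := h.swap.up hk j i b a (by unfold H; omega) (by unfold H; omega) (by unfold H; omega) (by unfold H; omega)
  linarith

end S14
namespace S14

/-! Geometry -/

def V (a b : ℝ) : Pt := ((a + b) / 2, Real.sqrt 3 / 2 * (b - a))

def X : Pt →ₗ[ℝ] ℝ := LinearMap.fst ℝ ℝ ℝ - (1 / Real.sqrt 3) • LinearMap.snd ℝ ℝ ℝ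
def Y : Pt →ₗ[ℝ] ℝ := LinearMap.fst ℝ ℝ ℝ + (1 / Real.sqrt 3) • LinearMap.snd ℝ ℝ ℝ

lemma s3 : Real.sqrt 3 ≠ 0 := by positivity

@[simp] lemma X_V (a b : ℝ) : X (V a b) = a := by
  have := s3
  simp [X, V]; field_simp; ring

@[simp] lemma Y_V (a b : ℝ) : Y (V a b) = b := by
  have := s3
  simp [Y, V]; field_simp; ring

lemma V_XY (p : Pt) : V (X p) (Y p) = p := by
  have := s3
  ext
  · simp [X, Y, V]
  · simp [X, Y, V]; field_simp; ring

lemma ext_XY {p q : Pt} (h1 : X p = X q) (h2 : Y p = Y q) : p = q := by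
  rw [← V_XY p, ← V_XY q, h1, h2]

lemma X_xi0 : X (xiv 0) = 1 := by simp [X, xiv]
lemma Y_xi0 : Y (xiv 0) = 1 := by simp [Y, xiv]
lemma X_xi1 : X (xiv 1) = -1 := by
  have := s3
  simp [X, xiv]; field_simp; norm_num
lemma Y_xi1 : Y (xiv 1) = 0 := by
  have := s3
  simp [Y, xiv]; field_simp; norm_num
lemma X_xi2 : X (xiv 2) = 0 := by
  have := s3
  simp [X, xiv]; field_simp; norm_num
lemma Y_xi2 : Y (xiv 2) = -1 := by
  have := s3
  simp [Y, xiv]; field_simp; norm_num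

def tri (i j : ℤ) (u : Bool) : GridTriangle := ⟨V i j, u⟩

lemma tri_v0 (i j : ℤ) (u : Bool) : (tri i j u).v0 = V i j := rfl
lemma tri_v1 (i j : ℤ) (u : Bool) : (tri i j u).v1 = V (i+1 : ℤ) (j+1 : ℤ) := by
  apply ext_XY <;> simp [GridTriangle.v1, tri, X_xi0, Y_xi0]
lemma tri_v2t (i j : ℤ) : (tri i j true).v2 = V i (j+1 : ℤ) := by
  apply ext_XY <;> simp [GridTriangle.v2, tri, X_xi0, Y_xi0, X_xi1, Y_xi1]
lemma tri_v2f (i j : ℤ) : (tri i j false).v2 = V (i+1 : ℤ) j := by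
  apply ext_XY <;> simp [GridTriangle.v2, tri, X_xi0, Y_xi0, X_xi2, Y_xi2]

lemma V_inj {a b c d : ℤ} (h : V a b = V c d) : a = c ∧ b = d := by
  have h1 := congrArg X h
  have h2 := congrArg Y h
  simp at h1 h2
  exact ⟨h1, h2⟩

lemma V_iff {a b c d : ℤ} : V a b = V c d ↔ a = c ∧ b = d :=
  ⟨V_inj, by rintro ⟨rfl, rfl⟩; rfl⟩

lemma tri_inj {i j i' j' : ℤ} {u u' : Bool} : tri i j u = tri i' j' u' ↔ i = i' ∧ j = j' ∧ u = u' := by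
  simp only [tri, GridTriangle.mk.injEq, V_iff, and_assoc]

lemma mem3 {E : Type*} [AddCommGroup E] [Module ℝ E] (a b c p : E) :
    p ∈ convexHull ℝ ({a, b, c} : Set E) ↔ ∃ α β γ : ℝ, 0 ≤ α ∧ 0 ≤ β ∧ 0 ≤ γ ∧ α + β + γ = 1 ∧
      p = α • a + β • b + γ • c := by
  constructor
  · have hc : Convex ℝ {p : E | ∃ α β γ : ℝ, 0 ≤ α ∧ 0 ≤ β ∧ 0 ≤ γ ∧ α + β + γ = 1 ∧
      p = α • a + β • b + γ • c} := by
      rintro x ⟨α, β, γ, h1, h2, h3, h4, rfl⟩ y ⟨α', β', γ', h1', h2', h3', h4', rfl⟩ s t hs ht hst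
      refine ⟨s * α + t * α', s * β + t * β', s * γ + t * γ', by positivity, by positivity,
        by positivity, ?_, ?_⟩
      · linear_combination s * h4 + t * h4' + hst
      · module
    intro hp
    refine convexHull_min ?_ hc hp
    rintro x (rfl | rfl | rfl)
    · exact ⟨1, 0, 0, by norm_num, by norm_num, by norm_num, by norm_num, by simp⟩
    · exact ⟨0, 1, 0, by norm_num, by norm_num, by norm_num, by norm_num, by simp⟩
    · exact ⟨0, 0, 1, by norm_num, by norm_num, by norm_num, by norm_num, by simp⟩
  · rintro ⟨α, β, γ, h1, h2, h3, h4, rfl⟩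
    have := (convex_convexHull ℝ ({a, b, c} : Set E)).sum_mem (t := Finset.univ)
      (w := ![α, β, γ]) (z := ![a, b, c])
      (by intro i _; fin_cases i <;> simpa) (by simp [Fin.sum_univ_three, h4])
      (by intro i _; fin_cases i <;> exact subset_convexHull ℝ _ (by simp))
    simpa [Fin.sum_univ_three] using this

lemma region_up (i j : ℤ) (p : Pt) : p ∈ (tri i j true).region ↔
    (i:ℝ) ≤ X p ∧ X p - i ≤ Y p - j ∧ Y p - j ≤ 1 := by
  unfold GridTriangle.region
  rw [mem3, tri_v0, tri_v1, tri_v2t]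
  constructor
  · rintro ⟨α, β, γ, h1, h2, h3, h4, rfl⟩
    obtain rfl : α = 1 - β - γ := by linarith
    simp only [map_add, map_smul, X_V, Y_V, smul_eq_mul]
    push_cast
    refine ⟨by linarith, by linarith, by linarith⟩
  · rintro ⟨h1, h2, h3⟩
    refine ⟨1 - (Y p - j), X p - i, (Y p - j) - (X p - i), by linarith, by linarith, by linarith,
      by ring, ?_⟩
    apply ext_XY
    · simp only [map_add, map_smul, X_V, Y_V, smul_eq_mul]; push_cast; ring
    · simp only [map_add, map_smul, X_V, Y_V, smul_eq_mul]; push_cast; ring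

lemma region_down (i j : ℤ) (p : Pt) : p ∈ (tri i j false).region ↔
    (j:ℝ) ≤ Y p ∧ Y p - j ≤ X p - i ∧ X p - i ≤ 1 := by
  unfold GridTriangle.region
  rw [mem3, tri_v0, tri_v1, tri_v2f]
  constructor
  · rintro ⟨α, β, γ, h1, h2, h3, h4, rfl⟩
    obtain rfl : α = 1 - β - γ := by linarith
    simp only [map_add, map_smul, X_V, Y_V, smul_eq_mul]
    push_cast
    refine ⟨by linarith, by linarith, by linarith⟩
  · rintro ⟨h1, h2, h3⟩
    refine ⟨1 - (X p - i), Y p - j, (X p - i) - (Y p - j), by linarith, by linarith, by linarith,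
      by ring, ?_⟩
    apply ext_XY
    · simp only [map_add, map_smul, X_V, Y_V, smul_eq_mul]; push_cast; ring
    · simp only [map_add, map_smul, X_V, Y_V, smul_eq_mul]; push_cast; ring

/-- the real hexagon -/
def Hx (k : ℝ) : Set Pt :=
  {p | 0 ≤ X p ∧ X p ≤ k + 1 ∧ 0 ≤ Y p ∧ Y p ≤ k + 1 ∧ X p - Y p ≤ k ∧ Y p - X p ≤ k}

lemma Hx_convex (k : ℝ) : Convex ℝ (Hx k) := by
  rintro x ⟨h1, h2, h3, h4, h5, h6⟩ y ⟨g1, g2, g3, g4, g5, g6⟩ s t hs ht hst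
  obtain rfl : s = 1 - t := by linarith
  simp only [Hx, Set.mem_setOf_eq, map_add, map_smul, smul_eq_mul]
  refine ⟨?_, ?_, ?_, ?_, ?_, ?_⟩ <;> nlinarith

def Ix (k : ℤ) : Finset (ℤ × ℤ × Bool) :=
  ((Finset.Icc 0 k) ×ˢ (Finset.Icc 0 k) ×ˢ Finset.univ).filter
    (fun t => t ≠ (0, k, true) ∧ t ≠ (k, 0, false))

def Tr (k : ℤ) : Finset GridTriangle := (Ix k).image (fun t => tri t.1 t.2.1 t.2.2)

lemma mem_Tr (k : ℤ) (T : GridTriangle) : T ∈ Tr k ↔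
    (∃ i j, 0 ≤ i ∧ i ≤ k ∧ 0 ≤ j ∧ j ≤ k ∧ ¬ (i = 0 ∧ j = k) ∧ T = tri i j true) ∨
    (∃ i j, 0 ≤ i ∧ i ≤ k ∧ 0 ≤ j ∧ j ≤ k ∧ ¬ (i = k ∧ j = 0) ∧ T = tri i j false) := by
  simp only [Tr, Ix, Finset.mem_image, Finset.mem_filter, Finset.mem_product, Finset.mem_Icc,
    Finset.mem_univ, and_true, Prod.exists]
  constructor
  · rintro ⟨i, j, u, ⟨h1, h2, h3⟩, rfl⟩
    cases u
    · right; refine ⟨i, j, by omega, by omega, by omega, by omega, ?_, rfl⟩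
      rintro ⟨rfl, rfl⟩; simp at h3
    · left; refine ⟨i, j, by omega, by omega, by omega, by omega, ?_, rfl⟩
      rintro ⟨rfl, rfl⟩; simp at h2
  · rintro (⟨i, j, h1, h2, h3, h4, h5, rfl⟩ | ⟨i, j, h1, h2, h3, h4, h5, rfl⟩)
    · exact ⟨i, j, true, ⟨by omega, by simp; omega, by simp⟩, rfl⟩
    · exact ⟨i, j, false, ⟨by omega, by simp, by simp; omega⟩, rfl⟩

lemma exists_cell (k : ℤ) (hk : 0 < k) (x : ℝ) (h0 : 0 ≤ x) (h1 : x ≤ k + 1) :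
    ∃ i : ℤ, 0 ≤ i ∧ i ≤ k ∧ (i:ℝ) ≤ x ∧ x - i ≤ 1 := by
  by_cases h : x < k + 1
  · refine ⟨⌊x⌋, Int.floor_nonneg.2 h0, ?_, Int.floor_le x, ?_⟩
    · have : ⌊x⌋ < k + 1 := Int.floor_lt.2 (by push_cast; exact h)
      omega
    · have := Int.lt_floor_add_one x; linarith
  · exact ⟨k, by omega, le_rfl, by linarith, by linarith⟩

lemma union_eq (k : ℤ) (hk : 0 < k) : (⋃ T ∈ Tr k, GridTriangle.region T) = Hx k := by
  ext p
  simp only [Set.mem_iUnion, exists_prop]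
  have c1 : (0:ℝ) < k := by exact_mod_cast hk
  constructor
  · rintro ⟨T, hT, hp⟩
    rcases (mem_Tr k T).1 hT with ⟨i, j, h1, h2, h3, h4, h5, rfl⟩ | ⟨i, j, h1, h2, h3, h4, h5, rfl⟩
    · rw [region_up] at hp
      obtain ⟨q1, q2, q3⟩ := hp
      have e1 : (0:ℝ) ≤ i := by exact_mod_cast h1
      have e2 : (i:ℝ) ≤ k := by exact_mod_cast h2
      have e3 : (0:ℝ) ≤ j := by exact_mod_cast h3
      have e4 : (j:ℝ) ≤ k := by exact_mod_cast h4
      have e5 : (j:ℝ) + 1 - i ≤ k := by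
        have : j + 1 - i ≤ k := by omega
        exact_mod_cast this
      exact ⟨by linarith, by linarith, by linarith, by linarith, by linarith, by linarith⟩
    · rw [region_down] at hp
      obtain ⟨q1, q2, q3⟩ := hp
      have e1 : (0:ℝ) ≤ i := by exact_mod_cast h1
      have e2 : (i:ℝ) ≤ k := by exact_mod_cast h2
      have e3 : (0:ℝ) ≤ j := by exact_mod_cast h3
      have e4 : (j:ℝ) ≤ k := by exact_mod_cast h4
      have e5 : (i:ℝ) + 1 - j ≤ k := by
        have : i + 1 - j ≤ k := by omega
        exact_mod_cast this
      exact ⟨by linarith, by linarith, by linarith, by linarith, by linarith, by linarith⟩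
  · rintro ⟨h1, h2, h3, h4, h5, h6⟩
    obtain ⟨i, a1, a2, a3, a4⟩ := exists_cell k hk (X p) h1 h2
    obtain ⟨j, b1, b2, b3, b4⟩ := exists_cell k hk (Y p) h3 h4
    by_cases hu : X p - i < Y p - j
    · refine ⟨tri i j true, (mem_Tr k _).2 (Or.inl ⟨i, j, a1, a2, b1, b2, ?_, rfl⟩), ?_⟩
      · rintro ⟨rfl, rfl⟩; push_cast at *; linarith
      · rw [region_up]; exact ⟨a3, hu.le, b4⟩
    · by_cases hc : i = k ∧ j = 0
      · obtain ⟨rfl, rfl⟩ := hc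
        refine ⟨tri i 0 true, (mem_Tr i _).2 (Or.inl ⟨i, 0, a1, a2, b1, b2, by omega, rfl⟩), ?_⟩
        rw [region_up]
        push_cast at *
        exact ⟨a3, by linarith, b4⟩
      · refine ⟨tri i j false, (mem_Tr k _).2 (Or.inr ⟨i, j, a1, a2, b1, b2, hc, rfl⟩), ?_⟩
        rw [region_down]; exact ⟨b3, by linarith, a4⟩

def Gr (k : ℤ) (hk : 0 < k) : ConvexGrid where
  tris := Tr k
  nonempty := ⟨tri k 0 true, (mem_Tr k _).2 (Or.inl ⟨k, 0, by omega, le_rfl, le_rfl, by omega, by omega, rfl⟩)⟩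
  aligned := by
    have key : ∀ T ∈ Tr k, ∃ i j : ℤ, T.base = V i j := by
      intro T hT
      rcases (mem_Tr k T).1 hT with ⟨i, j, h1, h2, h3, h4, h5, rfl⟩ | ⟨i, j, h1, h2, h3, h4, h5, rfl⟩
      · exact ⟨i, j, rfl⟩
      · exact ⟨i, j, rfl⟩
    intro T hT T' hT'
    obtain ⟨i, j, h⟩ := key T hT
    obtain ⟨i', j', h'⟩ := key T' hT'
    refine ⟨j - j', (j - j') - (i - i'), ?_⟩
    rw [h, h']
    apply ext_XY <;> simp [X_xi0, Y_xi0, X_xi1, Y_xi1]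
  convex := by rw [union_eq k hk]; exact Hx_convex k

lemma Gr_region (k : ℤ) (hk : 0 < k) : (Gr k hk).region = Hx k := union_eq k hk

lemma seg_mem {C : Set Pt} (hC : Convex ℝ C) {a b c d : ℝ} (h1 : V a b ∈ C) (h2 : V c d ∈ C)
    (t : ℝ) (ht : 0 ≤ t) (ht' : t ≤ 1) {x y : ℝ} (hx : x = (1-t) * a + t * c) (hy : y = (1-t)*b + t * d) :
    V x y ∈ C := by
  have := hC h1 h2 (show 0 ≤ 1 - t by linarith) ht (by ring)
  convert this using 1
  apply ext_XY <;> simp [hx, hy]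

lemma Hx_eq (k : ℕ) (hk : 0 < k) : Hx k = convexHull ℝ
        ({V k 0, V k 0 + xiv 0,
          V k 0 + xiv 0 - (k : ℝ) • xiv 2,
          V k 0 + xiv 0 - (k : ℝ) • xiv 2 + (k : ℝ) • xiv 1,
          V k 0 - (k : ℝ) • xiv 2 + (k : ℝ) • xiv 1,
          V k 0 + (k : ℝ) • xiv 1} : Set Pt) := by
  have k0 : (0:ℝ) < k := by exact_mod_cast hk
  have k1 : (1:ℝ) ≤ k := by exact_mod_cast hk
  have e1 : V k 0 + xiv 0 = V (k+1) 1 := by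
    apply ext_XY <;> simp [X_xi0, Y_xi0]
  have e2 : V k 0 + xiv 0 - (k : ℝ) • xiv 2 = V (k+1) (k+1) := by
    apply ext_XY <;> simp [X_xi0, Y_xi0, X_xi2, Y_xi2]; ring
  have e3 : V k 0 + xiv 0 - (k : ℝ) • xiv 2 + (k : ℝ) • xiv 1 = V 1 (k+1) := by
    rw [e2]; apply ext_XY <;> simp [X_xi1, Y_xi1]
  have e4 : V k 0 - (k : ℝ) • xiv 2 + (k : ℝ) • xiv 1 = V 0 k := by
    apply ext_XY <;> simp [X_xi1, Y_xi1, X_xi2, Y_xi2]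
  have e5 : V k 0 + (k : ℝ) • xiv 1 = V 0 0 := by
    apply ext_XY <;> simp [X_xi1, Y_xi1]
  rw [e3, e2, e1, e4, e5]
  apply Set.Subset.antisymm
  · rintro p ⟨h1, h2, h3, h4, h5, h6⟩
    set C := convexHull ℝ ({V k 0, V (k+1) 1, V (k+1) (k+1), V 1 (k+1), V 0 k, V 0 0} : Set Pt) with hCd
    have hC : Convex ℝ C := convex_convexHull _ _
    have m1 : V k 0 ∈ C := subset_convexHull ℝ _ (by simp)
    have m2 : V (k+1) 1 ∈ C := subset_convexHull ℝ _ (by simp)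
    have m3 : V (k+1) (k+1) ∈ C := subset_convexHull ℝ _ (by simp)
    have m4 : V 1 (k+1) ∈ C := subset_convexHull ℝ _ (by simp)
    have m5 : V 0 k ∈ C := subset_convexHull ℝ _ (by simp)
    have m6 : V 0 0 ∈ C := subset_convexHull ℝ _ (by simp)
    rw [← V_XY p]
    by_cases hw : 0 ≤ X p - Y p
    · set w := X p - Y p with hwd
      have q1 : V w 0 ∈ C := seg_mem hC m6 m1 (w / k) (by positivity)
        (by rw [div_le_one k0]; exact h5) (by field_simp; ring) (by ring)
      have q2 : V (k+1) (k+1-w) ∈ C := seg_mem hC m3 m2 (w / k) (by positivity)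
        (by rw [div_le_one k0]; exact h5) (by ring) (by field_simp; ring)
      have hp : 0 < (k:ℝ) + 1 - w := by linarith
      refine seg_mem hC q1 q2 (Y p / (k+1-w)) (by positivity) ?_ ?_ ?_
      · rw [div_le_one hp]; linarith
      · field_simp; rw [hwd]; ring
      · field_simp; ring
    · set w := Y p - X p with hwd
      have hw0 : 0 ≤ w := by linarith
      have q1 : V 0 w ∈ C := seg_mem hC m6 m5 (w / k) (by positivity)
        (by rw [div_le_one k0]; exact h6) (by ring) (by field_simp; ring)
      have q2 : V (k+1-w) (k+1) ∈ C := seg_mem hC m3 m4 (w / k) (by positivity)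
        (by rw [div_le_one k0]; exact h6) (by field_simp; ring) (by ring)
      have hp : 0 < (k:ℝ) + 1 - w := by linarith
      refine seg_mem hC q1 q2 (X p / (k+1-w)) (by positivity) ?_ ?_ ?_
      · rw [div_le_one hp]; linarith
      · field_simp; ring
      · field_simp; rw [hwd]; ring
  · refine convexHull_min ?_ (Hx_convex _)
    rintro x (rfl | rfl | rfl | rfl | rfl | rfl) <;>
    · simp only [Hx, Set.mem_setOf_eq, X_V, Y_V]
      refine ⟨?_, ?_, ?_, ?_, ?_, ?_⟩ <;> linarith

end S14
namespace S14

def Dir (a b c d : ℤ) : Prop :=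
  (c = a + 1 ∧ d = b + 1) ∨ (c = a - 1 ∧ d = b) ∨ (c = a ∧ d = b - 1)

def Per (k a b : ℤ) : Prop := H k a b ∧ (a = 0 ∨ a = k + 1 ∨ b = 0 ∨ b = k + 1)

/-- every rhombus on which `F` is affine gives an equation for `d`. -/
structure Tight (k : ℤ) (F d : ℤ → ℤ → ℝ) : Prop where
  r1 : ∀ a b, H k a b → H k (a+2) (b+1) → H k (a+1) b → H k (a+1) (b+1) →
    F a b + F (a+2) (b+1) = F (a+1) b + F (a+1) (b+1) →
    d a b + d (a+2) (b+1) = d (a+1) b + d (a+1) (b+1)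
  r2 : ∀ a b, H k a b → H k (a+1) (b+2) → H k a (b+1) → H k (a+1) (b+1) →
    F a b + F (a+1) (b+2) = F a (b+1) + F (a+1) (b+1) →
    d a b + d (a+1) (b+2) = d a (b+1) + d (a+1) (b+1)
  r3 : ∀ a b, H k a b → H k (a+1) (b+1) → H k (a+1) b → H k a (b+1) →
    F (a+1) b + F a (b+1) = F a b + F (a+1) (b+1) →
    d (a+1) b + d a (b+1) = d a b + d (a+1) (b+1)

lemma ef_t (i j : ℤ) (e : Ed) : e ∈ (tri i j true).edgeFinset ↔
    e = (V i j, V (i+1:ℤ) (j+1:ℤ)) ∨ e = (V (i+1:ℤ) (j+1:ℤ), V i (j+1:ℤ)) ∨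
    e = (V i (j+1:ℤ), V i j) := by
  simp only [GridTriangle.edgeFinset, GridTriangle.e0, GridTriangle.e1, GridTriangle.e2, tri_v0,
    tri_v1, tri_v2t, Finset.mem_insert, Finset.mem_singleton]

lemma ef_f (i j : ℤ) (e : Ed) : e ∈ (tri i j false).edgeFinset ↔
    e = (V i j, V (i+1:ℤ) (j+1:ℤ)) ∨ e = (V (i+1:ℤ) (j+1:ℤ), V (i+1:ℤ) j) ∨
    e = (V (i+1:ℤ) j, V i j) := by
  simp only [GridTriangle.edgeFinset, GridTriangle.e0, GridTriangle.e1, GridTriangle.e2, tri_v0,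
    tri_v1, tri_v2f, Finset.mem_insert, Finset.mem_singleton]

lemma up_mem {k i j : ℤ} (h1 : 0 ≤ i) (h2 : i ≤ k) (h3 : 0 ≤ j) (h4 : j ≤ k)
    (h5 : ¬ (i = 0 ∧ j = k)) : tri i j true ∈ Tr k :=
  (mem_Tr k _).2 (Or.inl ⟨i, j, h1, h2, h3, h4, h5, rfl⟩)

lemma dn_mem {k i j : ℤ} (h1 : 0 ≤ i) (h2 : i ≤ k) (h3 : 0 ≤ j) (h4 : j ≤ k)
    (h5 : ¬ (i = k ∧ j = 0)) : tri i j false ∈ Tr k :=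
  (mem_Tr k _).2 (Or.inr ⟨i, j, h1, h2, h3, h4, h5, rfl⟩)

lemma mem_edges {k : ℤ} (hk : 0 < k) (e : Ed) : e ∈ (Gr k hk).edges ↔
    ∃ T ∈ Tr k, e ∈ T.edgeFinset := by
  simp [ConvexGrid.edges, Gr]

lemma edge_of {k : ℤ} (hk : 0 < k) {e : Ed} (he : e ∈ (Gr k hk).edges) :
    ∃ a b c d : ℤ, H k a b ∧ H k c d ∧ Dir a b c d ∧ e = (V a b, V c d) := by
  obtain ⟨T, hT, he⟩ := (mem_edges hk e).1 he
  rcases (mem_Tr k T).1 hT with ⟨i, j, h1, h2, h3, h4, h5, rfl⟩ | ⟨i, j, h1, h2, h3, h4, h5, rfl⟩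
  · rw [ef_t] at he
    rcases he with he | he | he
    · exact ⟨_, _, _, _, by unfold H; omega, by unfold H; omega, by unfold Dir; omega, he⟩
    · exact ⟨_, _, _, _, by unfold H; omega, by unfold H; omega, by unfold Dir; omega, he⟩
    · exact ⟨_, _, _, _, by unfold H; omega, by unfold H; omega, by unfold Dir; omega, he⟩
  · rw [ef_f] at he
    rcases he with he | he | he
    · exact ⟨_, _, _, _, by unfold H; omega, by unfold H; omega, by unfold Dir; omega, he⟩
    · exact ⟨_, _, _, _, by unfold H; omega, by unfold H; omega, by unfold Dir; omega, he⟩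
    · exact ⟨_, _, _, _, by unfold H; omega, by unfold H; omega, by unfold Dir; omega, he⟩

/-- the two candidate triangles of an edge -/
lemma edge_tris {a b c d : ℤ} (h : Dir a b c d) :
    ∃ i j i' j' : ℤ, (V a b, V c d) ∈ (tri i j true).edgeFinset ∧
      (V a b, V c d) ∈ (tri i' j' false).edgeFinset ∧
      ((i = a ∧ j = b ∧ i' = a ∧ j' = b ∧ c = a + 1 ∧ d = b + 1) ∨
       (i = a - 1 ∧ j = b - 1 ∧ i' = a - 1 ∧ j' = b ∧ c = a - 1 ∧ d = b) ∨
       (i = a ∧ j = b - 1 ∧ i' = a - 1 ∧ j' = b - 1 ∧ c = a ∧ d = b - 1)) := by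
  rcases h with ⟨rfl, rfl⟩ | ⟨rfl, rfl⟩ | ⟨rfl, rfl⟩
  · exact ⟨a, b, a, b, by rw [ef_t]; simp, by rw [ef_f]; simp, by omega⟩
  · exact ⟨a - 1, d - 1, a - 1, d, by rw [ef_t]; simp, by rw [ef_f]; simp, by omega⟩
  · exact ⟨c, b - 1, c - 1, b - 1, by rw [ef_t]; simp, by rw [ef_f]; simp, by omega⟩

lemma edge_mem {k : ℤ} (hk : 0 < k) {a b c d : ℤ} (h1 : H k a b) (h2 : H k c d)
    (h : Dir a b c d) : (V a b, V c d) ∈ (Gr k hk).edges := by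
  obtain ⟨i, j, i', j', e1, e2, h3⟩ := edge_tris h
  rw [mem_edges]
  unfold H at h1 h2
  by_cases hc : 0 ≤ i ∧ i ≤ k ∧ 0 ≤ j ∧ j ≤ k ∧ ¬ (i = 0 ∧ j = k)
  · obtain ⟨q1, q2, q3, q4, q5⟩ := hc
    exact ⟨_, up_mem q1 q2 q3 q4 q5, e1⟩
  · exact ⟨_, dn_mem (by omega) (by omega) (by omega) (by omega) (by omega), e2⟩

lemma bd_per {k : ℤ} (hk : 0 < k) {a b c d : ℤ} (h1 : H k a b) (h2 : H k c d)
    (h : Dir a b c d) (hb : (V a b, V c d) ∈ (Gr k hk).boundary) : Per k a b ∧ Per k c d := by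
  by_contra hcon
  obtain ⟨i, j, i', j', e1, e2, h3⟩ := edge_tris h
  have hcon' : ¬ ((a = 0 ∨ a = k + 1 ∨ b = 0 ∨ b = k + 1) ∧
      (c = 0 ∨ c = k + 1 ∨ d = 0 ∨ d = k + 1)) := fun hh => hcon ⟨⟨h1, hh.1⟩, ⟨h2, hh.2⟩⟩
  unfold H at h1 h2
  have m1 : tri i j true ∈ Tr k := up_mem (by omega) (by omega) (by omega) (by omega) (by omega)
  have m2 : tri i' j' false ∈ Tr k := dn_mem (by omega) (by omega) (by omega) (by omega) (by omega)
  simp only [ConvexGrid.boundary, Finset.mem_filter] at hb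
  obtain ⟨T, hT⟩ := Finset.card_eq_one.1 hb.2
  have n1 : tri i j true ∈ ({T} : Finset GridTriangle) := by
    rw [← hT, Finset.mem_filter]; exact ⟨m1, e1⟩
  have n2 : tri i' j' false ∈ ({T} : Finset GridTriangle) := by
    rw [← hT, Finset.mem_filter]; exact ⟨m2, e2⟩
  rw [Finset.mem_singleton] at n1 n2
  have := (tri_inj.1 (n1.trans n2.symm)).2.2
  simp at this

lemma bd_of {k : ℤ} (hk : 0 < k) {e : Ed} (T : GridTriangle) (hT : T ∈ Tr k)
    (he : e ∈ T.edgeFinset) (hu : ∀ T' ∈ Tr k, e ∈ T'.edgeFinset → T' = T) :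
    e ∈ (Gr k hk).boundary := by
  simp only [ConvexGrid.boundary, Finset.mem_filter]
  refine ⟨(mem_edges hk e).2 ⟨T, hT, he⟩, Finset.card_eq_one.2 ⟨T, ?_⟩⟩
  ext T'
  rw [Finset.mem_filter, Finset.mem_singleton]
  constructor
  · rintro ⟨a, b⟩; exact hu T' a b
  · rintro rfl; exact ⟨hT, he⟩

/-- sides -/
lemma bd_side {k : ℤ} (hk : 0 < k) {a b c d : ℤ} (h1 : H k a b) (h2 : H k c d)
    (h : Dir a b c d) (hs : (b = 0 ∧ d = 0) ∨ (b = k + 1 ∧ d = k + 1) ∨ (a = 0 ∧ c = 0) ∨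
      (a = k + 1 ∧ c = k + 1) ∨ (a = k ∧ b = 0 ∧ c = k + 1 ∧ d = 1)) :
    (V a b, V c d) ∈ (Gr k hk).boundary := by
  obtain ⟨i, j, i', j', e1, e2, h3⟩ := edge_tris h
  unfold H at h1 h2
  by_cases hc : 0 ≤ i ∧ i ≤ k ∧ 0 ≤ j ∧ j ≤ k ∧ ¬ (i = 0 ∧ j = k)
  · obtain ⟨q1, q2, q3, q4, q5⟩ := hc
    refine bd_of hk _ (up_mem q1 q2 q3 q4 q5) e1 ?_
    intro T hT he
    rcases (mem_Tr k T).1 hT with ⟨x, y, g1, g2, g3, g4, g5, rfl⟩ | ⟨x, y, g1, g2, g3, g4, g5, rfl⟩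
    · rw [ef_t] at he
      simp only [Prod.mk.injEq, V_iff] at he
      rw [tri_inj]
      refine ⟨by omega, by omega, rfl⟩
    · rw [ef_f] at he
      simp only [Prod.mk.injEq, V_iff] at he
      exfalso
      omega
  · refine bd_of hk _ (dn_mem (i := i') (j := j') (by omega) (by omega) (by omega) (by omega) (by omega)) e2 ?_
    intro T hT he
    rcases (mem_Tr k T).1 hT with ⟨x, y, g1, g2, g3, g4, g5, rfl⟩ | ⟨x, y, g1, g2, g3, g4, g5, rfl⟩
    · rw [ef_t] at he
      simp only [Prod.mk.injEq, V_iff] at he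
      exfalso
      omega
    · rw [ef_f] at he
      simp only [Prod.mk.injEq, V_iff] at he
      rw [tri_inj]
      refine ⟨by omega, by omega, rfl⟩

/-- local affine functions -/
def lf (F : ℤ → ℤ → ℝ) (t : ℤ × ℤ × Bool) (p : Pt) : ℝ :=
  if t.2.2 then F t.1 t.2.1 + (X p - t.1) * (F (t.1+1) (t.2.1+1) - F t.1 (t.2.1+1)) +
      (Y p - t.2.1) * (F t.1 (t.2.1+1) - F t.1 t.2.1)
  else F t.1 t.2.1 + (X p - t.1) * (F (t.1+1) t.2.1 - F t.1 t.2.1) +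
      (Y p - t.2.1) * (F (t.1+1) (t.2.1+1) - F (t.1+1) t.2.1)

lemma lf_aff (F : ℤ → ℤ → ℝ) (t : ℤ × ℤ × Bool) : ∃ φ : Pt →ᵃ[ℝ] ℝ, ∀ p, lf F t p = φ p := by
  obtain ⟨α, β, c, h⟩ : ∃ α β c : ℝ, ∀ p, lf F t p = α * X p + β * Y p + c := by
    obtain ⟨i, j, u⟩ := t
    cases u
    · refine ⟨F (i+1) j - F i j, F (i+1) (j+1) - F (i+1) j, F i j - i * (F (i+1) j - F i j) -
        j * (F (i+1) (j+1) - F (i+1) j), fun p => ?_⟩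
      simp [lf]; ring
    · refine ⟨F (i+1) (j+1) - F i (j+1), F i (j+1) - F i j, F i j - i * (F (i+1) (j+1) - F i (j+1)) -
        j * (F i (j+1) - F i j), fun p => ?_⟩
      simp [lf]; ring
  refine ⟨(α • X + β • Y).toAffineMap + AffineMap.const ℝ Pt c, fun p => ?_⟩
  rw [h]
  simp

lemma lf_comb2 (F : ℤ → ℤ → ℝ) (t : ℤ × ℤ × Bool) (p q : Pt) (s u : ℝ) (h : s + u = 1) :
    lf F t (s • p + u • q) = s * lf F t p + u * lf F t q := by
  obtain rfl : s = 1 - u := by linarith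
  obtain ⟨i, j, v⟩ := t
  cases v <;> simp [lf] <;> ring

lemma lf_comb3 (F : ℤ → ℤ → ℝ) (t : ℤ × ℤ × Bool) (p q r : Pt) (s u w : ℝ) (h : s + u + w = 1) :
    lf F t (s • p + u • q + w • r) = s * lf F t p + u * lf F t q + w * lf F t r := by
  obtain rfl : s = 1 - u - w := by linarith
  obtain ⟨i, j, v⟩ := t
  cases v <;> simp [lf] <;> ring

lemma Ix_mem {k i j : ℤ} {u : Bool} (h : (i, j, u) ∈ Ix k) : 0 ≤ i ∧ i ≤ k ∧ 0 ≤ j ∧ j ≤ k ∧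
    (u = true → ¬ (i = 0 ∧ j = k)) ∧ (u = false → ¬ (i = k ∧ j = 0)) := by
  simp only [Ix, Finset.mem_filter, Finset.mem_product, Finset.mem_Icc,
    Finset.mem_univ, and_true] at h
  obtain ⟨h1, h2, h3⟩ := h
  refine ⟨by omega, by omega, by omega, by omega, ?_, ?_⟩
  · rintro rfl ⟨rfl, rfl⟩; simp at h2
  · rintro rfl ⟨rfl, rfl⟩; simp at h3

lemma Ix_of {k i j : ℤ} {u : Bool} (h : tri i j u ∈ Tr k) : (i, j, u) ∈ Ix k := by
  simp only [Tr, Finset.mem_image] at h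
  obtain ⟨⟨i', j', u'⟩, h1, h2⟩ := h
  obtain ⟨rfl, rfl, rfl⟩ := tri_inj.1 h2
  exact h1

lemma lf_ge {k : ℤ} (hk : 0 < k) {F : ℤ → ℤ → ℝ} (h : Rh k F) (t : ℤ × ℤ × Bool) (ht : t ∈ Ix k)
    {a b : ℤ} (hab : H k a b) : F a b ≤ lf F t (V a b) := by
  obtain ⟨i, j, u⟩ := t
  obtain ⟨h1, h2, h3, h4, h5, h6⟩ := Ix_mem ht
  cases u
  · have h6' := h6 rfl
    have := Rh.down hk h i j a b (by unfold H; omega) (by unfold H; omega) (by unfold H; omega) hab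
    simpa [lf] using this
  · have h5' := h5 rfl
    have := Rh.up hk h i j a b (by unfold H; omega) (by unfold H; omega) (by unfold H; omega) hab
    simpa [lf] using this

lemma Ix_ne (k : ℤ) (hk : 0 < k) : (Ix k).Nonempty :=
  ⟨_, Ix_of (up_mem (k := k) (i := k) (j := 0) (by omega) le_rfl le_rfl (by omega) (by omega))⟩

def gg (k : ℤ) (hk : 0 < k) (F : ℤ → ℤ → ℝ) (p : Pt) : ℝ :=
  (Ix k).inf' (Ix_ne k hk) (fun t => lf F t p)

lemma gg_concave (k : ℤ) (hk : 0 < k) (F : ℤ → ℤ → ℝ) : ConcaveOn ℝ Set.univ (gg k hk F) := by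
  refine ⟨convex_univ, ?_⟩
  intro x _ y _ s u hs hu hsu
  simp only [smul_eq_mul]
  unfold gg
  refine Finset.le_inf' _ _ ?_
  intro t ht
  rw [lf_comb2 F t x y s u hsu]
  have h1 := mul_le_mul_of_nonneg_left (Finset.inf'_le (fun t => lf F t x) ht) hs
  have h2 := mul_le_mul_of_nonneg_left (Finset.inf'_le (fun t => lf F t y) ht) hu
  exact add_le_add h1 h2

lemma gg_eq {k : ℤ} (hk : 0 < k) {F : ℤ → ℤ → ℝ} (h : Rh k F) {i j : ℤ} {u : Bool}
    (hT : tri i j u ∈ Tr k) {p : Pt} (hp : p ∈ (tri i j u).region) :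
    gg k hk F p = lf F (i, j, u) p := by
  have ht := Ix_of hT
  apply le_antisymm
  · exact Finset.inf'_le (fun t => lf F t p) ht
  · refine Finset.le_inf' _ _ ?_
    intro t' ht'
    obtain ⟨h1, h2, h3, h4, h5, h6⟩ := Ix_mem ht
    unfold GridTriangle.region at hp
    rw [mem3] at hp
    obtain ⟨α, β, γ, p1, p2, p3, p4, rfl⟩ := hp
    rw [lf_comb3 _ _ _ _ _ _ _ _ p4, lf_comb3 _ _ _ _ _ _ _ _ p4]
    cases u
    · have h6' := h6 rfl
      rw [tri_v0, tri_v1, tri_v2f]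
      have e0 : lf F (i, j, false) (V i j) = F i j := by simp [lf]
      have e1 : lf F (i, j, false) (V (i+1:ℤ) (j+1:ℤ)) = F (i+1) (j+1) := by simp [lf]
      have e2 : lf F (i, j, false) (V (i+1:ℤ) j) = F (i+1) j := by simp [lf]
      rw [e0, e1, e2]
      have a0 := mul_le_mul_of_nonneg_left (lf_ge hk h t' ht' (a := i) (b := j) (by unfold H; omega)) p1
      have a1 := mul_le_mul_of_nonneg_left (lf_ge hk h t' ht' (a := i+1) (b := j+1) (by unfold H; omega)) p2
      have a2 := mul_le_mul_of_nonneg_left (lf_ge hk h t' ht' (a := i+1) (b := j) (by unfold H; omega)) p3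
      linarith
    · have h5' := h5 rfl
      rw [tri_v0, tri_v1, tri_v2t]
      have e0 : lf F (i, j, true) (V i j) = F i j := by simp [lf]
      have e1 : lf F (i, j, true) (V (i+1:ℤ) (j+1:ℤ)) = F (i+1) (j+1) := by simp [lf]; ring
      have e2 : lf F (i, j, true) (V i (j+1:ℤ)) = F i (j+1) := by simp [lf]
      rw [e0, e1, e2]
      have a0 := mul_le_mul_of_nonneg_left (lf_ge hk h t' ht' (a := i) (b := j) (by unfold H; omega)) p1
      have a1 := mul_le_mul_of_nonneg_left (lf_ge hk h t' ht' (a := i+1) (b := j+1) (by unfold H; omega)) p2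
      have a2 := mul_le_mul_of_nonneg_left (lf_ge hk h t' ht' (a := i) (b := j+1) (by unfold H; omega)) p3
      linarith

lemma gg_F0 {k : ℤ} (hk : 0 < k) {F : ℤ → ℤ → ℝ} (h : Rh k F) {i j : ℤ}
    (h1 : 0 ≤ i) (h2 : i ≤ k) (h3 : 0 ≤ j) (h4 : j ≤ k) :
    gg k hk F (V i j) = F i j ∧ gg k hk F (V (i+1:ℤ) (j+1:ℤ)) = F (i+1) (j+1) := by
  by_cases hc : i = 0 ∧ j = k
  · have m := dn_mem h1 h2 h3 h4 (by omega)
    constructor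
    · rw [gg_eq hk h m (subset_convexHull ℝ _ (by simp [tri_v0]))]; simp [lf]
    · rw [gg_eq hk h m (subset_convexHull ℝ _ (by simp [tri_v1]))]; simp [lf]
  · have m := up_mem h1 h2 h3 h4 hc
    constructor
    · rw [gg_eq hk h m (subset_convexHull ℝ _ (by simp [tri_v0]))]; simp [lf]
    · rw [gg_eq hk h m (subset_convexHull ℝ _ (by simp [tri_v1]))]; simp [lf]; ring

lemma gg_F {k : ℤ} (hk : 0 < k) {F : ℤ → ℤ → ℝ} (h : Rh k F) {a b : ℤ} (hab : H k a b) :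
    gg k hk F (V a b) = F a b := by
  unfold H at hab
  by_cases hc : a ≤ k ∧ b ≤ k
  · exact (gg_F0 hk h (by omega) (by omega) (by omega) (by omega)).1
  · have := (gg_F0 hk h (i := a - 1) (j := b - 1) (by omega) (by omega) (by omega) (by omega)).2
    simpa only [sub_add_cancel] using this

lemma V_mem {k : ℤ} {a b : ℤ} (hab : H k a b) : V a b ∈ Hx k := by
  obtain ⟨h1, h2, h3, h4, h5, h6⟩ := hab
  simp only [Hx, Set.mem_setOf_eq, X_V, Y_V]
  refine ⟨?_, ?_, ?_, ?_, ?_, ?_⟩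
  · exact_mod_cast h1
  · exact_mod_cast h2
  · exact_mod_cast h3
  · exact_mod_cast h4
  · exact_mod_cast h5
  · exact_mod_cast h6

/-- midpoint inequality across an edge -/
lemma mid_ineq {k : ℤ} (hk : 0 < k) {g : Pt → ℝ} (hc : ConcaveOn ℝ (Gr k hk).region g)
    (ha : ∀ T ∈ (Gr k hk).tris, AffineOn g T.region) {a b c d p q r s : ℤ}
    (h1 : H k a b) (h2 : H k c d) (h : Dir a b c d) (h3 : H k p q) (h4 : H k r s)
    (e1 : p + r = a + c) (e2 : q + s = b + d) :
    g (V p q) + g (V r s) ≤ g (V a b) + g (V c d) := by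
  obtain ⟨T, hT, he⟩ := (mem_edges hk _).1 (edge_mem hk h1 h2 h)
  obtain ⟨φ, hφ⟩ := ha T hT
  have m1 : V a b ∈ ({T.v0, T.v1, T.v2} : Set Pt) ∧ V c d ∈ ({T.v0, T.v1, T.v2} : Set Pt) := by
    simp only [GridTriangle.edgeFinset, GridTriangle.e0, GridTriangle.e1, GridTriangle.e2,
      Finset.mem_insert, Finset.mem_singleton, Prod.mk.injEq] at he
    rcases he with ⟨e, e'⟩ | ⟨e, e'⟩ | ⟨e, e'⟩ <;> rw [e, e'] <;> simp
  have n1 : V a b ∈ T.region := subset_convexHull ℝ _ m1.1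
  have n2 : V c d ∈ T.region := subset_convexHull ℝ _ m1.2
  have n3 : (1/2:ℝ) • V a b + (1/2:ℝ) • V c d ∈ T.region :=
    convex_convexHull ℝ _ n1 n2 (by norm_num) (by norm_num) (by norm_num)
  have r1 : g ((1/2:ℝ) • V a b + (1/2:ℝ) • V c d) = (1/2) * g (V a b) + (1/2) * g (V c d) := by
    rw [hφ _ n1, hφ _ n2, hφ _ n3]
    have := Convex.combo_affine_apply (f := φ) (x := V a b) (y := V c d) (a := (1/2:ℝ)) (b := (1/2:ℝ)) (by norm_num)
    rw [this]; simp
  have k1 : V p q ∈ (Gr k hk).region := by rw [Gr_region]; exact V_mem h3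
  have k2 : V r s ∈ (Gr k hk).region := by rw [Gr_region]; exact V_mem h4
  have r2 := hc.2 k1 k2 (show (0:ℝ) ≤ 1/2 by norm_num) (show (0:ℝ) ≤ 1/2 by norm_num) (by norm_num)
  have r3 : (1/2:ℝ) • V p q + (1/2:ℝ) • V r s = (1/2:ℝ) • V a b + (1/2:ℝ) • V c d := by
    have e1' : (p:ℝ) + r = a + c := by exact_mod_cast e1
    have e2' : (q:ℝ) + s = b + d := by exact_mod_cast e2
    apply ext_XY
    · simp only [map_add, map_smul, X_V, smul_eq_mul]; linarith
    · simp only [map_add, map_smul, Y_V, smul_eq_mul]; linarith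
  rw [r3, r1] at r2
  simp only [smul_eq_mul] at r2
  linarith

lemma Rh_of {k : ℤ} (hk : 0 < k) {g : Pt → ℝ} (hc : ConcaveOn ℝ (Gr k hk).region g)
    (ha : ∀ T ∈ (Gr k hk).tris, AffineOn g T.region) : Rh k (fun i j => g (V i j)) where
  r1 a b h1 h2 h3 h4 := by
    have := mid_ineq hk hc ha h4 h3 (by unfold Dir; omega) h1 h2 (by ring) (by ring)
    linarith
  r2 a b h1 h2 h3 h4 := by
    have := mid_ineq hk hc ha h4 h3 (by unfold Dir; omega) h1 h2 (by ring) (by ring)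
    linarith
  r3 a b h1 h2 h3 h4 := by
    have := mid_ineq hk hc ha h1 h2 (by unfold Dir; omega) h3 h4 (by ring) (by ring)
    linarith

/-- a function which is constant along the boundary edges -/
lemma per_const {k : ℤ} (hk : 0 < k) {d : ℤ → ℤ → ℝ}
    (hd : ∀ a b c e, H k a b → H k c e → Dir a b c e → (V a b, V c e) ∈ (Gr k hk).boundary →
      d a b = d c e) (h0 : d 0 0 = 0) : ∀ a b, Per k a b → d a b = 0 := by
  have hd' : ∀ a b c e, H k a b → H k c e → Dir a b c e → ((b = 0 ∧ e = 0) ∨ (b = k + 1 ∧ e = k + 1) ∨ (a = 0 ∧ c = 0) ∨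
      (a = k + 1 ∧ c = k + 1) ∨ (a = k ∧ b = 0 ∧ c = k + 1 ∧ e = 1)) → d a b = d c e :=
    fun a b c e h1 h2 h3 h4 => hd a b c e h1 h2 h3 (bd_side hk h1 h2 h3 h4)
  have bot : ∀ n : ℕ, (n:ℤ) ≤ k → d n 0 = 0 := by
    intro n
    induction n with
    | zero => intro _; simpa using h0
    | succ n ih =>
      intro hn
      push_cast at hn ⊢
      rw [hd' (n+1) 0 n 0 (by unfold H; omega) (by unfold H; omega) (by unfold Dir; omega) (by omega)]
      exact ih (by omega)
  have left : ∀ n : ℕ, (n:ℤ) ≤ k → d 0 n = 0 := by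
    intro n
    induction n with
    | zero => intro _; simpa using h0
    | succ n ih =>
      intro hn
      push_cast at hn ⊢
      rw [hd' 0 (n+1) 0 n (by unfold H; omega) (by unfold H; omega) (by unfold Dir; omega) (by omega)]
      exact ih (by omega)
  have hkk : d k 0 = 0 := by
    have := bot k.toNat (by omega)
    rwa [Int.toNat_of_nonneg hk.le] at this
  have right : ∀ n : ℕ, (n:ℤ) ≤ k → d (k+1) (n+1) = 0 := by
    intro n
    induction n with
    | zero =>
      intro _
      have := hd' k 0 (k+1) 1 (by unfold H; omega) (by unfold H; omega) (by unfold Dir; omega) (by omega)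
      rw [hkk] at this
      simpa using this.symm
    | succ n ih =>
      intro hn
      push_cast at hn ⊢
      rw [hd' (k+1) (n+1+1) (k+1) (n+1) (by unfold H; omega) (by unfold H; omega) (by unfold Dir; omega) (by omega)]
      exact ih (by omega)
  have htt : d (k+1) (k+1) = 0 := by
    have := right k.toNat (by omega)
    rwa [Int.toNat_of_nonneg hk.le] at this
  have top : ∀ n : ℕ, (n:ℤ) ≤ k → d (k+1-n) (k+1) = 0 := by
    intro n
    induction n with
    | zero => intro _; simpa using htt
    | succ n ih =>
      intro hn
      push_cast at hn ⊢
      rw [← hd' (k+1-n) (k+1) (k+1-(n+1)) (k+1) (by unfold H; omega) (by unfold H; omega) (by unfold Dir; omega) (by omega)]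
      exact ih (by omega)
  rintro a b ⟨hH, hs⟩
  unfold H at hH
  rcases hs with rfl | rfl | rfl | rfl
  · obtain ⟨n, rfl⟩ := Int.eq_ofNat_of_zero_le hH.2.2.1
    exact left n (by omega)
  · obtain ⟨n, hn⟩ := Int.eq_ofNat_of_zero_le (show 0 ≤ b - 1 by omega)
    obtain rfl : b = n + 1 := by omega
    exact right n (by omega)
  · obtain ⟨n, rfl⟩ := Int.eq_ofNat_of_zero_le hH.1
    exact bot n (by omega)
  · obtain ⟨n, hn⟩ := Int.eq_ofNat_of_zero_le (show 0 ≤ k + 1 - a by omega)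
    obtain rfl : a = k + 1 - n := by omega
    exact top n (by omega)

theorem core (k : ℕ) (hk : 0 < k) (F : ℤ → ℤ → ℝ) (hR : Rh k F)
    (h_int : ∀ a b, Per k a b → ∃ z : ℤ, F a b = z)
    (huniq : ∀ d : ℤ → ℤ → ℝ, (∀ a b, Per k a b → d a b = 0) → Tight k F d →
      ∀ a b, H k a b → d a b = 0)
    (he : ∃ a b c e, H k a b ∧ H k c e ∧ Dir a b c e ∧ F c e - F a b = -(1 / (k:ℝ)))
    (hb : ∀ a b c e, H k a b → H k c e → Dir a b c e → |F c e - F a b| < 2 * (k:ℝ)) :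
    ∃ (G : ConvexGrid) (p : Pt) (h₀ : Ed → ℤ) (h : Ed → ℝ),
      G.region = convexHull ℝ
        ({p, p + xiv 0,
          p + xiv 0 - (k : ℝ) • xiv 2,
          p + xiv 0 - (k : ℝ) • xiv 2 + (k : ℝ) • xiv 1,
          p - (k : ℝ) • xiv 2 + (k : ℝ) • xiv 1,
          p + (k : ℝ) • xiv 1} : Set Pt) ∧
      IsVertexOf G (CC G (↑G.boundary) fun e => (h₀ e : ℝ)) h ∧
      (∃ e ∈ G.edges, h e = -(1 / (k : ℝ))) ∧
      ∀ e ∈ G.edges, |h e| < 2 * (k : ℝ) := by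
  have hk' : (0:ℤ) < k := by exact_mod_cast hk
  set g := gg k hk' F with hg
  set h : Ed → ℝ := fun e => g e.2 - g e.1 with hh
  have hval : ∀ a b c e, H k a b → H k c e → h (V a b, V c e) = F c e - F a b := by
    intro a b c e h1 h2
    simp only [hh, hg]
    rw [gg_F hk' hR h1, gg_F hk' hR h2]
  refine ⟨Gr k hk', V k 0, fun e => ⌊h e⌋, h, ?_, ⟨⟨⟨?_, g, ?_, ?_, ?_⟩, ?_⟩, ?_⟩, ?_, ?_⟩
  · rw [Gr_region, ← Hx_eq k hk]; simp
  · intro T _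
    simp only [hh, GridTriangle.e0, GridTriangle.e1, GridTriangle.e2]
    ring
  · exact (gg_concave k hk' F).subset (Set.subset_univ _) (Gr k hk').convex
  · intro T hT
    have key : ∀ i j u, T = tri i j u → AffineOn g T.region := by
      rintro i j u rfl
      obtain ⟨φ, hφ⟩ := lf_aff F (i, j, u)
      exact ⟨φ, fun x hx => by rw [hg, gg_eq hk' hR hT hx, hφ]⟩
    rcases (mem_Tr k T).1 hT with ⟨i, j, h1, h2, h3, h4, h5, h6⟩ | ⟨i, j, h1, h2, h3, h4, h5, h6⟩
    · exact key i j true h6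
    · exact key i j false h6
  · intro e _; rfl
  · intro e hbe
    have hbe' : e ∈ (Gr k hk').boundary := hbe
    have hed : e ∈ (Gr k hk').edges := (Finset.mem_filter.1 hbe').1
    obtain ⟨a, b, c, d, h1, h2, h3, rfl⟩ := edge_of hk' hed
    obtain ⟨p1, p2⟩ := bd_per hk' h1 h2 h3 hbe'
    obtain ⟨z, hz⟩ := h_int a b p1
    obtain ⟨w, hw⟩ := h_int c d p2
    have : h (V a b, V c d) = ((w - z : ℤ) : ℝ) := by
      rw [hval a b c d h1 h2, hz, hw]; push_cast; ring
    simp only [this, Int.floor_intCast]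
  · rintro h₁ ⟨⟨_, g₁, c1, a1, q1⟩, b1⟩ h₂ ⟨⟨_, g₂, c2, a2, q2⟩, b2⟩ hm
    have R1 := Rh_of hk' c1 a1
    have R2 := Rh_of hk' c2 a2
    have av : ∀ a b c e, H k a b → H k c e → Dir a b c e →
        F c e - F a b = ((g₁ (V c e) - g₁ (V a b)) + (g₂ (V c e) - g₂ (V a b))) / 2 := by
      intro a b c e i1 i2 i3
      have := hm _ (edge_mem hk' i1 i2 i3)
      rw [hval _ _ _ _ i1 i2, q1 _ (edge_mem hk' i1 i2 i3), q2 _ (edge_mem hk' i1 i2 i3)] at this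
      exact this
    set d : ℤ → ℤ → ℝ := fun a b => (g₁ (V a b) - g₂ (V a b)) - (g₁ (V (0:ℤ) (0:ℤ)) - g₂ (V (0:ℤ) (0:ℤ))) with hdd
    have hper : ∀ a b, Per k a b → d a b = 0 := by
      apply per_const hk'
      · intro a b c e i1 i2 i3 i4
        have j1 := b1 _ i4
        have j2 := b2 _ i4
        have j3 := q1 _ (edge_mem hk' i1 i2 i3)
        have j4 := q2 _ (edge_mem hk' i1 i2 i3)
        simp only [hdd]
        simp only at j3 j4
        linarith
      · simp [hdd]
    have ht : Tight k F d := by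
      refine ⟨?_, ?_, ?_⟩
      · intro a b i1 i2 i3 i4 hE
        have s1 := R1.r1 a b i1 i2 i3 i4
        have s2 := R2.r1 a b i1 i2 i3 i4
        have s3 := av _ _ _ _ i1 i4 (by unfold Dir; omega)
        have s4 := av _ _ _ _ i3 i2 (by unfold Dir; omega)
        simp only [hdd]; linarith
      · intro a b i1 i2 i3 i4 hE
        have s1 := R1.r2 a b i1 i2 i3 i4
        have s2 := R2.r2 a b i1 i2 i3 i4
        have s3 := av _ _ _ _ i1 i4 (by unfold Dir; omega)
        have s4 := av _ _ _ _ i3 i2 (by unfold Dir; omega)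
        simp only [hdd]; linarith
      · intro a b i1 i2 i3 i4 hE
        have s1 := R1.r3 a b i1 i2 i3 i4
        have s2 := R2.r3 a b i1 i2 i3 i4
        have s3 := av _ _ _ _ i3 i1 (by unfold Dir; omega)
        have s4 := av _ _ _ _ i2 i4 (by unfold Dir; omega)
        simp only [hdd]; linarith
    have hz := huniq d hper ht
    intro e hed
    obtain ⟨a, b, c, f, i1, i2, i3, rfl⟩ := edge_of hk' hed
    have z1 := hz a b i1
    have z2 := hz c f i2
    rw [q1 _ hed, q2 _ hed]
    simp only [hdd] at z1 z2
    simp only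
    linarith
  · obtain ⟨a, b, c, e, i1, i2, i3, i4⟩ := he
    exact ⟨_, edge_mem hk' i1 i2 i3, by rw [hval _ _ _ _ i1 i2, i4]⟩
  · intro e hed
    obtain ⟨a, b, c, f, i1, i2, i3, rfl⟩ := edge_of hk' hed
    rw [hval _ _ _ _ i1 i2]
    exact hb _ _ _ _ i1 i2 i3

end S14
namespace S14

/-! The explicit family for `3 ≤ k` (with `a = 1 / k`). -/

def ev (j : ℤ) : ℝ := if j % 2 = 0 then 0 else 1
def on (j : ℤ) : ℝ := if j = 0 then 0 else 1
def tt (j : ℤ) : ℝ := -((j:ℝ) * (j - 1) / 2)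
def q1 (k : ℤ) (a : ℝ) (j : ℤ) : ℝ :=
  if j = k then a else if j = k + 1 then (if k % 2 = 0 then 2 * a else a) else 0
def q2 (k : ℤ) (a : ℝ) (j : ℤ) : ℝ := if j = k then a else if j = k + 1 then 2 * a else 0
def q3 (k : ℤ) (a : ℝ) (j : ℤ) : ℝ := if j = k + 1 then (if k % 2 = 0 then a else 0) else 0
def q4 (k : ℤ) (j : ℤ) : ℝ := if j = k + 1 then (if k % 2 = 0 then 0 else 1) else 0

def c0 (j : ℤ) : ℝ := tt j - on j
def c1 (k : ℤ) (a : ℝ) (j : ℤ) : ℝ :=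
  4 + tt j + (j + ev j) / 2 * (1 - 2 * a) - on j + q1 k a j
def c2 (k : ℤ) (a : ℝ) (j : ℤ) : ℝ := 5 + tt j + j * (1 - 2 * a) + 2 * on j + q2 k a j
def c3 (k : ℤ) (a : ℝ) (j : ℤ) : ℝ :=
  5 + tt j + 2 * j - (j - ev j) / 2 - a * (j + ev j) + (1 + a) * on j + q3 k a j
def c4 (k : ℤ) (i j : ℤ) : ℝ := 8 - i + tt j + 2 * j + on j - q4 k j

def FF (k : ℤ) (a : ℝ) (i j : ℤ) : ℝ :=
  if i = 0 then c0 j else if i = 1 then c1 k a j else if i = 2 then c2 k a j else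
    if i = 3 then c3 k a j else c4 k i j

lemma FF_0 (k : ℤ) (a : ℝ) (j : ℤ) : FF k a 0 j = c0 j := by simp [FF]
lemma FF_1 (k : ℤ) (a : ℝ) (j : ℤ) : FF k a 1 j = c1 k a j := by simp [FF]
lemma FF_2 (k : ℤ) (a : ℝ) (j : ℤ) : FF k a 2 j = c2 k a j := by simp [FF]
lemma FF_3 (k : ℤ) (a : ℝ) (j : ℤ) : FF k a 3 j = c3 k a j := by simp [FF]
lemma FF_4 (k : ℤ) (a : ℝ) (i j : ℤ) (h : 4 ≤ i) : FF k a i j = c4 k i j := by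
  simp (disch := omega) only [FF, if_neg]
lemma FF_44 (k : ℤ) (a : ℝ) (j : ℤ) : FF k a 4 j = c4 k 4 j := FF_4 k a 4 j le_rfl
lemma FF_45 (k : ℤ) (a : ℝ) (j : ℤ) : FF k a 5 j = c4 k 5 j := FF_4 k a 5 j (by norm_num)
lemma tt_1 (j : ℤ) : tt (j + 1) = tt j - j := by simp only [tt]; push_cast; ring
lemma tt_2 (j : ℤ) : tt (j + 2) = tt j - 2 * j - 1 := by simp only [tt]; push_cast; ring

/-- unfolding of the row-dependent constants -/
lemma evals (k : ℤ) (a : ℝ) (j : ℤ) :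
    ev j = (if j % 2 = 0 then 0 else 1) ∧ on j = (if j = 0 then 0 else 1) ∧
    q1 k a j = (if j = k then a else if j = k + 1 then (if k % 2 = 0 then 2 * a else a) else 0) ∧
    q2 k a j = (if j = k then a else if j = k + 1 then 2 * a else 0) ∧
    q3 k a j = (if j = k + 1 then (if k % 2 = 0 then a else 0) else 0) ∧
    q4 k j = (if j = k + 1 then (if k % 2 = 0 then 0 else 1) else 0) :=
  ⟨rfl, rfl, rfl, rfl, rfl, rfl⟩

lemma splitrow (k j : ℤ) (a : ℝ) (hk : 3 ≤ k) (h0 : 0 ≤ j) (h1 : j ≤ k) (a0 : 0 < a)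
    (ha : a * k = 1) :
    (j = 0 ∧ (j:ℝ) = 0 ∧ a * j = 0) ∨
    (1 ≤ j ∧ j ≤ k - 3 ∧ j % 2 = 0 ∧ a ≤ a * j ∧ a * j ≤ 1 - 3 * a ∧ (1:ℝ) ≤ j ∧ (j:ℝ) ≤ k - 3) ∨
    (1 ≤ j ∧ j ≤ k - 3 ∧ j % 2 = 1 ∧ a ≤ a * j ∧ a * j ≤ 1 - 3 * a ∧ (1:ℝ) ≤ j ∧ (j:ℝ) ≤ k - 3) ∨
    (j = k - 2 ∧ (j:ℝ) = k - 2 ∧ a * j = 1 - 2 * a) ∨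
    (j = k - 1 ∧ (j:ℝ) = k - 1 ∧ a * j = 1 - a) ∨ (j = k ∧ (j:ℝ) = k ∧ a * j = 1) := by
  have q : (1 ≤ j ∧ j ≤ k - 3) → a ≤ a * j ∧ a * j ≤ 1 - 3 * a ∧ (1:ℝ) ≤ j ∧ (j:ℝ) ≤ k - 3 := by
    rintro ⟨h2, h3⟩
    have h2' : (1:ℝ) ≤ j := by exact_mod_cast h2
    have h3' : (j:ℝ) ≤ k - 3 := by exact_mod_cast h3
    refine ⟨?_, ?_, h2', h3'⟩ <;> nlinarith
  by_cases c1 : j = 0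
  · subst c1; left; simp
  by_cases c2 : j = k
  · subst c2; right; right; right; right; right; exact ⟨rfl, rfl, ha⟩
  by_cases c3 : j = k - 1
  · subst c3; right; right; right; right; left
    refine ⟨rfl, by push_cast; ring, by push_cast; linarith⟩
  by_cases c4 : j = k - 2
  · subst c4; right; right; right; left
    refine ⟨rfl, by push_cast; ring, by push_cast; linarith⟩
  have q' := q (by omega)
  rcases Int.emod_two_eq_zero_or_one j with h | h
  · right; left; exact ⟨by omega, by omega, h, q'⟩
  · right; right; left; exact ⟨by omega, by omega, h, q'⟩

lemma splitcol (i : ℤ) (h0 : 0 ≤ i) : i = 0 ∨ i = 1 ∨ i = 2 ∨ i = 3 ∨ 4 ≤ i := by omega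

set_option maxHeartbeats 4000000 in
lemma FF_r1 (k : ℤ) (hk : 3 ≤ k) (a : ℝ) (ha : a * k = 1) : ∀ i j, H k i j → H k (i+2) (j+1) → H k (i+1) j → H k (i+1) (j+1) →
    FF k a i j + FF k a (i+2) (j+1) ≤ FF k a (i+1) j + FF k a (i+1) (j+1) := by
  have k3 : (3:ℝ) ≤ k := by exact_mod_cast hk
  have a0 : 0 < a := by
    by_contra h
    nlinarith
  have a1 : a ≤ 1 / 3 := by nlinarith
  intro i j h1 h2 h3 h4
  unfold H at h1 h2 h3 h4
  rcases splitrow k j a hk (by omega) (by omega) a0 ha with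
    ⟨hj, f1, f2⟩ | ⟨hj, hj2, hj3, f1, f2, f3, f4⟩ | ⟨hj, hj2, hj3, f1, f2, f3, f4⟩ | ⟨hj, f1, f2⟩ |
    ⟨hj, f1, f2⟩ | ⟨hj, f1, f2⟩ <;>
  rcases Int.emod_two_eq_zero_or_one k with hk2 | hk2 <;>
  (have E0 := evals k a (j)
   have E1 := evals k a (j+1)
   simp (disch := omega) only [if_pos, if_neg] at E0 E1
   rcases splitcol i (by omega) with rfl | rfl | rfl | rfl | hi <;>
   first
   | (clear h1 h2 h3 h4
      simp (disch := omega) only [Int.reduceAdd, FF_0, FF_1, FF_2, FF_3, FF_44, FF_45, FF_4, c0, c1, c2, c3,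
        c4, E0, E1, tt_1, tt_2, Int.cast_add, Int.cast_one, Int.cast_ofNat]
      linarith)
   | (exfalso; omega))

set_option maxHeartbeats 4000000 in
lemma FF_r2 (k : ℤ) (hk : 3 ≤ k) (a : ℝ) (ha : a * k = 1) : ∀ i j, H k i j → H k (i+1) (j+2) → H k i (j+1) → H k (i+1) (j+1) →
    FF k a i j + FF k a (i+1) (j+2) ≤ FF k a i (j+1) + FF k a (i+1) (j+1) := by
  have k3 : (3:ℝ) ≤ k := by exact_mod_cast hk
  have a0 : 0 < a := by
    by_contra h
    nlinarith
  have a1 : a ≤ 1 / 3 := by nlinarith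
  intro i j h1 h2 h3 h4
  unfold H at h1 h2 h3 h4
  rcases splitrow k j a hk (by omega) (by omega) a0 ha with
    ⟨hj, f1, f2⟩ | ⟨hj, hj2, hj3, f1, f2, f3, f4⟩ | ⟨hj, hj2, hj3, f1, f2, f3, f4⟩ | ⟨hj, f1, f2⟩ |
    ⟨hj, f1, f2⟩ | ⟨hj, f1, f2⟩ <;>
  rcases Int.emod_two_eq_zero_or_one k with hk2 | hk2 <;>
  (have E0 := evals k a (j)
   have E1 := evals k a (j+1)
   have E2 := evals k a (j+2)
   simp (disch := omega) only [if_pos, if_neg] at E0 E1 E2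
   rcases splitcol i (by omega) with rfl | rfl | rfl | rfl | hi <;>
   first
   | (clear h1 h2 h3 h4
      simp (disch := omega) only [Int.reduceAdd, FF_0, FF_1, FF_2, FF_3, FF_44, FF_45, FF_4, c0, c1, c2, c3,
        c4, E0, E1, E2, tt_1, tt_2, Int.cast_add, Int.cast_one, Int.cast_ofNat]
      linarith)
   | (exfalso; omega))

set_option maxHeartbeats 4000000 in
lemma FF_r3 (k : ℤ) (hk : 3 ≤ k) (a : ℝ) (ha : a * k = 1) : ∀ i j, H k i j → H k (i+1) (j+1) → H k (i+1) j → H k i (j+1) →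
    FF k a (i+1) j + FF k a i (j+1) ≤ FF k a i j + FF k a (i+1) (j+1) := by
  have k3 : (3:ℝ) ≤ k := by exact_mod_cast hk
  have a0 : 0 < a := by
    by_contra h
    nlinarith
  have a1 : a ≤ 1 / 3 := by nlinarith
  intro i j h1 h2 h3 h4
  unfold H at h1 h2 h3 h4
  rcases splitrow k j a hk (by omega) (by omega) a0 ha with
    ⟨hj, f1, f2⟩ | ⟨hj, hj2, hj3, f1, f2, f3, f4⟩ | ⟨hj, hj2, hj3, f1, f2, f3, f4⟩ | ⟨hj, f1, f2⟩ |
    ⟨hj, f1, f2⟩ | ⟨hj, f1, f2⟩ <;>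
  rcases Int.emod_two_eq_zero_or_one k with hk2 | hk2 <;>
  (have E0 := evals k a (j)
   have E1 := evals k a (j+1)
   simp (disch := omega) only [if_pos, if_neg] at E0 E1
   rcases splitcol i (by omega) with rfl | rfl | rfl | rfl | hi <;>
   first
   | (clear h1 h2 h3 h4
      simp (disch := omega) only [Int.reduceAdd, FF_0, FF_1, FF_2, FF_3, FF_44, FF_45, FF_4, c0, c1, c2, c3,
        c4, E0, E1, tt_1, tt_2, Int.cast_add, Int.cast_one, Int.cast_ofNat]
      linarith)
   | (exfalso; omega))

lemma FF_Rh (k : ℤ) (hk : 3 ≤ k) (a : ℝ) (ha : a * k = 1) : Rh k (FF k a) :=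
  ⟨FF_r1 k hk a ha, FF_r2 k hk a ha, FF_r3 k hk a ha⟩

end S14
namespace S14

set_option maxHeartbeats 4000000 in
lemma FF_bv (k : ℤ) (hk : 3 ≤ k) (a : ℝ) (ha : a * k = 1) : ∀ i j, H k i j → H k i (j+1) →
    |FF k a i j - FF k a i (j+1)| < 2 * (k:ℝ) := by
  have k3 : (3:ℝ) ≤ k := by exact_mod_cast hk
  have a0 : 0 < a := by
    by_contra h
    nlinarith
  have a1 : a ≤ 1 / 3 := by nlinarith
  intro i j h1 h2
  unfold H at h1 h2
  have f5 : (j:ℝ) / 2 - a * j ≤ k / 2 - 1 := by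
    have : (j:ℝ) ≤ k := by exact_mod_cast (show j ≤ k by omega)
    nlinarith
  rw [abs_lt]
  rcases splitrow k j a hk (by omega) (by omega) a0 ha with
    ⟨hj, f1, f2⟩ | ⟨hj, hj2, hj3, f1, f2, f3, f4⟩ | ⟨hj, hj2, hj3, f1, f2, f3, f4⟩ | ⟨hj, f1, f2⟩ |
    ⟨hj, f1, f2⟩ | ⟨hj, f1, f2⟩ <;>
  rcases Int.emod_two_eq_zero_or_one k with hk2 | hk2 <;>
  (have E0 := evals k a (j)
   have E1 := evals k a (j+1)
   simp (disch := omega) only [if_pos, if_neg] at E0 E1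
   rcases splitcol i (by omega) with rfl | rfl | rfl | rfl | hi <;>
   first
   | (clear h1 h2
      simp (disch := omega) only [Int.reduceAdd, FF_0, FF_1, FF_2, FF_3, FF_44, FF_45, FF_4, c0, c1, c2, c3,
        c4, E0, E1, tt_1, tt_2, Int.cast_add, Int.cast_one, Int.cast_ofNat]
      constructor <;> linarith)
   | (exfalso; omega))

set_option maxHeartbeats 4000000 in
lemma FF_bu (k : ℤ) (hk : 3 ≤ k) (a : ℝ) (ha : a * k = 1) : ∀ i j, H k i (j+1) → H k (i+1) (j+1) → 0 ≤ j → 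
    |FF k a i (j+1) - FF k a (i+1) (j+1)| < 2 * (k:ℝ) := by
  have k3 : (3:ℝ) ≤ k := by exact_mod_cast hk
  have a0 : 0 < a := by
    by_contra h
    nlinarith
  have a1 : a ≤ 1 / 3 := by nlinarith
  intro i j h1 h2 h0
  unfold H at h1 h2
  have f5 : (j:ℝ) / 2 - a * j ≤ k / 2 - 1 := by
    have : (j:ℝ) ≤ k := by exact_mod_cast (show j ≤ k by omega)
    nlinarith
  rw [abs_lt]
  rcases splitrow k j a hk (by omega) (by omega) a0 ha with
    ⟨hj, f1, f2⟩ | ⟨hj, hj2, hj3, f1, f2, f3, f4⟩ | ⟨hj, hj2, hj3, f1, f2, f3, f4⟩ | ⟨hj, f1, f2⟩ |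
    ⟨hj, f1, f2⟩ | ⟨hj, f1, f2⟩ <;>
  rcases Int.emod_two_eq_zero_or_one k with hk2 | hk2 <;>
  (have E0 := evals k a (j)
   have E1 := evals k a (j+1)
   simp (disch := omega) only [if_pos, if_neg] at E0 E1
   rcases splitcol i (by omega) with rfl | rfl | rfl | rfl | hi <;>
   first
   | (clear h1 h2
      simp (disch := omega) only [Int.reduceAdd, FF_0, FF_1, FF_2, FF_3, FF_44, FF_45, FF_4, c0, c1, c2, c3,
        c4, E0, E1, tt_1, tt_2, Int.cast_add, Int.cast_one, Int.cast_ofNat]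
      constructor <;> linarith)
   | (exfalso; omega))

set_option maxHeartbeats 4000000 in
lemma FF_bw (k : ℤ) (hk : 3 ≤ k) (a : ℝ) (ha : a * k = 1) : ∀ i j, H k i j → H k (i+1) (j+1) →
    |FF k a (i+1) (j+1) - FF k a i j| < 2 * (k:ℝ) := by
  have k3 : (3:ℝ) ≤ k := by exact_mod_cast hk
  have a0 : 0 < a := by
    by_contra h
    nlinarith
  have a1 : a ≤ 1 / 3 := by nlinarith
  intro i j h1 h2
  unfold H at h1 h2
  have f5 : (j:ℝ) / 2 - a * j ≤ k / 2 - 1 := by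
    have : (j:ℝ) ≤ k := by exact_mod_cast (show j ≤ k by omega)
    nlinarith
  rw [abs_lt]
  rcases splitrow k j a hk (by omega) (by omega) a0 ha with
    ⟨hj, f1, f2⟩ | ⟨hj, hj2, hj3, f1, f2, f3, f4⟩ | ⟨hj, hj2, hj3, f1, f2, f3, f4⟩ | ⟨hj, f1, f2⟩ |
    ⟨hj, f1, f2⟩ | ⟨hj, f1, f2⟩ <;>
  rcases Int.emod_two_eq_zero_or_one k with hk2 | hk2 <;>
  (have E0 := evals k a (j)
   have E1 := evals k a (j+1)
   simp (disch := omega) only [if_pos, if_neg] at E0 E1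
   rcases splitcol i (by omega) with rfl | rfl | rfl | rfl | hi <;>
   first
   | (clear h1 h2
      simp (disch := omega) only [Int.reduceAdd, FF_0, FF_1, FF_2, FF_3, FF_44, FF_45, FF_4, c0, c1, c2, c3,
        c4, E0, E1, tt_1, tt_2, Int.cast_add, Int.cast_one, Int.cast_ofNat]
      constructor <;> linarith)
   | (exfalso; omega))

lemma FF_bu0 (k : ℤ) (hk : 3 ≤ k) (a : ℝ) : ∀ i, 0 ≤ i →
    |FF k a i 0 - FF k a (i+1) 0| < 2 * (k:ℝ) := by
  have k3 : (3:ℝ) ≤ k := by exact_mod_cast hk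
  intro i h
  have E0 := evals k a 0
  have t0 : tt 0 = 0 := by simp [tt]
  rw [if_neg (show ¬ (0 = k) by omega), if_neg (show ¬ (0 = k + 1) by omega),
    if_neg (show ¬ (0 = k) by omega), if_neg (show ¬ (0 = k + 1) by omega),
    if_neg (show ¬ (0 = k + 1) by omega), if_neg (show ¬ (0 = k + 1) by omega)] at E0
  simp only [Int.zero_emod, if_true] at E0
  rw [abs_lt]
  rcases splitcol i h with rfl | rfl | rfl | rfl | hi <;>
  (simp (disch := omega) only [Int.reduceAdd, FF_0, FF_1, FF_2, FF_3, FF_44, FF_45, FF_4, c0, c1, c2, c3,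
        c4, E0, t0, Int.cast_add, Int.cast_one, Int.cast_ofNat, Int.cast_zero]
   constructor <;> linarith)

lemma FF_b (k : ℤ) (hk : 3 ≤ k) (a : ℝ) (ha : a * k = 1) (i j c e : ℤ) (h1 : H k i j)
    (h2 : H k c e) (h : Dir i j c e) : |FF k a c e - FF k a i j| < 2 * (k:ℝ) := by
  rcases h with ⟨rfl, rfl⟩ | ⟨rfl, rfl⟩ | ⟨rfl, rfl⟩
  · exact FF_bw k hk a ha i j h1 h2
  · obtain ⟨x, rfl⟩ : ∃ x, i = x + 1 := ⟨i - 1, by ring⟩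
    simp only [add_sub_cancel_right] at h2 ⊢
    by_cases h0 : e = 0
    · subst h0
      exact FF_bu0 k hk a x h2.1
    · obtain ⟨y, rfl⟩ : ∃ y, e = y + 1 := ⟨e - 1, by ring⟩
      exact FF_bu k hk a ha x y h2 h1 (by unfold H at h2; omega)
  · obtain ⟨y, rfl⟩ : ∃ y, j = y + 1 := ⟨j - 1, by ring⟩
    simp only [add_sub_cancel_right] at h2 ⊢
    exact FF_bv k hk a ha c y h2 h1

lemma tt_int (j : ℤ) : ∃ z : ℤ, tt j = z := by
  rcases Int.even_or_odd' j with ⟨m, hm | hm⟩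
  · exact ⟨-(m * (2 * m - 1)), by subst hm; simp only [tt]; push_cast; ring⟩
  · exact ⟨-((2 * m + 1) * m), by subst hm; simp only [tt]; push_cast; ring⟩

lemma on_int (j : ℤ) : ∃ z : ℤ, on j = z := by
  unfold on; split_ifs
  · exact ⟨0, by simp⟩
  · exact ⟨1, by simp⟩

lemma FF_int (k : ℤ) (hk : 3 ≤ k) (a : ℝ) (ha : a * k = 1) (i j : ℤ) (h : Per k i j) :
    ∃ z : ℤ, FF k a i j = z := by
  obtain ⟨hH, hs⟩ := h
  unfold H at hH
  obtain ⟨T, hT⟩ := tt_int j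
  obtain ⟨o, ho⟩ := on_int j
  rcases splitcol i (by omega) with rfl | rfl | rfl | rfl | hi
  · exact ⟨T - o, by rw [FF_0, c0, hT, ho]; push_cast; ring⟩
  · rcases (by omega : j = 0 ∨ j = k + 1) with rfl | rfl
    · exact ⟨4, by simp [FF_1, c1, tt, ev, on, q1, show ¬ (0 = k) by omega, show ¬ (0 = k+1) by omega]⟩
    · have E := evals k a (k+1)
      rcases Int.even_or_odd' k with ⟨m, hm | hm⟩
      · simp (disch := omega) only [if_pos, if_neg] at E
        have hm' : (k:ℝ) = 2 * m := by exact_mod_cast hm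
        refine ⟨4 + T + (m + 1) - 1 - 1, ?_⟩
        simp only [FF_1, c1, hT, E]; push_cast; rw [hm'] at ha ⊢; linarith
      · simp (disch := omega) only [if_pos, if_neg] at E
        have hm' : (k:ℝ) = 2 * m + 1 := by exact_mod_cast hm
        refine ⟨4 + T + (m + 1) - 1 - 1, ?_⟩
        simp only [FF_1, c1, hT, E]; push_cast; rw [hm'] at ha ⊢; linarith
  · rcases (by omega : j = 0 ∨ j = k + 1) with rfl | rfl
    · exact ⟨5, by simp [FF_2, c2, tt, ev, on, q2, show ¬ (0 = k) by omega, show ¬ (0 = k+1) by omega]⟩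
    · have E := evals k a (k+1)
      simp (disch := omega) only [if_pos, if_neg] at E
      refine ⟨5 + T + (k + 1) - 2 + 2, ?_⟩
      simp only [FF_2, c2, hT, E]; push_cast; linarith
  · rcases (by omega : j = 0 ∨ j = k + 1) with rfl | rfl
    · exact ⟨5, by simp [FF_3, c3, tt, ev, on, q3, show ¬ (0 = k+1) by omega]⟩
    · have E := evals k a (k+1)
      rcases Int.even_or_odd' k with ⟨m, hm | hm⟩
      · simp (disch := omega) only [if_pos, if_neg] at E
        have hm' : (k:ℝ) = 2 * m := by exact_mod_cast hm
        refine ⟨5 + T + 2 * (k + 1) - m - 1 + 1, ?_⟩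
        simp only [FF_3, c3, hT, E]; push_cast; rw [hm'] at ha ⊢; linarith
      · simp (disch := omega) only [if_pos, if_neg] at E
        have hm' : (k:ℝ) = 2 * m + 1 := by exact_mod_cast hm
        refine ⟨5 + T + 2 * (k + 1) - (m + 1) - 1 + 1, ?_⟩
        simp only [FF_3, c3, hT, E]; push_cast; rw [hm'] at ha ⊢; linarith
  · obtain ⟨w, hw⟩ : ∃ w : ℤ, q4 k j = w := by
      unfold q4; split_ifs
      · exact ⟨0, by simp⟩
      · exact ⟨1, by simp⟩
      · exact ⟨0, by simp⟩
    exact ⟨8 - i + T + 2 * j + o - w, by rw [FF_4 _ _ _ _ hi, c4, hT, ho, hw]; push_cast; ring⟩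

set_option maxHeartbeats 4000000 in
lemma FF_T1 (k : ℤ) (hk : 3 ≤ k) (a : ℝ) (ha : a * k = 1) (j : ℤ) (h1 : 0 ≤ j) (h2 : j ≤ k - 1 ∨ (k % 2 = 1 ∧ j = k)) :
    FF k a 0 j + FF k a 2 (j+1) = FF k a 1 j + FF k a 1 (j+1) := by
  have k3 : (3:ℝ) ≤ k := by exact_mod_cast hk
  have a0 : 0 < a := by
    by_contra h
    nlinarith
  have a1 : a ≤ 1 / 3 := by nlinarith
  rcases splitrow k j a hk (by omega) (by omega) a0 ha with
    ⟨hj, f1, f2⟩ | ⟨hj, hj2, hj3, f1, f2, f3, f4⟩ | ⟨hj, hj2, hj3, f1, f2, f3, f4⟩ | ⟨hj, f1, f2⟩ |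
    ⟨hj, f1, f2⟩ | ⟨hj, f1, f2⟩ <;>
  rcases Int.emod_two_eq_zero_or_one k with hk2 | hk2 <;>
  first
  | (exfalso; omega)
  | (have E0 := evals k a (j)
     have E1 := evals k a (j+1)
     simp (disch := omega) only [if_pos, if_neg] at E0 E1
     simp only [FF_0, FF_1, FF_2, FF_3, FF_44, c0, c1, c2, c3,
        c4, E0, E1, tt_1, tt_2, Int.cast_add, Int.cast_one, Int.cast_ofNat]
     linarith)

set_option maxHeartbeats 4000000 in
lemma FF_T2 (k : ℤ) (hk : 3 ≤ k) (a : ℝ) (ha : a * k = 1) (j : ℤ) (h1 : 1 ≤ j) (h2 : j ≤ k - 1 ∨ (k % 2 = 0 ∧ j = k)) :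
    FF k a 2 j + FF k a 4 (j+1) = FF k a 3 j + FF k a 3 (j+1) := by
  have k3 : (3:ℝ) ≤ k := by exact_mod_cast hk
  have a0 : 0 < a := by
    by_contra h
    nlinarith
  have a1 : a ≤ 1 / 3 := by nlinarith
  rcases splitrow k j a hk (by omega) (by omega) a0 ha with
    ⟨hj, f1, f2⟩ | ⟨hj, hj2, hj3, f1, f2, f3, f4⟩ | ⟨hj, hj2, hj3, f1, f2, f3, f4⟩ | ⟨hj, f1, f2⟩ |
    ⟨hj, f1, f2⟩ | ⟨hj, f1, f2⟩ <;>
  rcases Int.emod_two_eq_zero_or_one k with hk2 | hk2 <;>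
  first
  | (exfalso; omega)
  | (have E0 := evals k a (j)
     have E1 := evals k a (j+1)
     simp (disch := omega) only [if_pos, if_neg] at E0 E1
     simp only [FF_0, FF_1, FF_2, FF_3, FF_44, c0, c1, c2, c3,
        c4, E0, E1, tt_1, tt_2, Int.cast_add, Int.cast_one, Int.cast_ofNat]
     linarith)

set_option maxHeartbeats 4000000 in
lemma FF_T3 (k : ℤ) (hk : 3 ≤ k) (a : ℝ) (ha : a * k = 1) (j : ℤ) (h1 : 1 ≤ j) (h2 : j ≤ k - 2) (h3 : j % 2 = 1) :
    FF k a 1 j + FF k a 0 (j+1) = FF k a 0 j + FF k a 1 (j+1) := by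
  have k3 : (3:ℝ) ≤ k := by exact_mod_cast hk
  have a0 : 0 < a := by
    by_contra h
    nlinarith
  have a1 : a ≤ 1 / 3 := by nlinarith
  rcases splitrow k j a hk (by omega) (by omega) a0 ha with
    ⟨hj, f1, f2⟩ | ⟨hj, hj2, hj3, f1, f2, f3, f4⟩ | ⟨hj, hj2, hj3, f1, f2, f3, f4⟩ | ⟨hj, f1, f2⟩ |
    ⟨hj, f1, f2⟩ | ⟨hj, f1, f2⟩ <;>
  rcases Int.emod_two_eq_zero_or_one k with hk2 | hk2 <;>
  first
  | (exfalso; omega)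
  | (have E0 := evals k a (j)
     have E1 := evals k a (j+1)
     simp (disch := omega) only [if_pos, if_neg] at E0 E1
     simp only [FF_0, FF_1, FF_2, FF_3, FF_44, c0, c1, c2, c3,
        c4, E0, E1, tt_1, tt_2, Int.cast_add, Int.cast_one, Int.cast_ofNat]
     linarith)

set_option maxHeartbeats 4000000 in
lemma FF_T4 (k : ℤ) (hk : 3 ≤ k) (a : ℝ) (ha : a * k = 1) (j : ℤ) (h1 : 1 ≤ j) (h2 : j ≤ k - 1) (h3 : j % 2 = 1) :
    FF k a 3 j + FF k a 4 (j+2) = FF k a 3 (j+1) + FF k a 4 (j+1) := by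
  have k3 : (3:ℝ) ≤ k := by exact_mod_cast hk
  have a0 : 0 < a := by
    by_contra h
    nlinarith
  have a1 : a ≤ 1 / 3 := by nlinarith
  rcases splitrow k j a hk (by omega) (by omega) a0 ha with
    ⟨hj, f1, f2⟩ | ⟨hj, hj2, hj3, f1, f2, f3, f4⟩ | ⟨hj, hj2, hj3, f1, f2, f3, f4⟩ | ⟨hj, f1, f2⟩ |
    ⟨hj, f1, f2⟩ | ⟨hj, f1, f2⟩ <;>
  rcases Int.emod_two_eq_zero_or_one k with hk2 | hk2 <;>
  first
  | (exfalso; omega)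
  | (have E0 := evals k a (j)
     have E1 := evals k a (j+1)
     have E2 := evals k a (j+2)
     simp (disch := omega) only [if_pos, if_neg] at E0 E1 E2
     simp only [FF_0, FF_1, FF_2, FF_3, FF_44, c0, c1, c2, c3,
        c4, E0, E1, E2, tt_1, tt_2, Int.cast_add, Int.cast_one, Int.cast_ofNat]
     linarith)

set_option maxHeartbeats 4000000 in
lemma FF_T5 (k : ℤ) (hk : 3 ≤ k) (a : ℝ) (ha : a * k = 1) (j : ℤ) (h1 : j = k) (h2 : k % 2 = 1) :
    FF k a 4 j + FF k a 3 (j+1) = FF k a 3 j + FF k a 4 (j+1) := by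
  have k3 : (3:ℝ) ≤ k := by exact_mod_cast hk
  have a0 : 0 < a := by
    by_contra h
    nlinarith
  have a1 : a ≤ 1 / 3 := by nlinarith
  rcases splitrow k j a hk (by omega) (by omega) a0 ha with
    ⟨hj, f1, f2⟩ | ⟨hj, hj2, hj3, f1, f2, f3, f4⟩ | ⟨hj, hj2, hj3, f1, f2, f3, f4⟩ | ⟨hj, f1, f2⟩ |
    ⟨hj, f1, f2⟩ | ⟨hj, f1, f2⟩ <;>
  rcases Int.emod_two_eq_zero_or_one k with hk2 | hk2 <;>
  first
  | (exfalso; omega)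
  | (have E0 := evals k a (j)
     have E1 := evals k a (j+1)
     simp (disch := omega) only [if_pos, if_neg] at E0 E1
     simp only [FF_0, FF_1, FF_2, FF_3, FF_44, c0, c1, c2, c3,
        c4, E0, E1, tt_1, tt_2, Int.cast_add, Int.cast_one, Int.cast_ofNat]
     linarith)

set_option maxHeartbeats 4000000 in
lemma FF_T6 (k : ℤ) (hk : 3 ≤ k) (a : ℝ) (ha : a * k = 1) (j : ℤ) (h1 : j = k) (h2 : k % 2 = 0) :
    FF k a 2 j + FF k a 1 (j+1) = FF k a 1 j + FF k a 2 (j+1) := by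
  have k3 : (3:ℝ) ≤ k := by exact_mod_cast hk
  have a0 : 0 < a := by
    by_contra h
    nlinarith
  have a1 : a ≤ 1 / 3 := by nlinarith
  rcases splitrow k j a hk (by omega) (by omega) a0 ha with
    ⟨hj, f1, f2⟩ | ⟨hj, hj2, hj3, f1, f2, f3, f4⟩ | ⟨hj, hj2, hj3, f1, f2, f3, f4⟩ | ⟨hj, f1, f2⟩ |
    ⟨hj, f1, f2⟩ | ⟨hj, f1, f2⟩ <;>
  rcases Int.emod_two_eq_zero_or_one k with hk2 | hk2 <;>
  first
  | (exfalso; omega)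
  | (have E0 := evals k a (j)
     have E1 := evals k a (j+1)
     simp (disch := omega) only [if_pos, if_neg] at E0 E1
     simp only [FF_0, FF_1, FF_2, FF_3, FF_44, c0, c1, c2, c3,
        c4, E0, E1, tt_1, tt_2, Int.cast_add, Int.cast_one, Int.cast_ofNat]
     linarith)

lemma FF_T7 (k : ℤ) (a : ℝ) (i j : ℤ) (h : 4 ≤ i) :
    FF k a (i+1) j + FF k a i (j+1) = FF k a i j + FF k a (i+1) (j+1) := by
  rw [FF_4 _ _ _ _ h, FF_4 _ _ _ _ h, FF_4 _ _ (i+1) _ (by omega), FF_4 _ _ (i+1) _ (by omega)]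
  simp only [c4]; push_cast; ring

lemma lin (k : ℤ) (hk : 3 ≤ k) (A B C : ℤ → ℝ) (hA0 : A 0 = 0)
    (h1 : ∀ j, 0 ≤ j → j ≤ k - 1 → B (j+1) = A j + A (j+1))
    (h2 : ∀ j, 1 ≤ j → j ≤ k - 1 → C j + C (j+1) = B j)
    (h3 : ∀ j, 1 ≤ j → j ≤ k - 2 → j % 2 = 1 → A (j+1) = A j)
    (h4 : ∀ j, 1 ≤ j → j ≤ k - 1 → j % 2 = 1 → C (j+1) = C j)
    (ho : k % 2 = 1 → A k = 0 ∧ C k = 0)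
    (he : k % 2 = 0 → A k = B k ∧ B k = C k) :
    ∀ j, 1 ≤ j → j ≤ k → A j = 0 ∧ B j = 0 ∧ C j = 0 := by
  have odd : ∀ m : ℕ, (2 * m + 1 : ℤ) ≤ k - 1 → A (2*m+1) = (2*m+2) * C 1 ∧
      B (2*m+1) = 2 * (2*m+1) * C 1 ∧ C (2*m+1) = (2*m+1) * C 1 := by
    intro m
    induction m with
    | zero =>
      intro _
      have e1 := h1 0 (by omega) (by omega)
      have e2 := h2 1 (by omega) (by omega)
      have e4 := h4 1 (by omega) (by omega) (by omega)
      simp only [zero_add] at e1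
      simp only [Nat.cast_zero, mul_zero, zero_add]
      refine ⟨?_, ?_, ?_⟩ <;> linarith
    | succ m ih =>
      intro hm
      push_cast at hm ⊢
      obtain ⟨i1, i2, i3⟩ := ih (by omega)
      have e3 := h3 (2*m+1) (by omega) (by omega) (by omega)
      have e1 := h1 (2*m+1) (by omega) (by omega)
      have e4 := h4 (2*m+1) (by omega) (by omega) (by omega)
      have e2 := h2 (2*m+1+1) (by omega) (by omega)
      have e4' := h4 (2*m+1+1+1) (by omega) (by omega) (by omega)
      have e2' := h2 (2*m+1+1+1) (by omega) (by omega)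
      have e1' := h1 (2*m+1+1) (by omega) (by omega)
      have r : (2 * ((m:ℤ) + 1) + 1) = 2*m+1+1+1 := by ring
      rw [r]
      refine ⟨?_, ?_, ?_⟩ <;> linarith
  have k3 : (3:ℝ) ≤ k := by exact_mod_cast hk
  have x0 : C 1 = 0 := by
    rcases Int.emod_two_eq_zero_or_one k with h | h
    · obtain ⟨m, hm⟩ : ∃ m : ℕ, k = 2 * m + 2 := ⟨((k - 2) / 2).toNat, by omega⟩
      obtain ⟨i1, i2, i3⟩ := odd m (by omega)
      have e1 := h1 (2*m+1) (by omega) (by omega)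
      have q := he h
      rw [show (2 * (m:ℤ) + 1 + 1) = k by omega] at e1
      have : (2 * (m:ℝ) + 2) * C 1 = 0 := by linarith
      have hp : (2 * (m:ℝ) + 2) ≠ 0 := by positivity
      exact (mul_eq_zero.1 this).resolve_left hp
    · obtain ⟨m, hm⟩ : ∃ m : ℕ, k = 2 * m + 3 := ⟨((k - 3) / 2).toNat, by omega⟩
      obtain ⟨i1, i2, i3⟩ := odd m (by omega)
      have e3 := h3 (2*m+1) (by omega) (by omega) (by omega)
      have e1 := h1 (2*m+1) (by omega) (by omega)
      have e4 := h4 (2*m+1) (by omega) (by omega) (by omega)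
      have e2 := h2 (2*m+1+1) (by omega) (by omega)
      have q := ho h
      rw [show (2 * (m:ℤ) + 1 + 1 + 1) = k by omega] at e2
      have : (2 * (m:ℝ) + 3) * C 1 = 0 := by linarith
      have hp : (2 * (m:ℝ) + 3) ≠ 0 := by positivity
      exact (mul_eq_zero.1 this).resolve_left hp
  have odd0 : ∀ j, 1 ≤ j → j ≤ k - 1 → j % 2 = 1 → A j = 0 ∧ B j = 0 ∧ C j = 0 := by
    intro j a1 a2 a3
    obtain ⟨m, hm⟩ : ∃ m : ℕ, j = 2 * m + 1 := ⟨((j - 1) / 2).toNat, by omega⟩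
    obtain ⟨i1, i2, i3⟩ := odd m (by omega)
    rw [hm, i1, i2, i3, x0]
    simp
  have evn0 : ∀ j, 1 ≤ j → j ≤ k - 1 → j % 2 = 0 → A j = 0 ∧ B j = 0 ∧ C j = 0 := by
    intro j a1 a2 a3
    obtain ⟨y, rfl⟩ : ∃ y, j = y + 1 := ⟨j - 1, by ring⟩
    obtain ⟨i1, i2, i3⟩ := odd0 y (by omega) (by omega) (by omega)
    have e3 := h3 y (by omega) (by omega) (by omega)
    have e1 := h1 y (by omega) (by omega)
    have e4 := h4 y (by omega) (by omega) (by omega)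
    refine ⟨?_, ?_, ?_⟩ <;> linarith
  intro j a1 a2
  by_cases hj : j = k
  · obtain ⟨y, hy⟩ : ∃ y, k = y + 1 := ⟨k - 1, by ring⟩
    rw [hj]
    have e1 := h1 y (by omega) (by omega)
    rcases Int.emod_two_eq_zero_or_one k with h | h
    · have q := he h
      have e4 := h4 y (by omega) (by omega) (by omega)
      obtain ⟨i1, i2, i3⟩ := odd0 y (by omega) (by omega) (by omega)
      rw [← hy] at e1 e4
      refine ⟨?_, ?_, ?_⟩ <;> linarith
    · have q := ho h
      obtain ⟨i1, i2, i3⟩ := evn0 y (by omega) (by omega) (by omega)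
      rw [← hy] at e1
      refine ⟨?_, ?_, ?_⟩ <;> linarith
  · rcases Int.emod_two_eq_zero_or_one j with h | h
    · exact evn0 j a1 (by omega) h
    · exact odd0 j a1 (by omega) h

lemma FF_uniq (k : ℤ) (hk : 3 ≤ k) (a : ℝ) (ha : a * k = 1) (d : ℤ → ℤ → ℝ)
    (hd : ∀ i j, Per k i j → d i j = 0) (ht : Tight k (FF k a) d) :
    ∀ i j, H k i j → d i j = 0 := by
  have hi4 : ∀ n : ℕ, ∀ i j, i = k + 1 - n → 4 ≤ i → H k i j → d i j = 0 := by
    intro n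
    induction n with
    | zero =>
      intro i j h1 h2 h3
      exact hd i j ⟨h3, by push_cast at h1; omega⟩
    | succ n ih =>
      intro i j h1 h2 h3
      push_cast at h1
      have key : ∀ m : ℕ, ∀ j, j = k + 1 - m → 1 ≤ j → d i j = 0 := by
        intro m
        induction m with
        | zero =>
          intro j e1 e2
          exact hd i j ⟨by unfold H; push_cast at e1; omega, by push_cast at e1; omega⟩
        | succ m ihm =>
          intro j e1 e2
          push_cast at e1
          have g1 := ihm (j+1) (by omega) (by omega)
          have g2 := ih (i+1) j (by omega) (by omega) (by unfold H; omega)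
          have g3 := ih (i+1) (j+1) (by omega) (by omega) (by unfold H; omega)
          have g4 := ht.r3 i j (by unfold H; omega) (by unfold H; omega) (by unfold H; omega)
            (by unfold H; omega) (FF_T7 k a i j h2)
          linarith
      by_cases hj : j = 0
      · exact hd i j ⟨h3, by omega⟩
      · unfold H at h3
        exact key (k + 1 - j).toNat j (by omega) (by omega)
  have D : ∀ j, 1 ≤ j → j ≤ k + 1 → d 4 j = 0 := by
    intro j h1 h2
    exact hi4 (k + 1 - 4).toNat 4 j (by omega) le_rfl (by unfold H; omega)
  have hz : ∀ j, 0 ≤ j → j ≤ k → d 0 j = 0 := fun j h1 h2 => hd 0 j ⟨by unfold H; omega, by omega⟩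
  have top : ∀ i, 1 ≤ i → i ≤ k + 1 → d i (k+1) = 0 :=
    fun i h1 h2 => hd i (k+1) ⟨by unfold H; omega, by omega⟩
  have R1 : ∀ j, 0 ≤ j → j ≤ k → FF k a 0 j + FF k a 2 (j+1) = FF k a 1 j + FF k a 1 (j+1) →
      d 0 j + d 2 (j+1) = d 1 j + d 1 (j+1) := fun j g1 g2 g3 =>
    ht.r1 0 j (by unfold H; omega) (by unfold H; omega) (by unfold H; omega) (by unfold H; omega) g3
  have R2 : ∀ j, 0 ≤ j → j ≤ k → FF k a 2 j + FF k a 4 (j+1) = FF k a 3 j + FF k a 3 (j+1) →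
      d 2 j + d 4 (j+1) = d 3 j + d 3 (j+1) := fun j g1 g2 g3 =>
    ht.r1 2 j (by unfold H; omega) (by unfold H; omega) (by unfold H; omega) (by unfold H; omega) g3
  have R3 : ∀ j, 0 ≤ j → j ≤ k - 1 → FF k a 1 j + FF k a 0 (j+1) = FF k a 0 j + FF k a 1 (j+1) →
      d 1 j + d 0 (j+1) = d 0 j + d 1 (j+1) := fun j g1 g2 g3 =>
    ht.r3 0 j (by unfold H; omega) (by unfold H; omega) (by unfold H; omega) (by unfold H; omega) g3
  have R4 : ∀ j, 1 ≤ j → j ≤ k - 1 → FF k a 3 j + FF k a 4 (j+2) = FF k a 3 (j+1) + FF k a 4 (j+1) →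
      d 3 j + d 4 (j+2) = d 3 (j+1) + d 4 (j+1) := fun j g1 g2 g3 =>
    ht.r2 3 j (by unfold H; omega) (by unfold H; omega) (by unfold H; omega) (by unfold H; omega) g3
  have R5 : FF k a 4 k + FF k a 3 (k+1) = FF k a 3 k + FF k a 4 (k+1) →
      d 4 k + d 3 (k+1) = d 3 k + d 4 (k+1) := fun g3 =>
    ht.r3 3 k (by unfold H; omega) (by unfold H; omega) (by unfold H; omega) (by unfold H; omega) g3
  have R6 : FF k a 2 k + FF k a 1 (k+1) = FF k a 1 k + FF k a 2 (k+1) →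
      d 2 k + d 1 (k+1) = d 1 k + d 2 (k+1) := fun g3 =>
    ht.r3 1 k (by unfold H; omega) (by unfold H; omega) (by unfold H; omega) (by unfold H; omega) g3
  have L := lin k hk (d 1) (d 2) (d 3) (hd 1 0 ⟨by unfold H; omega, by omega⟩)
    (by
      intro j h1 h2
      have := R1 j h1 (by omega) (FF_T1 k hk a ha j h1 (by omega))
      have := hz j h1 (by omega)
      linarith)
    (by
      intro j h1 h2
      have := R2 j (by omega) (by omega) (FF_T2 k hk a ha j h1 (by omega))
      have := D (j+1) (by omega) (by omega)
      linarith)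
    (by
      intro j h1 h2 h3
      have := R3 j (by omega) (by omega) (FF_T3 k hk a ha j h1 h2 h3)
      have := hz j (by omega) (by omega)
      have := hz (j+1) (by omega) (by omega)
      linarith)
    (by
      intro j h1 h2 h3
      have := R4 j (by omega) (by omega) (FF_T4 k hk a ha j h1 h2 h3)
      have := D (j+1) (by omega) (by omega)
      have := D (j+2) (by omega) (by omega)
      linarith)
    (by
      intro h
      have e1 := R1 k (by omega) (by omega) (FF_T1 k hk a ha k (by omega) (by omega))
      have e5 := R5 (FF_T5 k hk a ha k rfl h)
      have := hz k (by omega) (by omega)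
      have := top 1 (by omega) (by omega)
      have := top 2 (by omega) (by omega)
      have := top 3 (by omega) (by omega)
      have := D k (by omega) (by omega)
      have := D (k+1) (by omega) (by omega)
      constructor <;> linarith)
    (by
      intro h
      have e1 := R2 k (by omega) (by omega) (FF_T2 k hk a ha k (by omega) (by omega))
      have e5 := R6 (FF_T6 k hk a ha k rfl h)
      have := top 1 (by omega) (by omega)
      have := top 2 (by omega) (by omega)
      have := top 3 (by omega) (by omega)
      have := D (k+1) (by omega) (by omega)
      constructor <;> linarith)
  intro i j hH
  by_cases hP : i = 0 ∨ i = k + 1 ∨ j = 0 ∨ j = k + 1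
  · exact hd i j ⟨hH, hP⟩
  · by_cases h4 : 4 ≤ i
    · exact hi4 (k + 1 - i).toNat i j (by unfold H at hH; omega) h4 hH
    · unfold H at hH
      obtain ⟨l1, l2, l3⟩ := L j (by omega) (by omega)
      rcases (by omega : i = 1 ∨ i = 2 ∨ i = 3) with rfl | rfl | rfl
      · exact l1
      · exact l2
      · exact l3

end S14
namespace S14

/-- the example for `k = 2` -/
def F2 (i j : ℤ) : ℝ :=
  if j = 0 then (if i = 0 then 0 else if i = 1 then 1 else -1)
  else if j = 1 then (if i = 0 then 0 else if i = 1 then 1 else if i = 2 then -1/2 else -3)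
  else if j = 2 then (if i = 0 then -2 else if i = 1 then -1/2 else if i = 2 then -3/2 else -3)
  else (if i = 3 then -4 else -3)

lemma F2_Rh : Rh 2 F2 := by
  constructor
  · intro a b h1 h2 h3 h4
    unfold H at h1 h2 h3 h4
    obtain ⟨x1, x2, x3, x4, x5, x6⟩ := h1
    interval_cases a <;> interval_cases b <;> first | (exfalso; omega) | (norm_num [F2])
  · intro a b h1 h2 h3 h4
    unfold H at h1 h2 h3 h4
    obtain ⟨x1, x2, x3, x4, x5, x6⟩ := h1
    interval_cases a <;> interval_cases b <;> first | (exfalso; omega) | (norm_num [F2])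
  · intro a b h1 h2 h3 h4
    unfold H at h1 h2 h3 h4
    obtain ⟨x1, x2, x3, x4, x5, x6⟩ := h1
    interval_cases a <;> interval_cases b <;> first | (exfalso; omega) | (norm_num [F2])

lemma F2_uniq (d : ℤ → ℤ → ℝ) (hd : ∀ i j, Per 2 i j → d i j = 0) (ht : Tight 2 F2 d) :
    ∀ i j, H 2 i j → d i j = 0 := by
  have z : ∀ i j, H 2 i j → (i = 0 ∨ i = 3 ∨ j = 0 ∨ j = 3) → d i j = 0 :=
    fun i j h1 h2 => hd i j ⟨h1, by omega⟩
  have e1 := ht.r3 0 0 (by unfold H; omega) (by unfold H; omega) (by unfold H; omega)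
    (by unfold H; omega) (by norm_num [F2])
  have e2 := ht.r1 1 1 (by unfold H; omega) (by unfold H; omega) (by unfold H; omega)
    (by unfold H; omega) (by norm_num [F2])
  have e3 := ht.r2 1 1 (by unfold H; omega) (by unfold H; omega) (by unfold H; omega)
    (by unfold H; omega) (by norm_num [F2])
  have e4 := ht.r1 1 2 (by unfold H; omega) (by unfold H; omega) (by unfold H; omega)
    (by unfold H; omega) (by norm_num [F2])
  have e5 := ht.r2 2 1 (by unfold H; omega) (by unfold H; omega) (by unfold H; omega)
    (by unfold H; omega) (by norm_num [F2])
  norm_num at e1 e2 e3 e4 e5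
  have z00 := z 0 0 (by unfold H; omega) (by omega)
  have z10 := z 1 0 (by unfold H; omega) (by omega)
  have z01 := z 0 1 (by unfold H; omega) (by omega)
  have z32 := z 3 2 (by unfold H; omega) (by omega)
  have z23 := z 2 3 (by unfold H; omega) (by omega)
  have z33 := z 3 3 (by unfold H; omega) (by omega)
  intro i j h
  by_cases hP : i = 0 ∨ i = 3 ∨ j = 0 ∨ j = 3
  · exact z i j h hP
  · unfold H at h
    rcases (by omega : (i = 1 ∧ j = 1) ∨ (i = 1 ∧ j = 2) ∨ (i = 2 ∧ j = 1) ∨ (i = 2 ∧ j = 2)) with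
      ⟨rfl, rfl⟩ | ⟨rfl, rfl⟩ | ⟨rfl, rfl⟩ | ⟨rfl, rfl⟩ <;> linarith

lemma F2_int (i j : ℤ) (h : Per 2 i j) : ∃ z : ℤ, F2 i j = z := by
  obtain ⟨⟨x1, x2, x3, x4, x5, x6⟩, x7⟩ := h
  unfold F2
  split_ifs <;> first
    | (exfalso; omega)
    | (refine ⟨0, ?_⟩; norm_num; done)
    | (refine ⟨1, ?_⟩; norm_num; done)
    | (refine ⟨-1, ?_⟩; norm_num; done)
    | (refine ⟨-2, ?_⟩; norm_num; done)
    | (refine ⟨-3, ?_⟩; norm_num; done)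
    | (refine ⟨-4, ?_⟩; norm_num; done)

lemma F2_b (i j c e : ℤ) (h1 : H 2 i j) (h2 : H 2 c e) (h : Dir i j c e) :
    |F2 c e - F2 i j| < 4 := by
  unfold H at h1 h2
  obtain ⟨x1, x2, x3, x4, x5, x6⟩ := h1
  rw [abs_lt]
  rcases h with ⟨hc, he⟩ | ⟨hc, he⟩ | ⟨hc, he⟩ <;> rw [hc, he] at h2 ⊢ <;> clear hc he <;>
  interval_cases i <;> interval_cases j <;> first | (exfalso; omega) | (norm_num [F2])

/-- the example for `k = 1` -/
def F1 (i _j : ℤ) : ℝ := -(i:ℝ)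

lemma F1_Rh : Rh 1 F1 := by
  constructor <;> intro a b _ _ _ _ <;> simp only [F1] <;> push_cast <;> linarith

lemma F1_uniq (d : ℤ → ℤ → ℝ) (hd : ∀ i j, Per 1 i j → d i j = 0) (ht : Tight 1 F1 d) :
    ∀ i j, H 1 i j → d i j = 0 := by
  have e1 := ht.r3 0 0 (by unfold H; omega) (by unfold H; omega) (by unfold H; omega)
    (by unfold H; omega) (by norm_num [F1])
  norm_num at e1
  have z00 := hd 0 0 ⟨by unfold H; omega, by omega⟩
  have z10 := hd 1 0 ⟨by unfold H; omega, by omega⟩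
  have z01 := hd 0 1 ⟨by unfold H; omega, by omega⟩
  intro i j h
  by_cases hP : i = 0 ∨ i = 1 + 1 ∨ j = 0 ∨ j = 1 + 1
  · exact hd i j ⟨h, hP⟩
  · unfold H at h
    obtain ⟨rfl, rfl⟩ : i = 1 ∧ j = 1 := by omega
    linarith

lemma F1_b (i j c e : ℤ) (h : Dir i j c e) : |F1 c e - F1 i j| < 2 := by
  rw [abs_lt]
  rcases h with ⟨rfl, rfl⟩ | ⟨rfl, rfl⟩ | ⟨rfl, rfl⟩ <;> simp only [F1] <;> push_cast <;>
    constructor <;> linarith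

end S14

/-- For every k ≥ 1 there are a convex grid G whose region is the
hexagon with two opposite (horizontal) sides of length 1 and the other four sides of
length k, and an integer h₀ on the boundary edges of G such that C(G,h₀) has a vertex
h with h(e) = −1/k on some edge and |h(e')| < 2k on every edge. -/
theorem stmt14 (k : ℕ) (hk : 0 < k) :
    ∃ (G : ConvexGrid) (p : Pt) (h₀ : Ed → ℤ) (h : Ed → ℝ),
      G.region = convexHull ℝ
        ({p, p + xiv 0,
          p + xiv 0 - (k : ℝ) • xiv 2,
          p + xiv 0 - (k : ℝ) • xiv 2 + (k : ℝ) • xiv 1,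
          p - (k : ℝ) • xiv 2 + (k : ℝ) • xiv 1,
          p + (k : ℝ) • xiv 1} : Set Pt) ∧
      IsVertexOf G (CC G (↑G.boundary) fun e => (h₀ e : ℝ)) h ∧
      (∃ e ∈ G.edges, h e = -(1 / (k : ℝ))) ∧
      ∀ e ∈ G.edges, |h e| < 2 * (k : ℝ) := by
  rcases (by omega : k = 1 ∨ k = 2 ∨ 3 ≤ k) with rfl | rfl | h3
  · refine S14.core 1 hk S14.F1 (by exact_mod_cast S14.F1_Rh) (fun a b _ => ⟨-a, by simp [S14.F1]⟩)
      (fun d hd ht => ?_) ⟨0, 0, 1, 1, ?_, ?_, ?_, ?_⟩ (fun a b c e _ _ h3 => ?_)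
    · rw [Nat.cast_one] at *
      exact S14.F1_uniq d hd ht
    · unfold S14.H; norm_num
    · unfold S14.H; norm_num
    · unfold S14.Dir; norm_num
    · norm_num [S14.F1]
    · have := S14.F1_b a b c e h3
      push_cast; linarith
  · refine S14.core 2 hk S14.F2 (by exact_mod_cast S14.F2_Rh) (fun a b h => S14.F2_int a b (by exact_mod_cast h))
      (fun d hd ht => ?_) ⟨0, 1, 1, 2, ?_, ?_, ?_, ?_⟩ (fun a b c e h1 h2 h3 => ?_)
    · rw [Nat.cast_ofNat] at *
      exact S14.F2_uniq d hd ht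
    · unfold S14.H; norm_num
    · unfold S14.H; norm_num
    · unfold S14.Dir; norm_num
    · norm_num [S14.F2]
    · have := S14.F2_b a b c e (by exact_mod_cast h1) (by exact_mod_cast h2) h3
      push_cast; linarith
  · have hk3 : (3:ℤ) ≤ (k:ℤ) := by exact_mod_cast h3
    have hk0 : (k:ℝ) ≠ 0 := by positivity
    have ha : (1 / (k:ℝ)) * ((k:ℤ):ℝ) = 1 := by push_cast; field_simp
    refine S14.core k hk (S14.FF k (1 / (k:ℝ))) (S14.FF_Rh k hk3 _ ha)
      (fun a b h => S14.FF_int k hk3 _ ha a b h) (fun d hd ht => S14.FF_uniq k hk3 _ ha d hd ht)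
      ⟨3, 1, 2, 1, ?_, ?_, ?_, ?_⟩ (fun a b c e h1 h2 h => ?_)
    · unfold S14.H; omega
    · unfold S14.H; omega
    · unfold S14.Dir; norm_num
    · have n1 : ¬ ((1:ℤ) = k) := by omega
      have n2 : ¬ ((1:ℤ) = k + 1) := by omega
      rw [S14.FF_2, S14.FF_3]
      simp only [S14.c2, S14.c3, S14.tt, S14.ev, S14.on, S14.q2, S14.q3, n1, n2]
      norm_num
      try ring
    · exact_mod_cast S14.FF_b k hk3 _ ha a b c e h1 h2 h
end
end
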